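/- arXiv:2506.06477 — 6 statements merged into one kernel-verified Lean document; each statement's English description precedes it below -/
import Mathlib

section
/- For every integer n ≥ 5 and every set S of n points in the Euclidean plane in general position, there exist two distinct points u, v ∈ S such that every closed disk containing both u and v contains at least ⌈(n−2)/60⌉ points of S other than u and v. -/
/-!
Lift the plane to the paraboloid `p ↦ (p, ‖p‖²)` in a three-dimensional space. A closed disk is
the trace of a closed half-space there. By Radon's theorem, five lifted points split into two
classes whose convex hulls meet, so a disk that contains one class cannot miss the other
(`exists_radon_class`, `disk_meets_of_hulls_meet`). A class cannot be empty, nor a single point,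
since a small disk around that point misses the four others. Hence one of the classes is a pair `P`, and every disk
containing `P` contains one of the three remaining points (`exists_pair_of_card_five`).

Assign such a pair to each of the `C(n,5)` five-point subsets of `S`. Some pair `P` is assigned to
at least `C(n,5) / C(n,2)` of them. If a disk contains `P` and exactly `k` further points of `S`,
each five-point set assigned to `P` contains one of these `k` points, so there are at most
`k * C(n-3,2)` of them. Comparing the two counts gives `n - 2 ≤ 30 * k`, which is stronger than
required.
-/

open EuclideanGeometry Metric

noncomputable section

/-- Points of the Euclidean plane. -/
abbrev Pt := EuclideanSpace ℝ (Fin 2)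

/-- A set of points in the plane is in general position if no three of its points are
collinear and no four of its points are concyclic. -/
def GenPos (S : Set Pt) : Prop :=
  (∀ T ⊆ S, T.ncard = 3 → ¬Collinear ℝ T) ∧
  (∀ T ⊆ S, T.ncard = 4 → ¬Cospherical T)

open Finset

/-- The lift of the plane to the paraboloid `z = ‖p‖²`. -/
def liftPt (p : Pt) : Pt × ℝ := (p, ‖p‖ ^ 2)

/-- The linear functional whose sublevel sets cut out, on the paraboloid, the disks centred
at `c`. -/
def diskForm (c : Pt) (q : Pt × ℝ) : ℝ := q.2 - 2 * inner ℝ c q.1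

lemma diskForm_isLinear (c : Pt) : IsLinearMap ℝ (diskForm c) := by
  constructor
  · intro x y
    simp only [diskForm, Prod.snd_add, Prod.fst_add, inner_add_right]
    ring
  · intro a x
    simp only [diskForm, Prod.smul_snd, Prod.smul_fst, inner_smul_right, smul_eq_mul]
    ring

lemma mem_closedBall_iff_diskForm (c p : Pt) {r : ℝ} (hr : 0 < r) :
    p ∈ closedBall c r ↔ diskForm c (liftPt p) ≤ r ^ 2 - ‖c‖ ^ 2 := by
  have h : dist p c ^ 2 = ‖p‖ ^ 2 - 2 * inner ℝ c p + ‖c‖ ^ 2 := by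
    rw [dist_eq_norm, norm_sub_sq_real, real_inner_comm]
  rw [mem_closedBall, ← sq_le_sq₀ dist_nonneg hr.le, h]
  simp only [diskForm, liftPt]
  constructor <;> intro h' <;> linarith

lemma disk_meets_of_hulls_meet {A B : Set Pt}
    (h : (convexHull ℝ (liftPt '' A) ∩ convexHull ℝ (liftPt '' B)).Nonempty)
    (c : Pt) {r : ℝ} (hr : 0 < r) (hA : A ⊆ closedBall c r) :
    ∃ z ∈ B, z ∈ closedBall c r := by
  by_contra! hB
  obtain ⟨q, hqA, hqB⟩ := h
  have h1 := convexHull_min (t := {w | diskForm c w ≤ r ^ 2 - ‖c‖ ^ 2})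
    (by rintro _ ⟨p, hp, rfl⟩; exact (mem_closedBall_iff_diskForm c p hr).1 (hA hp))
    (convex_halfSpace_le (diskForm_isLinear c) _) hqA
  have h2 := convexHull_min (t := {w | r ^ 2 - ‖c‖ ^ 2 < diskForm c w})
    (by
      rintro _ ⟨p, hp, rfl⟩
      exact not_le.1 fun h => hB p hp ((mem_closedBall_iff_diskForm c p hr).2 h))
    (convex_halfSpace_gt (diskForm_isLinear c) _) hqB
  exact absurd (show diskForm c q ≤ r ^ 2 - ‖c‖ ^ 2 from h1) (not_le.2 h2)

/-- Radon's theorem on the paraboloid. The two classes are `A` and `T \ A`. -/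
lemma exists_radon_class (T : Finset Pt) (hT : #T = 5) :
    ∃ A ⊆ T, (convexHull ℝ (liftPt '' (A : Set Pt)) ∩
      convexHull ℝ (liftPt '' ((T \ A : Finset Pt) : Set Pt))).Nonempty := by
  classical
  have hdep : ¬ AffineIndependent ℝ (fun p : T => liftPt p) := by
    intro h
    have h1 := h.card_le_finrank_succ
    have h2 := Submodule.finrank_le (vectorSpan ℝ (Set.range (fun p : T => liftPt p)))
    have h3 : Module.finrank ℝ (Pt × ℝ) = 3 := by simp
    rw [Fintype.card_coe, hT] at h1
    omega
  obtain ⟨I, hI⟩ := Convex.radon_partition hdep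
  refine ⟨T.filter fun p => ∃ h : p ∈ T, (⟨p, h⟩ : T) ∈ I, filter_subset _ _, ?_⟩
  convert hI using 3
  · ext q
    simp only [Set.mem_image, mem_coe, mem_filter, Subtype.exists]
    grind
  · ext q
    simp only [Set.mem_image, mem_coe, mem_sdiff, mem_filter, Subtype.exists, Set.mem_compl_iff]
    grind

/-- A Radon class has at least two points, because a small disk isolates a single point. -/
lemma two_le_card_of_hulls_meet {A B : Finset Pt} (hAB : Disjoint A B)
    (h : (convexHull ℝ (liftPt '' (A : Set Pt)) ∩
      convexHull ℝ (liftPt '' (B : Set Pt))).Nonempty) : 2 ≤ #A := by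
  by_contra! hlt
  have hne : A.Nonempty := by
    rw [nonempty_iff_ne_empty]
    rintro rfl
    simp at h
  obtain ⟨u, rfl⟩ := card_eq_one.1 (show #A = 1 by have := hne.card_pos; omega)
  have hu : u ∉ (B : Set Pt) := by simpa using hAB
  obtain ⟨ε, hε, hball⟩ :=
    Metric.isOpen_iff.1 (B.finite_toSet.isClosed.isOpen_compl) u hu
  obtain ⟨z, hzB, hz⟩ := disk_meets_of_hulls_meet h u (half_pos hε) (by simp [(half_pos hε).le])
  exact hball (closedBall_subset_ball (half_lt_self hε) hz) hzB

lemma exists_pair_of_card_five (T : Finset Pt) (hT : #T = 5) :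
    ∃ P ⊆ T, #P = 2 ∧ ∀ (c : Pt) (r : ℝ), 0 < r → (P : Set Pt) ⊆ closedBall c r →
      ∃ z ∈ T \ P, z ∈ closedBall c r := by
  classical
  obtain ⟨A, hAT, hA⟩ := exists_radon_class T hT
  have h1 := two_le_card_of_hulls_meet disjoint_sdiff hA
  have h2 := two_le_card_of_hulls_meet sdiff_disjoint (Set.inter_comm _ _ ▸ hA)
  have h3 := card_sdiff_add_card_eq_card hAT
  rcases (by omega : #A = 2 ∨ #(T \ A) = 2) with h | h
  · exact ⟨A, hAT, h, fun c r hr hP => disk_meets_of_hulls_meet hA c hr hP⟩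
  · refine ⟨T \ A, sdiff_subset, h, fun c r hr hP => ?_⟩
    rw [Finset.sdiff_sdiff_eq_self hAT]
    exact disk_meets_of_hulls_meet (Set.inter_comm _ _ ▸ hA) c hr hP

lemma card_five_sets_containing_le {S U : Finset Pt} (hU : #U = 3) (hUS : U ⊆ S) :
    #{T ∈ S.powersetCard 5 | U ⊆ T} ≤ (#S - 3).choose 2 := by
  classical
  rw [← hU, ← card_sdiff_of_subset hUS, ← card_powersetCard]
  refine card_le_card_of_injOn (fun T => T \ U) ?_ ?_
  · intro T hT
    simp only [coe_filter, mem_powersetCard, Set.mem_ofPred_eq] at hT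
    obtain ⟨⟨hTS, hT5⟩, hUT⟩ := hT
    simp only [mem_coe, mem_powersetCard]
    refine ⟨sdiff_subset_sdiff hTS le_rfl, ?_⟩
    rw [card_sdiff_of_subset hUT, hT5, hU]
  · intro T hT T' hT' h
    simp only [coe_filter, Set.mem_ofPred_eq] at hT hT'
    rw [← sdiff_union_of_subset hT.2, ← sdiff_union_of_subset hT'.2]
    exact congrArg (· ∪ U) h

lemma sub_two_le_of_choose_le {n k : ℕ} (hn : 5 ≤ n)
    (h : n.choose 5 ≤ n.choose 2 * (k * (n - 3).choose 2)) : n - 2 ≤ 30 * k := by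
  have h1 : n.choose 5 * 10 = n.choose 2 * (n - 2).choose 3 :=
    Nat.choose_mul (n := n) (k := 5) (s := 2) (by norm_num)
  have h2 : (n - 2) * (n - 3).choose 2 = (n - 2).choose 3 * 3 := by
    obtain ⟨m, rfl⟩ := Nat.exists_eq_add_of_le' hn
    exact Nat.add_one_mul_choose_eq (m + 2) 2
  have hpos : 0 < n.choose 2 * (n - 3).choose 2 :=
    Nat.mul_pos (Nat.choose_pos (by omega)) (Nat.choose_pos (by omega))
  refine Nat.le_of_mul_le_mul_left ?_ hpos
  calc n.choose 2 * (n - 3).choose 2 * (n - 2)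
      = n.choose 2 * ((n - 2) * (n - 3).choose 2) := by ring
    _ = n.choose 5 * 10 * 3 := by rw [h2, h1]; ring
    _ ≤ n.choose 2 * (k * (n - 3).choose 2) * 10 * 3 := by gcongr
    _ = n.choose 2 * (n - 3).choose 2 * (30 * k) := by ring

lemma exists_pair_sub_two_le (S : Finset Pt) (hS : 5 ≤ #S) :
    ∃ P ⊆ S, #P = 2 ∧ ∀ (c : Pt) (r : ℝ), 0 < r → (P : Set Pt) ⊆ closedBall c r →
      #S - 2 ≤ 30 * (((S : Set Pt) \ P) ∩ closedBall c r).ncard := by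
  classical
  choose! g hgsub hgcard hg using exists_pair_of_card_five
  have hmaps : ∀ T ∈ S.powersetCard 5, g T ∈ S.powersetCard 2 := by
    intro T hT
    rw [mem_powersetCard] at hT ⊢
    exact ⟨(hgsub T hT.2).trans hT.1, hgcard T hT.2⟩
  -- Averaging over the pairs gives one assigned to at least `C(n,5) / C(n,2)` five-point sets.
  obtain ⟨P, hP, hfib⟩ : ∃ P ∈ S.powersetCard 2,
      (#S).choose 5 ≤ (#S).choose 2 * #{T ∈ S.powersetCard 5 | g T = P} := by
    have hne : (S.powersetCard 2).Nonempty := powersetCard_nonempty.2 (by omega)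
    obtain ⟨P, hP, hmax⟩ :=
      exists_max_image _ (fun P => #{T ∈ S.powersetCard 5 | g T = P}) hne
    refine ⟨P, hP, ?_⟩
    rw [← card_powersetCard 5 S, card_eq_sum_card_fiberwise hmaps, ← card_powersetCard 2 S,
      ← smul_eq_mul]
    exact sum_le_card_nsmul _ _ _ hmax
  rw [mem_powersetCard] at hP
  refine ⟨P, hP.1, hP.2, fun c r hr hPD => sub_two_le_of_choose_le hS (hfib.trans ?_)⟩
  gcongr
  set K : Finset Pt := (S \ P).filter (· ∈ closedBall c r) with hK
  have hKcard : (((S : Set Pt) \ P) ∩ closedBall c r).ncard = #K := by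
    rw [← Set.ncard_coe_finset]
    congr 1
    ext z
    simp [hK]
  rw [hKcard]
  calc #{T ∈ S.powersetCard 5 | g T = P}
      ≤ #(K.biUnion fun z => {T ∈ S.powersetCard 5 | insert z P ⊆ T}) := by
        refine card_le_card fun T hT => ?_
        obtain ⟨hT', rfl⟩ := mem_filter.1 hT
        obtain ⟨hTS, hT5⟩ := mem_powersetCard.1 hT'
        obtain ⟨z, hz, hzD⟩ := hg T hT5 c r hr hPD
        obtain ⟨hzT, hzP⟩ := mem_sdiff.1 hz
        refine mem_biUnion.2 ⟨z, ?_, mem_filter.2 ⟨hT', insert_subset hzT (hgsub T hT5)⟩⟩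
        exact mem_filter.2 ⟨mem_sdiff.2 ⟨hTS hzT, hzP⟩, hzD⟩
    _ ≤ #K * (#S - 3).choose 2 := by
        refine card_biUnion_le_card_mul _ _ _ fun z hz => ?_
        obtain ⟨hzS, hzP⟩ := mem_sdiff.1 (mem_filter.1 hz).1
        refine card_five_sets_containing_le ?_ (insert_subset hzS hP.1)
        rw [card_insert_of_notMem hzP, hP.2]

/-- For every `n ≥ 5` and every set `S` of `n` points in the plane in general position,
there exist two distinct points `u, v ∈ S` such that every closed disk containing both
`u` and `v` contains at least `⌈(n−2)/60⌉` points of `S` other than `u` and `v`. -/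
theorem pi_lower_bound_n_over_60 (n : ℕ) (hn : 5 ≤ n) (S : Set Pt)
    (hfin : S.Finite) (hcard : S.ncard = n) (hgp : GenPos S) :
    ∃ u ∈ S, ∃ v ∈ S, u ≠ v ∧
      ∀ (c : Pt) (r : ℝ), 0 < r → u ∈ closedBall c r → v ∈ closedBall c r →
        ⌈((n : ℝ) - 2) / 60⌉ ≤ (((S \ {u, v}) ∩ closedBall c r).ncard : ℤ) := by
  obtain ⟨F, rfl⟩ := hfin.exists_finset_coe
  rw [Set.ncard_coe_finset] at hcard
  subst hcard
  obtain ⟨P, hPF, hP2, hP⟩ := exists_pair_sub_two_le F hn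
  obtain ⟨u, v, huv, rfl⟩ := card_eq_two.1 hP2
  refine ⟨u, hPF (by simp), v, hPF (by simp), huv, fun c r hr hu hv => ?_⟩
  have h := hP c r hr (by
    intro x hx
    simp only [coe_insert, coe_singleton, Set.mem_insert_iff, Set.mem_singleton_iff] at hx
    rcases hx with rfl | rfl <;> assumption)
  rw [coe_insert, coe_singleton] at h
  rw [Int.ceil_le, div_le_iff₀ (by norm_num), Int.cast_natCast]
  have h' : (#F : ℝ) ≤ 30 * ((((F : Set Pt) \ {u, v}) ∩ closedBall c r).ncard : ℝ) + 2 := by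
    exact_mod_cast (by omega : #F ≤ 30 * (((F : Set Pt) \ {u, v}) ∩ closedBall c r).ncard + 2)
  have h0 : (0 : ℝ) ≤ ((((F : Set Pt) \ {u, v}) ∩ closedBall c r).ncard : ℝ) := by positivity
  linarith
end
end

section
/- For every integer k and every set S' of k points in the Euclidean plane in general position, there are at least C(k−3,2) = (k−3)(k−4)/2 unordered pairs {x,y} of distinct points of S' such that every closed disk having both x and y on its boundary contains at least one of the other k−2 points of S'. -/
/-!
A pair that is *not* dominating is an edge of the Delaunay graph of `S'`: some circle through `x`
and `y` has every other point strictly outside. Since `C(k,2) - (3k-6) = C(k-3,2)`, it suffices to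
show that the Delaunay graph has at most `3k-6` edges when `k ≥ 3`. Planarity and Euler's formula
are avoided: the bound comes from a charging argument on the Voronoi diagram.

After a rotation all points have distinct heights `Y`. Every Delaunay edge `{q,p}`, with `q` below
`p`, is dual to an open interval of the bisector of `q` and `p`. Move its centre to the left until
an empty circle through `q`, `p` and a third point `r` appears, or forever (`IsEdge.left_end`).
Each point has three slots, and the edge is charged as follows:

* if `r` lies between `q` and `p` in height, to slot `0` of `r` (the Voronoi cell of `r` ends here,
  at its rightmost vertex);
* if `r` lies above `p`, to slot `1` of `p` (the cell of `p` starts here, at its leftmost vertex);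
* if `r` lies below `q`, or there is no `r`, to slot `2` of `q`.

A convex cell has at most one leftmost and at most one rightmost vertex (`IsVertex.unique`), hence
every slot is used at most once (`Charge.unique`). Six slots are never used: slots `0` and `1` of
the lowest point, all three slots of the highest point, and one slot of a third vertex of the
convex hull (`charge_zero_not_extreme`, `charge_one_not_extreme`). So there are at most `3k-6`
edges (`card_edges_add_six_le`).
-/

open EuclideanGeometry Metric

noncomputable section

namespace Delaunay

/-! ### Delaunay edges and Voronoi vertices in coordinates -/

section Core

variable {ι : Type*} (S : Finset ι) (X Y : ι → ℝ)

/-- The power of the point `s` at the centre `(a, b)`: the squared distance from `(a, b)` to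
`(X s, Y s)`, minus `a ^ 2 + b ^ 2`. It is affine in `(a, b)`, and comparing powers at a fixed
centre is comparing distances to it. -/
def pow (s : ι) (a b : ℝ) : ℝ := X s ^ 2 + Y s ^ 2 - 2 * (X s * a + Y s * b)

/-- Twice the signed area of the triangle `q p r`. When `q` is below `p`, it is positive exactly if
`r` lies to the left of the line `q p`. -/
def orient (q p r : ι) : ℝ := (X p - X q) * (Y r - Y q) - (Y p - Y q) * (X r - X q)

/-- `{q, p}` is a Delaunay edge with lower end `q`: some circle through `q` and `p` has all other
points of `S` strictly outside. -/
def IsEdge (q p : ι) : Prop :=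
  q ∈ S ∧ p ∈ S ∧ Y q < Y p ∧ ∃ a b, pow X Y q a b = pow X Y p a b ∧
    ∀ s ∈ S, s ≠ q → s ≠ p → pow X Y p a b < pow X Y s a b

/-- `q p r` is a Delaunay triangle: all other points of `S` are strictly outside a circle through
`q`, `p` and `r`, whose centre is a vertex of the Voronoi diagram. Distinctness of `q`, `p`, `r` is
not part of the definition; where it matters it follows from their heights or from `orient`. -/
def IsVertex (q p r : ι) : Prop :=
  q ∈ S ∧ p ∈ S ∧ r ∈ S ∧ ∃ a b, pow X Y q a b = pow X Y r a b ∧ pow X Y p a b = pow X Y r a b ∧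
    ∀ s ∈ S, s ≠ q → s ≠ p → s ≠ r → pow X Y r a b < pow X Y s a b

/-- Coordinate form of general position, with distinct heights. -/
structure Generic : Prop where
  height_injOn : Set.InjOn Y S
  orient_ne : ∀ q ∈ S, ∀ p ∈ S, ∀ r ∈ S, q ≠ p → r ≠ q → r ≠ p → orient X Y q p r ≠ 0
  not_concyclic : ∀ q ∈ S, ∀ p ∈ S, ∀ r ∈ S, ∀ s ∈ S, q ≠ p → r ≠ q → r ≠ p →
    s ≠ q → s ≠ p → s ≠ r → ∀ a b, pow X Y q a b = pow X Y r a b →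
    pow X Y p a b = pow X Y r a b → pow X Y s a b ≠ pow X Y r a b

variable {S X Y}

lemma IsVertex.le {q p r : ι} {a b : ℝ} (h1 : pow X Y q a b = pow X Y r a b)
    (h2 : pow X Y p a b = pow X Y r a b)
    (h : ∀ s ∈ S, s ≠ q → s ≠ p → s ≠ r → pow X Y r a b < pow X Y s a b) (s : ι) (hs : s ∈ S) :
    pow X Y r a b ≤ pow X Y s a b := by
  by_cases hq : s = q
  · subst hq; exact h1.ge
  by_cases hp : s = p
  · subst hp; exact h2.ge
  by_cases hr : s = r
  · subst hr; exact le_rfl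
  exact (h s hs hq hp hr).le

/-- The dual edge of `{q, p}`, followed to the left, either is unbounded, and then no point lies to
the left of the line `q p`, or ends in a Voronoi vertex on a third cell, whose point `r` lies to
the left of the line `q p`. -/
lemma IsEdge.left_end (hg : Generic S X Y) {q p : ι} (he : IsEdge S X Y q p) :
    (∀ r ∈ S, r ≠ q → r ≠ p → orient X Y q p r < 0) ∨
    ∃ r, r ≠ q ∧ r ≠ p ∧ 0 < orient X Y q p r ∧ IsVertex S X Y q p r := by
  classical
  obtain ⟨hq, hp, hlt, a, b, hab, hout⟩ := he
  have hqp : q ≠ p := by rintro rfl; exact lt_irrefl _ hlt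
  set L := S.filter (fun r => r ≠ q ∧ r ≠ p ∧ 0 < orient X Y q p r) with hL
  rcases L.eq_empty_or_nonempty with hemp | hne
  · left
    intro r hr hrq hrp
    have h1 := hg.orient_ne q hq p hp r hr hqp hrq hrp
    by_contra hcon
    have : r ∈ L := by
      rw [hL, Finset.mem_filter]
      exact ⟨hr, hrq, hrp, lt_of_le_of_ne (not_lt.mp hcon) h1.symm⟩
    rw [hemp] at this
    exact absurd this (Finset.notMem_empty _)
  · right
    -- moving the centre by `t * (Y q - Y p, X p - X q)` lowers the power gap of `s` by
    -- `2 * t * orient q p s`, so the first left point is met at the least of these ratios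
    obtain ⟨r, hrL, hmin⟩ := L.exists_min_image
      (fun r => (pow X Y r a b - pow X Y p a b) / (2 * orient X Y q p r)) hne
    rw [hL, Finset.mem_filter] at hrL
    obtain ⟨hr, hrq, hrp, hO⟩ := hrL
    set t := (pow X Y r a b - pow X Y p a b) / (2 * orient X Y q p r) with ht
    have htpos : 0 < t := div_pos (sub_pos.mpr (hout r hr hrq hrp)) (by positivity)
    have key : ∀ s, pow X Y s (a - t * (Y p - Y q)) (b + t * (X p - X q))
        - pow X Y p (a - t * (Y p - Y q)) (b + t * (X p - X q))
        = pow X Y s a b - pow X Y p a b - 2 * t * orient X Y q p s := by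
      intro s; simp only [pow, orient]; ring
    have hq0 := key q
    have hr0 := key r
    have hOq : orient X Y q p q = 0 := by simp [orient]
    have htr : 2 * t * orient X Y q p r = pow X Y r a b - pow X Y p a b := by
      rw [ht]; field_simp
    rw [hOq, hab] at hq0
    rw [htr] at hr0
    have e1 : pow X Y q (a - t * (Y p - Y q)) (b + t * (X p - X q))
        = pow X Y r (a - t * (Y p - Y q)) (b + t * (X p - X q)) := by linarith
    have e2 : pow X Y p (a - t * (Y p - Y q)) (b + t * (X p - X q))
        = pow X Y r (a - t * (Y p - Y q)) (b + t * (X p - X q)) := by linarith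
    refine ⟨r, hrq, hrp, hO, hq, hp, hr, _, _, e1, e2, ?_⟩
    intro s hs hsq hsp hsr
    have hne' := hg.not_concyclic q hq p hp r hr s hs hqp hrq hrp hsq hsp hsr _ _ e1 e2
    refine lt_of_le_of_ne ?_ hne'.symm
    have hs0 := key s
    have hgap := hout s hs hsq hsp
    have : 2 * t * orient X Y q p s ≤ pow X Y s a b - pow X Y p a b := by
      rcases le_or_gt (orient X Y q p s) 0 with h | h
      · have : t * orient X Y q p s ≤ 0 := mul_nonpos_of_nonneg_of_nonpos htpos.le h
        linarith
      · have hsL : s ∈ L := by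
          rw [hL, Finset.mem_filter]; exact ⟨hs, hsq, hsp, h⟩
        have hle : t ≤ (pow X Y s a b - pow X Y p a b) / (2 * orient X Y q p s) := hmin s hsL
        rw [le_div_iff₀ (by positivity)] at hle
        linarith
    linarith

/-- The convex Voronoi cell of `w` has at most one rightmost vertex (`ε = 1`) and at most one
leftmost vertex (`ε = -1`). A vertex on the cells of `l`, `w`, `u`, with `w` between `l` and `u` in
height, is the rightmost one of the cell of `w` if `w` lies to the left of the line `l u`, and the
leftmost one otherwise. -/
lemma IsVertex.unique {ε : ℝ} {l w u l' u' : ι}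
    (h : IsVertex S X Y l u w) (h' : IsVertex S X Y l' u' w)
    (hl : Y l < Y w) (hu : Y w < Y u) (hl' : Y l' < Y w) (hu' : Y w < Y u')
    (ho : 0 < ε * orient X Y l u w) (ho' : 0 < ε * orient X Y l' u' w) :
    l = l' ∧ u = u' := by
  obtain ⟨hlS, huS, hwS, a, b, e1, e2, hout⟩ := h
  obtain ⟨hlS', huS', -, a', b', e1', e2', hout'⟩ := h'
  -- the combination of powers in which the second coordinate of the centre cancels
  have id1 : (Y w - Y l) * (pow X Y u a' b' - pow X Y w a' b')
      + (Y u - Y w) * (pow X Y l a' b' - pow X Y w a' b')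
      = (Y w - Y l) * (pow X Y u a b - pow X Y w a b)
      + (Y u - Y w) * (pow X Y l a b - pow X Y w a b) - 2 * orient X Y l u w * (a' - a) := by
    simp only [pow, orient]; ring
  have id2 : (Y w - Y l') * (pow X Y u' a b - pow X Y w a b)
      + (Y u' - Y w) * (pow X Y l' a b - pow X Y w a b)
      = (Y w - Y l') * (pow X Y u' a' b' - pow X Y w a' b')
      + (Y u' - Y w) * (pow X Y l' a' b' - pow X Y w a' b')
        - 2 * orient X Y l' u' w * (a - a') := by
    simp only [pow, orient]; ring
  have le1 := IsVertex.le e1 e2 hout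
  have le2 := IsVertex.le e1' e2' hout'
  have n1 : 0 ≤ (Y w - Y l) * (pow X Y u a' b' - pow X Y w a' b') :=
    mul_nonneg (by linarith) (by linarith [le2 u huS])
  have n2 : 0 ≤ (Y u - Y w) * (pow X Y l a' b' - pow X Y w a' b') :=
    mul_nonneg (by linarith) (by linarith [le2 l hlS])
  have n3 : 0 ≤ (Y w - Y l') * (pow X Y u' a b - pow X Y w a b) :=
    mul_nonneg (by linarith) (by linarith [le1 u' huS'])
  have n4 : 0 ≤ (Y u' - Y w) * (pow X Y l' a b - pow X Y w a b) :=
    mul_nonneg (by linarith) (by linarith [le1 l' hlS'])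
  rw [e1, e2] at id1
  rw [e1', e2'] at id2
  have m1 : orient X Y l u w * (a' - a) ≤ 0 := by linarith
  have m2 : orient X Y l' u' w * (a - a') ≤ 0 := by linarith
  have haa : a' = a := by
    by_contra hne
    have hpos : 0 < (a' - a) ^ 2 := by
      have : a' - a ≠ 0 := sub_ne_zero.mpr hne
      positivity
    have hneg : (ε * orient X Y l u w) * (ε * orient X Y l' u' w) * (a' - a) ^ 2 ≤ 0 := by
      have := mul_nonneg_of_nonpos_of_nonpos m1 m2
      nlinarith [mul_nonneg (sq_nonneg ε) this]
    exact absurd (mul_pos (mul_pos ho ho') hpos) (not_lt.mpr hneg)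
  rw [haa] at id1 n1 n2
  have z1 : (Y w - Y l) * (pow X Y u a b' - pow X Y w a b') = 0 := by linarith
  have z2 : (Y u - Y w) * (pow X Y l a b' - pow X Y w a b') = 0 := by linarith
  have y1 : pow X Y u a b' - pow X Y w a b' = 0 :=
    (mul_eq_zero.mp z1).resolve_left (by linarith)
  have y2 : pow X Y l a b' - pow X Y w a b' = 0 :=
    (mul_eq_zero.mp z2).resolve_left (by linarith)
  rw [haa] at hout'
  constructor
  · by_contra hne
    have := hout' l hlS hne (by rintro rfl; linarith) (by rintro rfl; linarith)
    linarith
  · by_contra hne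
    have := hout' u huS (by rintro rfl; linarith) hne (by rintro rfl; linarith)
    linarith

/-! ### The charging scheme -/

variable (S X Y) in
/-- The edge `e = (q, p)`, with `q` below `p`, is charged to the slot `σ = (w, i)` of the point
`w`. -/
def Charge (e : ι × ι) (σ : ι × Fin 3) : Prop :=
  (σ.2 = 0 ∧ IsVertex S X Y e.1 e.2 σ.1 ∧ 0 < orient X Y e.1 e.2 σ.1 ∧
    Y e.1 < Y σ.1 ∧ Y σ.1 < Y e.2) ∨
  (σ.2 = 1 ∧ σ.1 = e.2 ∧ ∃ r, IsVertex S X Y e.1 e.2 r ∧ 0 < orient X Y e.1 e.2 r ∧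
    Y e.2 < Y r) ∨
  (σ.2 = 2 ∧ σ.1 = e.1 ∧ ((∃ r, IsVertex S X Y e.1 e.2 r ∧ 0 < orient X Y e.1 e.2 r ∧
    Y r < Y e.1) ∨ ∀ r ∈ S, r ≠ e.1 → r ≠ e.2 → orient X Y e.1 e.2 r < 0))

lemma IsEdge.exists_charge (hg : Generic S X Y) {q p : ι} (he : IsEdge S X Y q p) :
    ∃ σ : ι × Fin 3, σ.1 ∈ S ∧ Charge S X Y (q, p) σ := by
  rcases he.left_end hg with h | ⟨r, hrq, hrp, ho, hv⟩
  · exact ⟨(q, 2), he.1, Or.inr (Or.inr ⟨rfl, rfl, Or.inr h⟩)⟩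
  · have hr : r ∈ S := hv.2.2.1
    rcases lt_trichotomy (Y r) (Y q) with h | h | h
    · exact ⟨(q, 2), he.1, Or.inr (Or.inr ⟨rfl, rfl, Or.inl ⟨r, hv, ho, h⟩⟩)⟩
    · exact absurd (hg.height_injOn hr he.1 h) hrq
    rcases lt_trichotomy (Y r) (Y p) with h' | h' | h'
    · exact ⟨(r, 0), hr, Or.inl ⟨rfl, hv, ho, h, h'⟩⟩
    · exact absurd (hg.height_injOn hr he.2.1 h') hrp
    · exact ⟨(p, 1), he.2.1, Or.inr (Or.inl ⟨rfl, rfl, r, hv, ho, h'⟩)⟩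

lemma IsVertex.rotate {q p r : ι} (h : IsVertex S X Y q p r) : IsVertex S X Y r p q := by
  obtain ⟨hq, hp, hr, a, b, e1, e2, hout⟩ := h
  exact ⟨hr, hp, hq, a, b, e1.symm, e2.trans e1.symm,
    fun s hs h1 h2 h3 => e1 ▸ hout s hs h3 h2 h1⟩

lemma IsVertex.swap {q p r : ι} (h : IsVertex S X Y q p r) : IsVertex S X Y q r p := by
  obtain ⟨hq, hp, hr, a, b, e1, e2, hout⟩ := h
  exact ⟨hq, hr, hp, a, b, e1.trans e2.symm, e2.symm,
    fun s hs h1 h2 h3 => e2 ▸ hout s hs h1 h3 h2⟩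

lemma orient_rotate (q p r : ι) : orient X Y r p q = - orient X Y q p r := by
  simp only [orient]; ring

lemma orient_swap (q p r : ι) : orient X Y q r p = - orient X Y q p r := by
  simp only [orient]; ring

/-- Let `{q, p}` and `{q, p'}` be edges going up from `q`. If the dual edge of the first is unbounded
to the left and the second is charged to slot `2` of `q`, for whichever reason, they coincide. -/
lemma eq_of_unbounded {q p p' : ι} (hp : p ∈ S) (hp' : p' ∈ S) (hqp : Y q < Y p)
    (hqp' : Y q < Y p') (hunb : ∀ r ∈ S, r ≠ q → r ≠ p → orient X Y q p r < 0)
    (h' : (∃ r, IsVertex S X Y q p' r ∧ 0 < orient X Y q p' r ∧ Y r < Y q) ∨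
      ∀ r ∈ S, r ≠ q → r ≠ p' → orient X Y q p' r < 0) :
    p = p' := by
  by_contra hne
  have h1 : orient X Y q p p' < 0 := hunb p' hp' (by rintro rfl; linarith) (Ne.symm hne)
  rcases h' with ⟨r, hv, ho, hlt⟩ | h
  · have h2 : orient X Y q p r < 0 :=
      hunb r hv.2.2.1 (by rintro rfl; linarith) (by rintro rfl; linarith)
    -- Cramer's identity for the three vectors from `q`, paired with the height
    have id : (Y p - Y q) * orient X Y q p' r + (Y p' - Y q) * (- orient X Y q p r)
        + (Y q - Y r) * (- orient X Y q p p') = 0 := by simp only [orient]; ring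
    have a1 := mul_pos (sub_pos.mpr hqp) ho
    have a2 := mul_pos (sub_pos.mpr hqp') (neg_pos.mpr h2)
    have a3 := mul_pos (sub_pos.mpr hlt) (neg_pos.mpr h1)
    linarith
  · have h2 := h p hp (by rintro rfl; linarith) hne
    have := orient_swap (X := X) (Y := Y) q p p'
    linarith

lemma Charge.unique {e e' : ι × ι} {σ : ι × Fin 3} (he : IsEdge S X Y e.1 e.2)
    (he' : IsEdge S X Y e'.1 e'.2) (h : Charge S X Y e σ) (h' : Charge S X Y e' σ) : e = e' := by
  obtain ⟨q, p⟩ := e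
  obtain ⟨q', p'⟩ := e'
  obtain ⟨w, i⟩ := σ
  obtain ⟨-, hp, hlt, -⟩ := he
  obtain ⟨-, hp', hlt', -⟩ := he'
  simp only [Charge] at *
  rcases h with ⟨hi, hv, ho, h1, h2⟩ | ⟨hi, hw, r, hv, ho, h1⟩ | ⟨hi, hw, h⟩ <;>
    rcases h' with ⟨hi', hv', ho', h1', h2'⟩ | ⟨hi', hw', r', hv', ho', h1'⟩ | ⟨hi', hw', h'⟩ <;>
    first
    | (exfalso; rw [hi] at hi'; revert hi'; decide)
    | skip
  · obtain ⟨rfl, rfl⟩ := IsVertex.unique (ε := 1) hv hv' h1 h2 h1' h2' (by linarith) (by linarith)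
    rfl
  · subst hw; subst hw'
    obtain ⟨rfl, -⟩ := IsVertex.unique (ε := -1) hv.swap hv'.swap hlt h1 hlt' h1'
      (by rw [orient_swap]; linarith) (by rw [orient_swap]; linarith)
    rfl
  · subst hw; subst hw'
    rcases h with ⟨r, hv, ho, h1⟩ | hunb
    · rcases h' with ⟨r', hv', ho', h1'⟩ | hunb'
      · obtain ⟨-, rfl⟩ := IsVertex.unique (ε := -1) hv.rotate hv'.rotate h1 hlt h1' hlt'
          (by rw [orient_rotate]; linarith) (by rw [orient_rotate]; linarith)
        rfl
      · rw [eq_of_unbounded hp' hp hlt' hlt hunb' (Or.inl ⟨r, hv, ho, h1⟩)]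
    · rw [eq_of_unbounded hp hp' hlt hlt' hunb h']

/-! ### Unused slots and the edge bound -/

/-- If `w` is extreme in `S` for the functional `A * X + B * Y` and lies between `l` and `u` in
height, then it does not lie to the left (if `0 < A`) or to the right (if `A < 0`) of the line `l u`. -/
lemma mul_orient_nonpos_of_extreme {A B : ℝ} {l w u : ι} (hl : l ∈ S) (hu : u ∈ S)
    (hmax : ∀ s ∈ S, A * X s + B * Y s ≤ A * X w + B * Y w)
    (h1 : Y l < Y w) (h2 : Y w < Y u) : A * orient X Y l u w ≤ 0 := by
  have id : A * orient X Y l u w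
      = (Y w - Y l) * ((A * X u + B * Y u) - (A * X w + B * Y w))
        + (Y u - Y w) * ((A * X l + B * Y l) - (A * X w + B * Y w)) := by
    simp only [orient]; ring
  have a1 := mul_nonneg (sub_pos.mpr h1).le (sub_nonneg.mpr (hmax u hu))
  have a2 := mul_nonneg (sub_pos.mpr h2).le (sub_nonneg.mpr (hmax l hl))
  linarith

/-- Slot `0` of a point on the right side of the convex hull is unused. -/
lemma charge_zero_not_extreme {A B : ℝ} {w : ι} (hA : 0 < A)
    (hmax : ∀ s ∈ S, A * X s + B * Y s ≤ A * X w + B * Y w) (e : ι × ι) :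
    ¬ Charge S X Y e (w, 0) := by
  rintro (⟨-, hv, ho, h1, h2⟩ | ⟨hi, -⟩ | ⟨hi, -⟩)
  · have := mul_orient_nonpos_of_extreme hv.1 hv.2.1 hmax h1 h2
    exact absurd (mul_pos hA ho) (not_lt.mpr this)
  · exact absurd hi (by simp)
  · exact absurd hi (by simp)

/-- Slot `1` of a point on the left side of the convex hull is unused. -/
lemma charge_one_not_extreme {A B : ℝ} {w : ι} (hA : A < 0)
    (hmax : ∀ s ∈ S, A * X s + B * Y s ≤ A * X w + B * Y w) (e : ι × ι)
    (he : IsEdge S X Y e.1 e.2) : ¬ Charge S X Y e (w, 1) := by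
  rintro (⟨hi, -⟩ | ⟨-, hw, r, hv, ho, h1⟩ | ⟨hi, -⟩)
  · exact absurd hi (by simp)
  · simp only at hw
    subst hw
    have := mul_orient_nonpos_of_extreme hv.1 hv.2.2.1 hmax he.2.2.1 h1
    rw [orient_swap] at this
    nlinarith [mul_pos (neg_pos.mpr hA) ho]
  · exact absurd hi (by simp)

/-- A vertex of the convex hull other than the lowest point `b` and the highest point `t` has an
unused slot. -/
lemma exists_third_unused (hg : Generic S X Y) (hc : 3 ≤ S.card) {b t : ι} (hb : b ∈ S)
    (ht : t ∈ S) (hbt : Y b < Y t) :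
    ∃ σ : ι × Fin 3, σ.1 ∈ S ∧ σ.1 ≠ b ∧ σ.1 ≠ t ∧
      ∀ e : ι × ι, IsEdge S X Y e.1 e.2 → ¬ Charge S X Y e σ := by
  classical
  have hne : b ≠ t := by rintro rfl; exact lt_irrefl _ hbt
  obtain ⟨s, hs, hsn⟩ : ∃ s ∈ S, s ∉ ({b, t} : Finset ι) := by
    apply Finset.exists_mem_notMem_of_card_lt_card
    rw [Finset.card_pair hne]; omega
  simp only [Finset.mem_insert, Finset.mem_singleton, not_or] at hsn
  have ho := hg.orient_ne b hb t ht s hs hne hsn.1 hsn.2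
  have ob : orient X Y b t b = 0 := by simp [orient]
  have ot : orient X Y b t t = 0 := by simp [orient]; ring
  rcases lt_or_gt_of_ne ho with h | h
  · obtain ⟨w, hw, hmin⟩ := S.exists_min_image (fun r => orient X Y b t r) ⟨b, hb⟩
    have hws := hmin s hs
    refine ⟨(w, 0), hw, ?_, ?_, fun e _ => charge_zero_not_extreme (A := Y t - Y b)
      (B := -(X t - X b)) (sub_pos.mpr hbt) ?_ e⟩
    · rintro rfl; linarith
    · rintro rfl; linarith
    · intro r hr
      have := hmin r hr
      simp only [orient] at this
      linarith
  · obtain ⟨w, hw, hmax⟩ := S.exists_max_image (fun r => orient X Y b t r) ⟨b, hb⟩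
    have hws := hmax s hs
    refine ⟨(w, 1), hw, ?_, ?_, fun e he => charge_one_not_extreme (A := -(Y t - Y b))
      (B := X t - X b) (by linarith) ?_ e he⟩
    · rintro rfl; linarith
    · rintro rfl; linarith
    · intro r hr
      have := hmax r hr
      simp only [orient] at this
      linarith

open Classical in
/-- The Delaunay graph of `k ≥ 3` points in general position has at most `3k - 6` edges. -/
theorem card_edges_add_six_le (hg : Generic S X Y) (hc : 3 ≤ S.card) :
    ((S ×ˢ S).filter (fun e => IsEdge S X Y e.1 e.2)).card + 6 ≤ 3 * S.card := by
  have hS : S.Nonempty := Finset.card_pos.mp (by omega)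
  obtain ⟨b, hb, hbmin⟩ := S.exists_min_image Y hS
  obtain ⟨t, ht, htmax⟩ := S.exists_max_image Y hS
  have hbt : Y b < Y t := by
    obtain ⟨s, hs, hsb⟩ := Finset.exists_mem_ne (by omega : 1 < S.card) b
    have h1 : Y b ≠ Y s := fun h => hsb (hg.height_injOn hb hs h).symm
    exact (lt_of_le_of_ne (hbmin s hs) h1).trans_le (htmax s hs)
  have hne : b ≠ t := by rintro rfl; exact lt_irrefl _ hbt
  obtain ⟨σ, hσ, hσb, hσt, hσu⟩ := exists_third_unused hg hc hb ht hbt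
  set U : Finset (ι × Fin 3) := {(b, 0), (b, 1), (t, 0), (t, 1), (t, 2), σ} with hU
  have hUcard : U.card = 6 := by
    obtain ⟨w, i⟩ := σ
    simp only at hσb hσt
    rw [hU]
    repeat rw [Finset.card_insert_of_notMem]
    · rfl
    all_goals simp [hne, Ne.symm hσb, Ne.symm hσt]
  have hUsub : U ⊆ S ×ˢ (Finset.univ : Finset (Fin 3)) := by
    intro x hx
    simp only [hU, Finset.mem_insert, Finset.mem_singleton] at hx
    rcases hx with rfl | rfl | rfl | rfl | rfl | rfl <;> simp [hb, ht, hσ]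
  have hle : ((S ×ˢ S).filter (fun e => IsEdge S X Y e.1 e.2)).card
      ≤ ((S ×ˢ (Finset.univ : Finset (Fin 3))) \ U).card := by
    apply Finset.card_le_card_of_forall_subsingleton (Charge S X Y)
    · rintro ⟨q, p⟩ he
      rw [Finset.mem_filter] at he
      obtain ⟨τ, hτ, hch⟩ := he.2.exists_charge hg
      refine ⟨τ, ?_, hch⟩
      rw [Finset.mem_sdiff]
      refine ⟨by simp [hτ], ?_⟩
      intro hx
      have hqp := he.2.2.2.1
      have hbq := hbmin q he.2.1
      have hpt := htmax p he.2.2.1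
      simp only at hqp hbq hpt
      simp only [hU, Finset.mem_insert, Finset.mem_singleton] at hx
      rcases hx with rfl | rfl | rfl | rfl | rfl | rfl
      · rcases hch with ⟨-, -, -, h1, -⟩ | ⟨hi, -⟩ | ⟨hi, -⟩
        · simp only at h1; linarith
        · exact absurd hi (by simp)
        · exact absurd hi (by simp)
      · rcases hch with ⟨hi, -⟩ | ⟨-, rfl, -⟩ | ⟨hi, -⟩
        · exact absurd hi (by simp)
        · simp only at hqp; linarith
        · exact absurd hi (by simp)
      · rcases hch with ⟨-, -, -, -, h2⟩ | ⟨hi, -⟩ | ⟨hi, -⟩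
        · simp only at h2; linarith
        · exact absurd hi (by simp)
        · exact absurd hi (by simp)
      · rcases hch with ⟨hi, -⟩ | ⟨-, rfl, r, hv, -, h1⟩ | ⟨hi, -⟩
        · exact absurd hi (by simp)
        · have := htmax r hv.2.2.1
          simp only at h1 this; linarith
        · exact absurd hi (by simp)
      · rcases hch with ⟨hi, -⟩ | ⟨hi, -⟩ | ⟨-, rfl, -⟩
        · exact absurd hi (by simp)
        · exact absurd hi (by simp)
        · simp only at hqp hpt; linarith
      · exact hσu _ he.2 hch
    · intro τ _ e he e' he'
      simp only [Finset.mem_filter, Set.mem_ofPred_eq] at he he'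
      exact Charge.unique he.1.2 he'.1.2 he.2 he'.2
  rw [Finset.card_sdiff_of_subset hUsub, hUcard, Finset.card_product, Finset.card_univ,
    Fintype.card_fin] at hle
  omega

open Classical in
lemma card_pairs (hY : Set.InjOn Y S) :
    ((S ×ˢ S).filter (fun e => Y e.1 < Y e.2)).card = S.card.choose 2 := by
  have h : ((S ×ˢ S).filter (fun e => Y e.1 < Y e.2)).card = (S.powersetCard 2).card := by
    apply Finset.card_bij (fun e _ => ({e.1, e.2} : Finset ι))
    · rintro ⟨q, p⟩ he
      simp only [Finset.mem_filter, Finset.mem_product] at he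
      rw [Finset.mem_powersetCard]
      refine ⟨?_, Finset.card_pair fun h => he.2.ne (congrArg Y h)⟩
      intro x hx
      simp only [Finset.mem_insert, Finset.mem_singleton] at hx
      rcases hx with rfl | rfl
      exacts [he.1.1, he.1.2]
    · rintro ⟨q, p⟩ he ⟨q', p'⟩ he' heq
      simp only [Finset.mem_filter, Finset.mem_product] at he he'
      simp only at heq
      have h1 : q ∈ ({q', p'} : Finset ι) := by rw [← heq]; simp
      have h2 : p ∈ ({q', p'} : Finset ι) := by rw [← heq]; simp
      simp only [Finset.mem_insert, Finset.mem_singleton] at h1 h2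
      rcases h1 with rfl | rfl <;> rcases h2 with rfl | rfl
      · exact absurd he.2 (lt_irrefl _)
      · rfl
      · exact absurd he.2 (not_lt.mpr he'.2.le)
      · exact absurd he.2 (lt_irrefl _)
    · intro T hT
      rw [Finset.mem_powersetCard] at hT
      obtain ⟨x, y, hxy, rfl⟩ := Finset.card_eq_two.mp hT.2
      have hx : x ∈ S := hT.1 (by simp)
      have hy : y ∈ S := hT.1 (by simp)
      rcases lt_or_gt_of_ne (fun h => hxy (hY hx hy h)) with h | h
      · exact ⟨(x, y), by simp [hx, hy, h], rfl⟩
      · exact ⟨(y, x), by simp [hx, hy, h], Finset.pair_comm _ _⟩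
  rw [h, Finset.card_powersetCard]

end Core

/-! ### Rotating the plane to separate heights -/

/-- First coordinate after the rotation (with a scaling) of slope `m`. -/
def rotX (m : ℝ) (s : Pt) : ℝ := s 0 - m * s 1

/-- Second coordinate after the rotation (with a scaling) of slope `m`. -/
def rotY (m : ℝ) (s : Pt) : ℝ := m * s 0 + s 1

lemma exists_rot_injOn (S : Finset Pt) : ∃ m : ℝ, Set.InjOn (rotY m) S := by
  -- the only slope for which `x` and `y` have equal height is `-(x 1 - y 1) / (x 0 - y 0)`
  obtain ⟨m, hm⟩ := Infinite.exists_notMem_finset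
    ((S ×ˢ S).image (fun e => -(e.1 1 - e.2 1) / (e.1 0 - e.2 0)))
  refine ⟨m, fun x hx y hy hxy => ?_⟩
  by_contra hne
  simp only [rotY] at hxy
  by_cases h0 : x 0 = y 0
  · apply hne
    rw [h0] at hxy
    have h1 : x 1 = y 1 := by linarith
    ext i; fin_cases i
    exacts [h0, h1]
  · apply hm
    rw [Finset.mem_image]
    refine ⟨(x, y), Finset.mem_product.mpr ⟨hx, hy⟩, ?_⟩
    have : x 0 - y 0 ≠ 0 := sub_ne_zero.mpr h0
    simp only
    rw [div_eq_iff this]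
    linarith

lemma dist_sq_coord (x c : Pt) : dist x c ^ 2 = (x 0 - c 0) ^ 2 + (x 1 - c 1) ^ 2 := by
  rw [EuclideanSpace.dist_eq, Real.sq_sqrt (by positivity)]
  simp [Fin.sum_univ_two, Real.dist_eq, sq_abs]

lemma pow_rot (m : ℝ) (s c : Pt) : pow (rotX m) (rotY m) s (rotX m c) (rotY m c)
    = (1 + m ^ 2) * (dist s c ^ 2 - (c 0 ^ 2 + c 1 ^ 2)) := by
  rw [dist_sq_coord]; simp only [pow, rotX, rotY]; ring

lemma exists_center (m a b : ℝ) : ∃ c : Pt, rotX m c = a ∧ rotY m c = b := by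
  have : 1 + m ^ 2 ≠ 0 := by positivity
  refine ⟨!₂[(a + m * b) / (1 + m ^ 2), (b - m * a) / (1 + m ^ 2)], ?_, ?_⟩
  · simp [rotX]; field_simp; ring
  · simp [rotY]; field_simp; ring

lemma dist_eq_of_pow_eq {m : ℝ} {s r c : Pt}
    (h : pow (rotX m) (rotY m) s (rotX m c) (rotY m c)
      = pow (rotX m) (rotY m) r (rotX m c) (rotY m c)) : dist s c = dist r c := by
  rw [pow_rot, pow_rot] at h
  have h2 := mul_left_cancel₀ (by positivity : (1 + m ^ 2 : ℝ) ≠ 0) h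
  exact (sq_eq_sq₀ dist_nonneg dist_nonneg).mp (by linarith)

lemma generic_of_genPos {S : Finset Pt} (hS : GenPos (S : Set Pt)) {m : ℝ}
    (hm : Set.InjOn (rotY m) S) : Generic S (rotX m) (rotY m) := by
  refine ⟨hm, ?_, ?_⟩
  · intro q hq p hp r hr hqp hrq hrp ho
    have hsub : ({q, p, r} : Set Pt) ⊆ S := by
      rintro x (rfl | rfl | rfl) <;> assumption
    refine hS.1 _ hsub (Set.ncard_eq_three.mpr ⟨q, p, r, hqp, hrq.symm, hrp.symm, rfl⟩) ?_
    have hY : rotY m p - rotY m q ≠ 0 := fun h => hqp (hm hp hq (sub_eq_zero.mp h)).symm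
    have ho' : (p 0 - q 0) * (r 1 - q 1) - (p 1 - q 1) * (r 0 - q 0) = 0 := by
      have : (1 + m ^ 2) * ((p 0 - q 0) * (r 1 - q 1) - (p 1 - q 1) * (r 0 - q 0)) = 0 := by
        rw [← ho]; simp only [orient, rotX, rotY]; ring
      exact (mul_eq_zero.mp this).resolve_left (by positivity)
    rw [collinear_iff_of_mem (p₀ := q) (by simp)]
    refine ⟨p - q, ?_⟩
    rintro x (rfl | rfl | rfl)
    · exact ⟨0, by simp⟩
    · exact ⟨1, by simp⟩
    · refine ⟨(rotY m x - rotY m q) / (rotY m p - rotY m q), ?_⟩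
      ext i
      simp only [vadd_eq_add, PiLp.add_apply, PiLp.smul_apply, PiLp.sub_apply, smul_eq_mul]
      rw [← sub_eq_iff_eq_add, div_mul_eq_mul_div, eq_div_iff hY]
      simp only [rotY]
      fin_cases i
      · simp only [Fin.zero_eta]; linear_combination -ho'
      · simp only [Fin.mk_one]; linear_combination m * ho'
  · intro q hq p hp r hr s hs hqp hrq hrp hsq hsp hsr a b e1 e2 e3
    have hsub : ({q, p, r, s} : Set Pt) ⊆ S := by
      rintro x (rfl | rfl | rfl | rfl) <;> assumption
    have hcard : ({q, p, r, s} : Set Pt).ncard = 4 :=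
      Set.ncard_eq_four.mpr ⟨q, p, r, s, hqp, hrq.symm, hsq.symm, hrp.symm, hsp.symm, hsr.symm, rfl⟩
    obtain ⟨c, rfl, rfl⟩ := exists_center m a b
    refine hS.2 _ hsub hcard ⟨c, dist r c, ?_⟩
    rintro x (rfl | rfl | rfl | rfl)
    exacts [dist_eq_of_pow_eq e1, dist_eq_of_pow_eq e2, rfl, dist_eq_of_pow_eq e3]

/-- A pair that is not dominating is a Delaunay edge. -/
lemma isEdge_of_disk {S : Finset Pt} {m : ℝ} {q p c : Pt} {r : ℝ} (hq : q ∈ S) (hp : p ∈ S)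
    (hlt : rotY m q < rotY m p) (h1 : dist q c = r) (h2 : dist p c = r)
    (h : ∀ z ∈ S, z ≠ q → z ≠ p → r < dist z c) : IsEdge S (rotX m) (rotY m) q p := by
  refine ⟨hq, hp, hlt, rotX m c, rotY m c, ?_, ?_⟩
  · rw [pow_rot, pow_rot, h1, h2]
  · intro s hs hsq hsp
    rw [pow_rot, pow_rot, h2]
    have := h s hs hsq hsp
    have hr : 0 ≤ r := h2 ▸ dist_nonneg
    gcongr

end Delaunay

open Delaunay in
/-- Among any set `S'` of `k` points in the plane in general position, there are at least
`C(k−3, 2)` unordered pairs `{x, y}` of distinct points of `S'` such that every closed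
disk having both `x` and `y` on its boundary contains at least one of the other `k − 2`
points of `S'`. -/
theorem dominating_pairs_lower_bound (k : ℕ) (S' : Set Pt)
    (hfin : S'.Finite) (hcard : S'.ncard = k) (hgp : GenPos S') :
    (k - 3).choose 2 ≤
      {T : Set Pt | ∃ x ∈ S', ∃ y ∈ S', x ≠ y ∧ T = {x, y} ∧
        ∀ (c : Pt) (r : ℝ), 0 < r → dist x c = r → dist y c = r →
          ∃ z ∈ S' \ {x, y}, dist z c ≤ r}.ncard := by
  classical
  obtain ⟨S, rfl⟩ := hfin.exists_finset_coe
  rw [Set.ncard_coe_finset] at hcard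
  rcases lt_or_ge k 3 with hk | hk
  · have : k - 3 = 0 := by omega
    simp [this]
  obtain ⟨m, hm⟩ := exists_rot_injOn S
  have hg := generic_of_genPos hgp hm
  have hE := card_edges_add_six_le hg (by omega)
  set A := (S ×ˢ S).filter (fun e => rotY m e.1 < rotY m e.2) with hA
  have hAcard : A.card = k.choose 2 := hcard ▸ card_pairs hm
  set E := (S ×ˢ S).filter (fun e => IsEdge S (rotX m) (rotY m) e.1 e.2) with hEdef
  set D := {T : Set Pt | ∃ x ∈ (S : Set Pt), ∃ y ∈ (S : Set Pt), x ≠ y ∧ T = {x, y} ∧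
        ∀ (c : Pt) (r : ℝ), 0 < r → dist x c = r → dist y c = r →
          ∃ z ∈ (S : Set Pt) \ {x, y}, dist z c ≤ r} with hD
  have hDfin : D.Finite := by
    apply (S.finite_toSet.finite_subsets).subset
    rintro T ⟨x, hx, y, hy, -, rfl, -⟩ z (rfl | rfl) <;> assumption
  have hinj : (A \ E).card ≤ D.ncard := by
    rw [← Set.ncard_coe_finset]
    apply Set.ncard_le_ncard_of_injOn (fun e : Pt × Pt => ({e.1, e.2} : Set Pt)) _ _ hDfin
    · rintro ⟨q, p⟩ he
      simp only [hA, hEdef, Finset.coe_sdiff, Set.mem_sdiff, Finset.mem_coe, Finset.mem_filter,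
        Finset.mem_product] at he
      obtain ⟨⟨⟨hq, hp⟩, hlt⟩, hne⟩ := he
      refine ⟨q, hq, p, hp, by rintro rfl; exact lt_irrefl _ hlt, rfl, ?_⟩
      intro c r _ h1 h2
      by_contra! hcon
      exact hne ⟨⟨hq, hp⟩, isEdge_of_disk hq hp hlt h1 h2
        fun z hz hzq hzp => hcon z ⟨hz, by simp [hzq, hzp]⟩⟩
    · rintro ⟨q, p⟩ he ⟨q', p'⟩ he' heq
      simp only [hA, Finset.coe_sdiff, Set.mem_sdiff, Finset.mem_coe, Finset.mem_filter] at he he'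
      rcases Set.pair_eq_pair_iff.mp heq with ⟨h1, h2⟩ | ⟨h1, h2⟩
      · exact Prod.ext h1 h2
      · simp only at h1 h2
        subst h1; subst h2
        exact absurd he.1.2 (not_lt.mpr he'.1.2.le)
  have hsd : A.card - E.card ≤ (A \ E).card := Finset.le_card_sdiff _ _
  -- `C(k,2) = C(k-3,2) + (3k-6)`
  have hchoose : k.choose 2 = (k - 3).choose 2 + 3 * (k - 3) + 3 := by
    obtain ⟨n, rfl⟩ := Nat.exists_eq_add_of_le' hk
    simp only [Nat.add_sub_cancel, Nat.choose_succ_succ' _ 1, Nat.choose_one_right]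
    ring
  omega
end
end

section
/- For every integer n ≥ 8 and every set S of n points in the Euclidean plane in general position, there exist two distinct points u, v ∈ S such that every closed disk containing both u and v contains at least ⌈5(n−2)/84⌉ points of S other than u and v. -/
/-!
The proof averages over the `8`-subsets `Q` of `S`. The pairs of points of `Q` that some disk
separates from the rest of `Q` are the edges of the Delaunay graph of `Q`, so there are at most
`3 * 8 - 6 = 18` of them among the `28` pairs (`card_sep_le`). Hence some pair `u, v` is inseparable
in at least `10 / 28 = 5 / 14` of the `8`-subsets containing it (`exists_pair`). If a disk contains
`u`, `v` and exactly `k` other points of `S`, each of these `8`-subsets contains one of the `k`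
points, so `(5 / 14) * choose (n - 2) 6 ≤ k * choose (n - 3) 5`, that is, `k ≥ 5 (n - 2) / 84`.

The bound `3 m - 6` is proved without planarity or Euler's formula. Lifting `Q` to the paraboloid
`z = x ^ 2 + y ^ 2` turns separable pairs into edges of the lower convex hull
(`DiskSep.isFace`). After a shear that makes the `x`-coordinates distinct, each edge is charged to
a vertex depending on the position of the apex of the hull face above it (`card_edges_le`). One
convexity argument shows that no vertex is charged twice by the same rule: an edge of a face cannot
enter the interior of another face at a common vertex (`IsFace.cone`).
-/

open EuclideanGeometry Metric

noncomputable section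

/-! ### Edges of lower convex hulls -/

section LowerHull

variable {α : Type*}

/-- Twice the signed area of the triangle `p q r`, where the point with label `p` has plane
coordinates `(x p, y p)`; it is positive iff `p, q, r` is a counterclockwise triple. -/
def cr (x y : α → ℝ) (p q r : α) : ℝ :=
  (x q - x p) * (y r - y p) - (y q - y p) * (x r - x p)

/-- `T` is the set of contact points of a plane lying below the points `(x p, y p, z p)`,
`p ∈ P`; that is, `T` spans a face of their lower convex hull. -/
def IsFace (P : Finset α) (x y z : α → ℝ) (T : Set α) : Prop :=
  ∃ a b c : ℝ, ∀ p ∈ P, a + b * x p + c * y p ≤ z p ∧ (a + b * x p + c * y p = z p ↔ p ∈ T)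

/-- Two faces sharing the vertex `p`: an edge `p s` of the second one cannot point into the open
angle `q p r` of the first one, unless `q` and `r` belong to the second face as well. The
difference of the two supporting affine functions vanishes at `p`, is nonnegative at `q` and `r`
and nonpositive at `s`. -/
lemma IsFace.cone {P : Finset α} {x y z : α → ℝ} {T T' : Set α}
    (h : IsFace P x y z T) (h' : IsFace P x y z T') {p q r s : α}
    (hp : p ∈ P) (hq : q ∈ P) (hr : r ∈ P) (hs : s ∈ P)
    (pT : p ∈ T) (qT : q ∈ T) (rT : r ∈ T) (pT' : p ∈ T') (sT' : s ∈ T')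
    (hqr : 0 < cr x y p q r) (hqs : 0 < cr x y p q s) (hsr : 0 < cr x y p s r) :
    q ∈ T' ∧ r ∈ T' := by
  obtain ⟨a, b, c, h⟩ := h
  obtain ⟨a', b', c', h'⟩ := h'
  have e1 := (h p hp).2.2 pT
  have e2 := (h q hq).2.2 qT
  have e3 := (h r hr).2.2 rT
  have e4 := (h' p hp).2.2 pT'
  have e5 := (h' s hs).2.2 sT'
  have i2 := (h' q hq).1
  have i3 := (h' r hr).1
  have i1 := (h s hs).1
  -- Cramer's rule for the linear part of the difference of the two affine functions
  have key : (z s - (a + b * x s + c * y s)) * cr x y p q r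
      + (z q - (a' + b' * x q + c' * y q)) * cr x y p s r
      + (z r - (a' + b' * x r + c' * y r)) * cr x y p q s = 0 := by
    rw [← e5, ← e2, ← e3]
    have e6 : a' = a + (b - b') * x p + (c - c') * y p := by linarith
    subst e6
    unfold cr
    ring
  have j1 := mul_nonneg (sub_nonneg.2 i1) hqr.le
  have j2 := mul_nonneg (sub_nonneg.2 i2) hsr.le
  have j3 := mul_nonneg (sub_nonneg.2 i3) hqs.le
  constructor
  · have : (z q - (a' + b' * x q + c' * y q)) * cr x y p s r = 0 := by linarith
    refine (h' q hq).2.1 ?_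
    rcases mul_eq_zero.1 this with h0 | h0 <;> linarith
  · have : (z r - (a' + b' * x r + c' * y r)) * cr x y p q s = 0 := by linarith
    refine (h' r hr).2.1 ?_
    rcases mul_eq_zero.1 this with h0 | h0 <;> linarith

/-- Rotating the supporting plane of an edge `u v` of the lower hull about that edge: either no
point lies to the left of `u v`, or the plane comes to rest on a triangular face whose apex lies to
the left of `u v`. -/
lemma IsFace.apex {P : Finset α} {x y z : α → ℝ}
    (hcop : ∀ a b c : ℝ, ∀ p ∈ P, ∀ q ∈ P, ∀ r ∈ P, ∀ s ∈ P, p ≠ q → p ≠ r → q ≠ r →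
      p ≠ s → q ≠ s → r ≠ s → a + b * x p + c * y p = z p → a + b * x q + c * y q = z q →
      a + b * x r + c * y r = z r → a + b * x s + c * y s ≠ z s)
    {u v : α} (hu : u ∈ P) (hv : v ∈ P) (huv : u ≠ v) (h : IsFace P x y z {u, v}) :
    (∀ w ∈ P, cr x y u v w ≤ 0) ∨
      ∃ w ∈ P, 0 < cr x y u v w ∧ IsFace P x y z {u, v, w} := by
  classical
  by_cases hW : ∀ w ∈ P, cr x y u v w ≤ 0
  · exact Or.inl hW
  right
  push Not at hW
  obtain ⟨w₀, hw₀, hw₀'⟩ := hW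
  obtain ⟨a, b, c, h⟩ := h
  obtain ⟨w, hw, hmin⟩ := Finset.exists_min_image (P.filter fun w => 0 < cr x y u v w)
    (fun w => (z w - (a + b * x w + c * y w)) / cr x y u v w)
    ⟨w₀, Finset.mem_filter.2 ⟨hw₀, hw₀'⟩⟩
  rw [Finset.mem_filter] at hw
  obtain ⟨hw, hwc⟩ := hw
  have hwu : u ≠ w := by rintro rfl; simp [cr] at hwc
  have hwv : v ≠ w := by
    rintro rfl
    have : cr x y u v v = 0 := by unfold cr; ring
    linarith
  set t := (z w - (a + b * x w + c * y w)) / cr x y u v w with ht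
  have ht0 : 0 ≤ t := div_nonneg (sub_nonneg.2 (h w hw).1) hwc.le
  refine ⟨w, hw, hwc, a + t * ((y v - y u) * x u - (x v - x u) * y u), b - t * (y v - y u),
    c + t * (x v - x u), ?_⟩
  have hform : ∀ p, a + t * ((y v - y u) * x u - (x v - x u) * y u) + (b - t * (y v - y u)) * x p
      + (c + t * (x v - x u)) * y p = a + b * x p + c * y p + t * cr x y u v p := by
    intro p; unfold cr; ring
  have hU : a + b * x u + c * y u + t * cr x y u v u = z u := by
    rw [(h u hu).2.2 (by simp)]; unfold cr; ring
  have hV : a + b * x v + c * y v + t * cr x y u v v = z v := by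
    rw [(h v hv).2.2 (by simp)]; unfold cr; ring
  have hWe : a + b * x w + c * y w + t * cr x y u v w = z w := by
    rw [ht, div_mul_cancel₀ _ hwc.ne']; ring
  intro p hp
  have hle : a + b * x p + c * y p + t * cr x y u v p ≤ z p := by
    rcases le_or_gt (cr x y u v p) 0 with h0 | h0
    · have := (h p hp).1
      nlinarith
    · have := hmin p (Finset.mem_filter.2 ⟨hp, h0⟩)
      rw [le_div_iff₀ h0] at this
      linarith
  rw [hform]
  refine ⟨hle, ?_, ?_⟩
  · intro he
    by_contra hpT
    simp only [Set.mem_insert_iff, Set.mem_singleton_iff, not_or] at hpT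
    obtain ⟨p1, p2, p3⟩ := hpT
    refine hcop _ _ _ u hu v hv w hw p hp huv hwu hwv (Ne.symm p1) (Ne.symm p2) (Ne.symm p3)
      ((hform u).trans hU) ((hform v).trans hV) ((hform w).trans hWe) ((hform p).trans he)
  · rintro (rfl | rfl | rfl)
    · exact hU
    · exact hV
    · exact hWe

lemma cr_rot (x y : α → ℝ) (p q r : α) : cr x y p q r = cr x y q r p := by unfold cr; ring

lemma cr_swap (x y : α → ℝ) (p q r : α) : cr x y p q r = -cr x y p r q := by unfold cr; ring

/-- If the turns from `q` to `r` and from `q` to `s` about `p` are counterclockwise, where `q` and `s`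
lie on the same side of the vertical line through `p` and `r` on the other side, then `s` lies in
the angle `q p r`. -/
lemma cr_mid_left {x y : α → ℝ} {p q r s : α} (hqr : 0 < cr x y p q r) (hqs : 0 < cr x y p q s)
    (h : (x q < x p ∧ x s < x p ∧ x p < x r) ∨ (x p < x q ∧ x p < x s ∧ x r < x p)) :
    0 < cr x y p s r := by
  have key : cr x y p s r * (x q - x p) =
      cr x y p q r * (x s - x p) - cr x y p q s * (x r - x p) := by unfold cr; ring
  rcases h with ⟨h1, h2, h3⟩ | ⟨h1, h2, h3⟩
  · have := mul_neg_of_pos_of_neg hqr (sub_neg.2 h2)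
    have := mul_pos hqs (sub_pos.2 h3)
    by_contra! hc
    have := mul_nonneg_of_nonpos_of_nonpos hc (sub_neg.2 h1).le
    linarith
  · have := mul_pos hqr (sub_pos.2 h2)
    have := mul_neg_of_pos_of_neg hqs (sub_neg.2 h3)
    by_contra! hc
    have := mul_nonpos_of_nonpos_of_nonneg hc (sub_pos.2 h1).le
    linarith

lemma cr_mid_right {x y : α → ℝ} {p q r s : α} (hqr : 0 < cr x y p q r) (hsr : 0 < cr x y p s r)
    (h : (x q < x p ∧ x p < x s ∧ x p < x r) ∨ (x p < x q ∧ x s < x p ∧ x r < x p)) :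
    0 < cr x y p q s := by
  have key : cr x y p q s * (x r - x p) =
      cr x y p q r * (x s - x p) - cr x y p s r * (x q - x p) := by unfold cr; ring
  rcases h with ⟨h1, h2, h3⟩ | ⟨h1, h2, h3⟩
  · have := mul_pos hqr (sub_pos.2 h2)
    have := mul_neg_of_pos_of_neg hsr (sub_neg.2 h1)
    by_contra! hc
    have := mul_nonpos_of_nonpos_of_nonneg hc (sub_pos.2 h3).le
    linarith
  · have := mul_neg_of_pos_of_neg hqr (sub_neg.2 h2)
    have := mul_pos hsr (sub_pos.2 h1)
    by_contra! hc
    have := mul_nonneg_of_nonpos_of_nonpos hc (sub_neg.2 h3).le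
    linarith

/-- A finite set of points in space has at most `3 |P| - 6` lower hull edges if its projection to
the plane has distinct `x`-coordinates and no collinear triple, and no four points are coplanar.
Each edge `u v`, with `u` to the left of `v`, is charged to a vertex, according to the apex `w` of
the face above it:
* to `w`, if `w` lies between `u` and `v` in `x`-order;
* to `v`, if `w` lies to the right of `v`, or if there is no such face;
* to `u`, if `w` lies to the left of `u`.
Each of these three rules charges a vertex at most once. -/
lemma card_edges_le [DecidableEq α] {P : Finset α} {x y z : α → ℝ}
    (hx : ∀ p ∈ P, ∀ q ∈ P, x p = x q → p = q)
    (hcol : ∀ p ∈ P, ∀ q ∈ P, ∀ r ∈ P, p ≠ q → p ≠ r → q ≠ r → cr x y p q r ≠ 0)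
    (hcop : ∀ a b c : ℝ, ∀ p ∈ P, ∀ q ∈ P, ∀ r ∈ P, ∀ s ∈ P, p ≠ q → p ≠ r → q ≠ r →
      p ≠ s → q ≠ s → r ≠ s → a + b * x p + c * y p = z p → a + b * x q + c * y q = z q →
      a + b * x r + c * y r = z r → a + b * x s + c * y s ≠ z s)
    (hP : 3 ≤ P.card) (E : Finset (α × α))
    (hE : ∀ e ∈ E, e.1 ∈ P ∧ e.2 ∈ P ∧ x e.1 < x e.2 ∧ IsFace P x y z {e.1, e.2}) :
    E.card + 6 ≤ 3 * P.card := by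
  classical
  have hPne : P.Nonempty := Finset.card_pos.1 (by omega)
  obtain ⟨l, hl, hlmin⟩ := Finset.exists_min_image P x hPne
  obtain ⟨r, hr, hrmax⟩ := Finset.exists_max_image P x hPne
  let RA : α × α → α → Prop := fun e w =>
    x e.1 < x w ∧ x w < x e.2 ∧ 0 < cr x y e.1 e.2 w ∧ IsFace P x y z {e.1, e.2, w}
  let RB : α × α → Prop := fun e => (∀ w ∈ P, cr x y e.1 e.2 w ≤ 0) ∨
    ∃ w ∈ P, x e.2 < x w ∧ 0 < cr x y e.1 e.2 w ∧ IsFace P x y z {e.1, e.2, w}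
  let RC : α × α → Prop := fun e =>
    ∃ w ∈ P, x w < x e.1 ∧ 0 < cr x y e.1 e.2 w ∧ IsFace P x y z {e.1, e.2, w}
  let EA := E.filter fun e => ∃ w ∈ P, RA e w
  let EB := E.filter RB
  let EC := E.filter RC
  have hcover : E ⊆ EA ∪ (EB ∪ EC) := by
    rintro ⟨u, v⟩ he
    obtain ⟨hu, hv, huv, hf⟩ := hE _ he
    simp only at hu hv huv hf
    have huv' : u ≠ v := fun h => huv.ne (by rw [h])
    simp only [EA, EB, EC, Finset.mem_union, Finset.mem_filter, he, true_and]
    rcases hf.apex hcop hu hv huv' with h | ⟨w, hw, hwc, hwf⟩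
    · exact Or.inr (Or.inl (Or.inl h))
    · have hwu : x w ≠ x u := fun h => by
        rw [hx w hw u hu h] at hwc; simp [cr] at hwc
      have hwv : x w ≠ x v := fun h => by
        rw [hx w hw v hv h, cr_rot] at hwc; simp [cr] at hwc
      rcases lt_or_gt_of_ne hwu with h1 | h1
      · exact Or.inr (Or.inr ⟨w, hw, h1, hwc, hwf⟩)
      · rcases lt_or_gt_of_ne hwv with h2 | h2
        · exact Or.inl ⟨w, hw, h1, h2, hwc, hwf⟩
        · exact Or.inr (Or.inl (Or.inr ⟨w, hw, h2, hwc, hwf⟩))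
  -- the first rule: of two faces hanging below `w`, one has an edge inside the angle of the other
  have hAinj : ∀ (w : α), w ∈ P → ∀ e ∈ E, ∀ e' ∈ E, RA e w → RA e' w →
      e.1 = e'.1 ∧ e.2 = e'.2 := by
    have aux : ∀ (w : α), w ∈ P → ∀ e ∈ E, ∀ e' ∈ E, RA e w → RA e' w →
        ¬ 0 < cr x y w e.1 e'.1 ∧ ¬ 0 < cr x y w e'.2 e.2 := by
      rintro w hw ⟨u, v⟩ he ⟨u', v'⟩ he' ⟨h1, h2, h3, h4⟩ ⟨h1', h2', h3', h4'⟩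
      obtain ⟨hu, hv, -⟩ := hE _ he
      obtain ⟨hu', hv', -⟩ := hE _ he'
      simp only at *
      rw [cr_rot, cr_rot] at h3
      constructor
      · intro hc
        have := (h4.cone h4' hw hu hv hu' (by simp) (by simp) (by simp) (by simp) (by simp) h3 hc
          (cr_mid_left h3 hc (Or.inl ⟨h1, h1', h2⟩))).1
        rcases this with rfl | rfl | rfl
        · simp [cr, mul_comm] at hc
        · linarith
        · linarith
      · intro hc
        have := (h4.cone h4' hw hu hv hv' (by simp) (by simp) (by simp) (by simp) (by simp) h3
          (cr_mid_right h3 hc (Or.inl ⟨h1, h2', h2⟩)) hc).2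
        rcases this with rfl | rfl | rfl
        · linarith
        · simp [cr, mul_comm] at hc
        · linarith
    intro w hw e he e' he' hA hA'
    obtain ⟨hu, hv, -⟩ := hE _ he
    obtain ⟨hu', hv', -⟩ := hE _ he'
    have a1 := aux w hw e he e' he' hA hA'
    have a2 := aux w hw e' he' e he hA' hA
    have ne : ∀ {p q : α}, x p ≠ x q → p ≠ q := fun h h' => h (by rw [h'])
    constructor
    · by_contra hne
      have := hcol w hw _ hu _ hu' (ne hA.1.ne') (ne hA'.1.ne') hne
      have h5 := cr_swap x y w e.1 e'.1
      rcases lt_or_gt_of_ne this with h | h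
      · exact a2.1 (by linarith)
      · exact a1.1 h
    · by_contra hne
      have := hcol w hw _ hv _ hv' (ne hA.2.1.ne) (ne hA'.2.1.ne) hne
      have h5 := cr_swap x y w e.2 e'.2
      rcases lt_or_gt_of_ne this with h | h
      · exact a1.2 (by linarith)
      · exact a2.2 h
  -- an edge charged by the second rule is the topmost edge going left from its right endpoint
  have hBtop : ∀ u u' v, (u, v) ∈ E → (u', v) ∈ E → RB (u, v) → ¬ 0 < cr x y u v u' := by
    intro u u' v he he' hB hc
    obtain ⟨hu, hv, huv, -⟩ := hE _ he
    obtain ⟨hu', -, huv', hf'⟩ := hE _ he'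
    simp only at *
    rcases hB with hB | ⟨w, hw, h1, h2, h3⟩
    · exact absurd (hB u' hu') (not_le.2 hc)
    · simp only at *
      rw [cr_rot] at h2
      have hc' : 0 < cr x y v u' u := by rwa [cr_rot] at hc
      have := (h3.cone hf' hv hw hu hu' (by simp) (by simp) (by simp) (by simp) (by simp) h2
        (cr_mid_right h2 hc' (Or.inr ⟨h1, huv', huv⟩)) hc').2
      rcases this with rfl | rfl
      · simp [cr] at hc
      · exact lt_irrefl _ huv
  -- an edge charged by the third rule is the topmost edge going right from its left endpoint
  have hCtop : ∀ u v v', (u, v) ∈ E → (u, v') ∈ E → RC (u, v) → ¬ 0 < cr x y u v v' := by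
    intro u v v' he he' hC hc
    obtain ⟨hu, hv, huv, -⟩ := hE _ he
    obtain ⟨-, hv', huv', hf'⟩ := hE _ he'
    obtain ⟨w, hw, h1, h2, h3⟩ := hC
    simp only at *
    have := (h3.cone hf' hu hv hw hv' (by simp) (by simp) (by simp) (by simp) (by simp) h2
      hc (cr_mid_left h2 hc (Or.inr ⟨huv, huv', h1⟩))).1
    rcases this with rfl | rfl
    · exact lt_irrefl _ huv
    · simp [cr, mul_comm] at hc
  have hB : EB.card ≤ (P.erase l).card := by
    refine Finset.card_le_card_of_injOn Prod.snd ?_ ?_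
    · intro e he
      have heE := (Finset.mem_filter.1 he).1
      obtain ⟨hu, hv, huv, -⟩ := hE _ heE
      simp only [Finset.coe_erase, Set.mem_sdiff, Finset.mem_coe, Set.mem_singleton_iff]
      refine ⟨hv, fun h => ?_⟩
      have := hlmin _ hu
      rw [h] at huv
      linarith
    · rintro ⟨u, v⟩ he ⟨u', v'⟩ he' hvv
      simp only at hvv
      subst hvv
      have he := Finset.mem_filter.1 he
      have he' := Finset.mem_filter.1 he'
      obtain ⟨hu, hv, huv, -⟩ := hE _ he.1
      obtain ⟨hu', -, huv', -⟩ := hE _ he'.1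
      simp only at *
      by_contra hne
      have hne' : u ≠ u' := fun h => hne (by rw [h])
      have h0 := hcol u hu v hv u' hu' (fun h => huv.ne (by rw [h])) hne'
        (fun h => huv'.ne (by rw [h]))
      have h5 : cr x y u' v u = - cr x y u v u' := by unfold cr; ring
      have := hBtop u u' v he.1 he'.1 he.2
      have := hBtop u' u v he'.1 he.1 he'.2
      rcases lt_or_gt_of_ne h0 with h | h
      · exact this (by linarith)
      · contradiction
  have hC : ∀ Z : Finset α, (∀ e ∈ EC, e.1 ∈ Z) → EC.card ≤ Z.card := by
    intro Z hZ
    refine Finset.card_le_card_of_injOn Prod.fst (fun e he => hZ e he) ?_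
    rintro ⟨u, v⟩ he ⟨u', v'⟩ he' hvv
    simp only at hvv
    subst hvv
    have he := Finset.mem_filter.1 he
    have he' := Finset.mem_filter.1 he'
    obtain ⟨hu, hv, huv, -⟩ := hE _ he.1
    obtain ⟨-, hv', huv', -⟩ := hE _ he'.1
    simp only at *
    by_contra hne
    have hne' : v ≠ v' := fun h => hne (by rw [h])
    have h0 := hcol u hu v hv v' hv' (fun h => huv.ne (by rw [h]))
      (fun h => huv'.ne (by rw [h])) hne'
    have h5 := cr_swap x y u v v'
    have := hCtop u v v' he.1 he'.1 he.2
    have := hCtop u v' v he'.1 he.1 he'.2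
    rcases lt_or_gt_of_ne h0 with h | h
    · exact this (by linarith)
    · contradiction
  have hA : ∀ Z : Finset α, (∀ e ∈ E, ∀ w ∈ P, RA e w → w ∈ Z) → Z ⊆ P → EA.card ≤ Z.card := by
    intro Z hZ hZP
    refine Finset.card_le_card_of_forall_subsingleton RA ?_ ?_
    · intro e he
      obtain ⟨heE, w, hw, hR⟩ := Finset.mem_filter.1 he
      exact ⟨w, hZ e heE w hw hR, hR⟩
    · rintro w hw e ⟨he, hR⟩ e' ⟨he', hR'⟩
      exact Prod.ext_iff.2 (hAinj w (hZP hw) e (Finset.mem_filter.1 he).1 e'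
        (Finset.mem_filter.1 he').1 hR hR')
  have hAZ : ∀ e ∈ E, ∀ w ∈ P, RA e w → w ∈ (P.erase l).erase r := by
    intro e he w hw hR
    obtain ⟨hu, hv, -⟩ := hE _ he
    simp only [Finset.mem_erase]
    refine ⟨?_, ?_, hw⟩
    · rintro rfl; linarith [hrmax _ hv, hR.2.1]
    · rintro rfl; linarith [hlmin _ hu, hR.1]
  have hCZ : ∀ e ∈ EC, e.1 ∈ (P.erase l).erase r := by
    intro e he
    obtain ⟨heE, w, hw, hR, -⟩ := Finset.mem_filter.1 he
    obtain ⟨hu, hv, huv, -⟩ := hE _ heE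
    simp only [Finset.mem_erase]
    refine ⟨?_, ?_, hu⟩
    · intro h; rw [h] at huv; linarith [hrmax _ hv]
    · intro h; rw [h] at hR; linarith [hlmin _ hw]
  -- a third point, which exists as `3 ≤ |P|`, shows that `l ≠ r`
  have hex : ∃ p ∈ P, p ≠ l ∧ p ≠ r := by
    have : 0 < ((P.erase l).erase r).card := by
      have h1 := Finset.pred_card_le_card_erase (s := P) (a := l)
      have h2 := Finset.pred_card_le_card_erase (s := P.erase l) (a := r)
      omega
    obtain ⟨p, hp⟩ := Finset.card_pos.1 this
    simp only [Finset.mem_erase] at hp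
    exact ⟨p, hp.2.2, hp.2.1, hp.1⟩
  obtain ⟨p, hp, hpl, hpr⟩ := hex
  have hlr : x l < x r := lt_of_le_of_ne (hlmin r hr) fun h => by
    have hpe : x p = x l := le_antisymm (by rw [h]; exact hrmax p hp) (hlmin p hp)
    exact hpl (hx p hp l hl hpe)
  have hlr' : r ≠ l := fun h => hlr.ne (by rw [h])
  have cl : (P.erase l).card = P.card - 1 := Finset.card_erase_of_mem hl
  have clr : ((P.erase l).erase r).card = P.card - 2 := by
    rw [Finset.card_erase_of_mem (by simp [hlr', hr]), cl]; omega
  have crl : cr x y l r l = 0 := by simp [cr]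
  have crr : cr x y l r r = 0 := by simp [cr, mul_comm]
  have hcard : E.card ≤ EA.card + (EB.card + EC.card) :=
    (Finset.card_le_card hcover).trans ((Finset.card_union_le _ _).trans
      (Nat.add_le_add_left (Finset.card_union_le _ _) _))
  -- `cr l r` is an affine function, so a point extremal for it is not between two other points
  have hident : ∀ q v w, (x r - x l) * cr x y q v w =
      (x v - x q) * (cr x y l r w - cr x y l r q) -
      (x w - x q) * (cr x y l r v - cr x y l r q) := by
    intro q v w; unfold cr; ring
  -- besides `l` and `r`, a point `q` of the hull escapes the first or the third rule
  by_cases hup : ∃ p ∈ P, 0 < cr x y l r p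
  · obtain ⟨p, hp, hpc⟩ := hup
    obtain ⟨q, hq, hqmax⟩ := Finset.exists_max_image P (cr x y l r) hPne
    have hqc : 0 < cr x y l r q := lt_of_lt_of_le hpc (hqmax p hp)
    have hql : q ≠ l := by rintro rfl; linarith
    have hqr : q ≠ r := by rintro rfl; linarith
    have hCq : EC.card ≤ (((P.erase l).erase r).erase q).card := by
      refine hC _ fun e he => Finset.mem_erase.2 ⟨?_, hCZ e he⟩
      rintro rfl
      obtain ⟨heE, w, hw, hR, hwc, -⟩ := Finset.mem_filter.1 he
      obtain ⟨hu, hv, huv, -⟩ := hE _ heE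
      have h1 := mul_nonneg (sub_pos.2 huv).le (sub_nonneg.2 (hqmax w hw))
      have h2 := mul_nonneg (sub_pos.2 hR).le (sub_nonneg.2 (hqmax _ hv))
      have h3 := mul_pos (sub_pos.2 hlr) hwc
      rw [hident] at h3
      linarith
    rw [Finset.card_erase_of_mem (by simp [hql, hqr, hq]), clr] at hCq
    have h1 := hA _ hAZ ((Finset.erase_subset _ _).trans (Finset.erase_subset _ _))
    rw [clr] at h1
    rw [cl] at hB
    omega
  · push Not at hup
    obtain ⟨q, hq, hqmin⟩ := Finset.exists_min_image P (cr x y l r) hPne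
    have hpc : cr x y l r p < 0 :=
      lt_of_le_of_ne (hup p hp) (hcol l hl r hr p hp hlr'.symm hpl.symm hpr.symm)
    have hqc : cr x y l r q < 0 := lt_of_le_of_lt (hqmin p hp) hpc
    have hql : q ≠ l := by rintro rfl; linarith
    have hqr : q ≠ r := by rintro rfl; linarith
    have hAq : EA.card ≤ (((P.erase l).erase r).erase q).card := by
      refine hA _ (fun e he w hw hR => Finset.mem_erase.2 ⟨?_, hAZ e he w hw hR⟩)
        ((Finset.erase_subset _ _).trans
          ((Finset.erase_subset _ _).trans (Finset.erase_subset _ _)))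
      rintro rfl
      obtain ⟨hu, hv, huv, -⟩ := hE _ he
      obtain ⟨h1, h2, h3, -⟩ := hR
      rw [cr_rot, cr_rot] at h3
      have h4 := mul_nonneg (sub_pos.2 h1).le (sub_nonneg.2 (hqmin _ hv))
      have h5 := mul_nonneg (sub_pos.2 h2).le (sub_nonneg.2 (hqmin _ hu))
      have h6 := mul_pos (sub_pos.2 hlr) h3
      rw [hident] at h6
      linarith
    rw [Finset.card_erase_of_mem (by simp [hql, hqr, hq]), clr] at hAq
    have h1 := hC _ hCZ
    rw [clr] at h1
    rw [cl] at hB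
    omega

end LowerHull

/-! ### The Delaunay graph -/

/-- Some disk contains `u` and `v` but no other point of `Q`: in general position these pairs are
the edges of the Delaunay graph of `Q`. -/
def DiskSep (Q : Finset Pt) (u v : Pt) : Prop :=
  ∃ (c : Pt) (r : ℝ), u ∈ closedBall c r ∧ v ∈ closedBall c r ∧
    ∀ p ∈ Q, p ∈ closedBall c r → p = u ∨ p = v

lemma DiskSep.symm {Q : Finset Pt} {u v : Pt} (h : DiskSep Q u v) : DiskSep Q v u := by
  obtain ⟨c, r, hu, hv, h⟩ := h
  exact ⟨c, r, hv, hu, fun p hp hpc => (h p hp hpc).symm⟩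

lemma dist_sq (p c : Pt) : dist p c ^ 2 = (p 0 - c 0) ^ 2 + (p 1 - c 1) ^ 2 := by
  rw [EuclideanSpace.dist_eq, Real.sq_sqrt (Finset.sum_nonneg fun _ _ => sq_nonneg _)]
  simp [Fin.sum_univ_two, Real.dist_eq, sq_abs]

/-- A separable pair is a lower hull edge of the lift of `Q` to the paraboloid. The plane
coordinates are sheared by `t`, which does not affect affine functions. -/
lemma DiskSep.isFace {Q : Finset Pt} {u v : Pt} (huv : u ≠ v) (h : DiskSep Q u v) (t : ℝ) :
    IsFace Q (fun p => p 0 + t * p 1) (fun p => p 1) (fun p => p 0 ^ 2 + p 1 ^ 2) {u, v} := by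
  obtain ⟨c, r, hu, hv, h⟩ := h
  wlog hle : dist v c ≤ dist u c generalizing u v
  · rw [Set.pair_comm]
    exact this huv.symm hv hu (fun p hp hpc => (h p hp hpc).symm) (le_of_not_ge hle)
  have hne : ∀ p : Pt, p ≠ u → 0 < (p 0 - u 0) ^ 2 + (p 1 - u 1) ^ 2 := by
    intro p hp
    rw [← dist_sq]
    exact pow_pos (dist_pos.2 hp) 2
  have hD : ∀ p : Pt, dist p c ^ 2 = dist u c ^ 2 + ((p 0 - u 0) ^ 2 + (p 1 - u 1) ^ 2)
      - 2 * ((p 0 - u 0) * (c 0 - u 0) + (p 1 - u 1) * (c 1 - u 1)) := by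
    intro p
    rw [dist_sq, dist_sq]
    ring
  set I : Pt → ℝ := fun p => (p 0 - u 0) * (c 0 - u 0) + (p 1 - u 1) * (c 1 - u 1) with hI
  set N : Pt → ℝ := fun p => (p 0 - u 0) ^ 2 + (p 1 - u 1) ^ 2 with hN
  have hNv : 0 < N v := hne v huv.symm
  have hIv : N v ≤ 2 * I v := by
    have h1 := hD v
    have h2 := pow_le_pow_left₀ dist_nonneg hle 2
    simp only [hN, hI]
    linarith
  -- the disk is shrunk towards `u` by the factor `s`, which puts `v` on its boundary
  set s : ℝ := N v / (2 * I v) with hs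
  have hIpos : 0 < 2 * I v := by linarith
  have hs0 : 0 < s := div_pos hNv hIpos
  have hs1 : s ≤ 1 := (div_le_one hIpos).2 hIv
  have hsv : s * (2 * I v) = N v := div_mul_cancel₀ _ hIpos.ne'
  refine ⟨-(u 0 ^ 2 + u 1 ^ 2) - 2 * s * (u 0 * (c 0 - u 0) + u 1 * (c 1 - u 1)),
    2 * u 0 + 2 * s * (c 0 - u 0),
    2 * u 1 + 2 * s * (c 1 - u 1) - t * (2 * u 0 + 2 * s * (c 0 - u 0)), ?_⟩
  intro p hp
  have hform : -(u 0 ^ 2 + u 1 ^ 2) - 2 * s * (u 0 * (c 0 - u 0) + u 1 * (c 1 - u 1)) +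
      (2 * u 0 + 2 * s * (c 0 - u 0)) * (p 0 + t * p 1) +
      (2 * u 1 + 2 * s * (c 1 - u 1) - t * (2 * u 0 + 2 * s * (c 0 - u 0))) * p 1 =
      p 0 ^ 2 + p 1 ^ 2 - (N p - s * (2 * I p)) := by
    simp only [hN, hI]; ring
  simp only [hform]
  have key : 0 ≤ N p - s * (2 * I p) ∧ (N p - s * (2 * I p) = 0 ↔ p = u ∨ p = v) := by
    by_cases hpu : p = u
    · subst hpu
      simp [hN, hI]
    by_cases hpv : p = v
    · subst hpv
      simp [hsv]
    have hpos : 0 < N p - s * (2 * I p) := by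
      have h1 : r < dist p c := by
        by_contra! hc
        rcases h p hp (mem_closedBall.2 hc) with h' | h' <;> contradiction
      have h2 : dist u c < dist p c := lt_of_le_of_lt (mem_closedBall.1 hu) h1
      have h3 := pow_lt_pow_left₀ h2 dist_nonneg two_ne_zero
      have h4 : 2 * I p < N p := by
        have := hD p
        simp only [hN, hI]
        linarith
      have h5 : 0 < N p := hne p hpu
      rcases le_or_gt 0 (2 * I p) with h6 | h6
      · have := mul_le_mul_of_nonneg_right hs1 h6
        linarith
      · have := mul_neg_of_pos_of_neg hs0 h6
        linarith
    refine ⟨hpos.le, fun h0 => absurd h0 hpos.ne', fun h0 => ?_⟩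
    rcases h0 with h0 | h0 <;> contradiction
  refine ⟨by linarith [key.1], ?_⟩
  rw [Set.mem_insert_iff, Set.mem_singleton_iff, ← key.2]
  constructor <;> intro h0 <;> linarith

/-- A shear that gives the points of `Q` distinct first coordinates. -/
lemma exists_shear (Q : Finset Pt) :
    ∃ t : ℝ, ∀ p ∈ Q, ∀ q ∈ Q, p 0 + t * p 1 = q 0 + t * q 1 → p = q := by
  classical
  obtain ⟨t, ht⟩ := Infinite.exists_notMem_finset
    ((Q ×ˢ Q).image fun e : Pt × Pt => -(e.1 0 - e.2 0) / (e.1 1 - e.2 1))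
  refine ⟨t, fun p hp q hq h => ?_⟩
  have h1 : p 1 = q 1 := by
    by_contra hne
    refine ht (Finset.mem_image.2 ⟨(p, q), Finset.mk_mem_product hp hq, ?_⟩)
    rw [div_eq_iff (sub_ne_zero.2 hne)]
    linarith
  have h0 : p 0 = q 0 := by rw [h1] at h; linarith
  ext i
  fin_cases i
  · exact h0
  · exact h1

/-- The Delaunay graph of `m ≥ 3` points has at most `3 m - 6` edges (`2 (3 m - 6)` ordered
pairs). -/
lemma card_sep_le (Q : Finset Pt) (hQ : GenPos (Q : Set Pt)) (h3 : 3 ≤ Q.card)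
    (F : Finset (Pt × Pt)) (hF : ∀ e ∈ F, e.1 ∈ Q ∧ e.2 ∈ Q ∧ e.1 ≠ e.2 ∧ DiskSep Q e.1 e.2) :
    F.card + 12 ≤ 6 * Q.card := by
  classical
  obtain ⟨t, ht⟩ := exists_shear Q
  set x : Pt → ℝ := fun p => p 0 + t * p 1 with hxdef
  set y : Pt → ℝ := fun p => p 1 with hydef
  set z : Pt → ℝ := fun p => p 0 ^ 2 + p 1 ^ 2 with hzdef
  have hcol : ∀ p ∈ Q, ∀ q ∈ Q, ∀ r ∈ Q, p ≠ q → p ≠ r → q ≠ r → cr x y p q r ≠ 0 := by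
    intro p hp q hq r hr hpq hpr hqr h0
    refine hQ.1 {p, q, r} ?_ (Set.ncard_eq_three.2 ⟨p, q, r, hpq, hpr, hqr, rfl⟩) ?_
    · simp [Set.insert_subset_iff, hp, hq, hr]
    · rw [collinear_iff_of_mem (p₀ := p) (by simp)]
      have hne : x q - x p ≠ 0 := fun h => hpq (ht p hp q hq (by simp only [hxdef] at h; linarith))
      refine ⟨q - p, ?_⟩
      rintro w (rfl | rfl | rfl)
      · exact ⟨0, by simp⟩
      · exact ⟨1, by simp⟩
      · refine ⟨(x w - x p) / (x q - x p), ?_⟩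
        have hy : w 1 = (x w - x p) / (x q - x p) * (q 1 - p 1) + p 1 := by
          field_simp
          simp only [cr, hydef] at h0
          linarith
        have hx' : x w = (x w - x p) / (x q - x p) * (x q - x p) + x p := by
          rw [div_mul_cancel₀ _ hne]; ring
        have hx0 : w 0 = (x w - x p) / (x q - x p) * (q 0 - p 0) + p 0 := by
          have e1 : x q - x p = (q 0 - p 0) + t * (q 1 - p 1) := by simp only [hxdef]; ring
          have e2 : w 0 = x w - t * w 1 := by simp only [hxdef]; ring
          have e3 : p 0 = x p - t * p 1 := by simp only [hxdef]; ring
          generalize (x w - x p) / (x q - x p) = lam at *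
          rw [e1] at hx'
          rw [e2, hy, hx', e3]
          ring
        ext i
        fin_cases i
        · simpa using hx0
        · simpa using hy
  have hcop : ∀ a b c : ℝ, ∀ p ∈ Q, ∀ q ∈ Q, ∀ r ∈ Q, ∀ s ∈ Q, p ≠ q → p ≠ r → q ≠ r →
      p ≠ s → q ≠ s → r ≠ s → a + b * x p + c * y p = z p → a + b * x q + c * y q = z q →
      a + b * x r + c * y r = z r → a + b * x s + c * y s ≠ z s := by
    intro a b c p hp q hq r hr s hs hpq hpr hqr hps hqs hrs ep eq er es
    refine hQ.2 {p, q, r, s} ?_ ?_ ?_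
    · simp [Set.insert_subset_iff, hp, hq, hr, hs]
    · have : ({p, q, r, s} : Set Pt) = (({p, q, r, s} : Finset Pt) : Set Pt) := by simp
      rw [this, Set.ncard_coe_finset, Finset.card_eq_of_equiv_fin]
      exact Finset.equivFinOfCardEq (by
        rw [Finset.card_insert_of_notMem, Finset.card_insert_of_notMem,
          Finset.card_insert_of_notMem, Finset.card_singleton] <;> simp [*])
    · -- the plane `z = a + b x + c y` cuts the paraboloid above the circle with this center
      refine ⟨!₂[b / 2, (c + t * b) / 2],
        Real.sqrt (a + (b / 2) ^ 2 + ((c + t * b) / 2) ^ 2), ?_⟩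
      have aux : ∀ w : Pt, a + b * x w + c * y w = z w →
          dist w !₂[b / 2, (c + t * b) / 2] =
            Real.sqrt (a + (b / 2) ^ 2 + ((c + t * b) / 2) ^ 2) := by
        intro w hw
        rw [← Real.sqrt_sq (dist_nonneg (x := w)), dist_sq]
        congr 1
        simp only [hxdef, hydef, hzdef] at hw
        simp
        linarith
      rintro w (rfl | rfl | rfl | rfl)
      · exact aux _ ep
      · exact aux _ eq
      · exact aux _ er
      · exact aux _ es
  have h1 := card_edges_le ht hcol hcop h3 (F.filter fun e => x e.1 < x e.2) (by
    intro e he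
    rw [Finset.mem_filter] at he
    obtain ⟨a1, a2, a3, a4⟩ := hF e he.1
    exact ⟨a1, a2, he.2, a4.isFace a3 t⟩)
  have h2 := card_edges_le ht hcol hcop h3
    ((F.filter fun e => ¬ x e.1 < x e.2).image Prod.swap) (by
    intro e he
    obtain ⟨e', he', rfl⟩ := Finset.mem_image.1 he
    rw [Finset.mem_filter] at he'
    obtain ⟨a1, a2, a3, a4⟩ := hF e' he'.1
    refine ⟨a2, a1, lt_of_le_of_ne (not_lt.1 he'.2) fun h => a3 (ht _ a1 _ a2 h.symm),
      a4.symm.isFace a3.symm t⟩)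
  rw [Finset.card_image_of_injective _ Prod.swap_injective] at h2
  have h4 := Finset.card_filter_add_card_filter_not (s := F) (fun e => x e.1 < x e.2)
  omega

/-! ### Averaging over the 8-subsets -/

lemma card_supersets_le {β : Type*} [DecidableEq β] (S T : Finset β) (k : ℕ) (hT : T ⊆ S) :
    ((S.powersetCard k).filter fun Q => T ⊆ Q).card ≤
      (S.card - T.card).choose (k - T.card) := by
  rw [← Finset.card_sdiff_of_subset hT, ← Finset.card_powersetCard]
  refine Finset.card_le_card_of_injOn (fun Q => Q \ T) ?_ ?_
  · intro Q hQ
    simp only [Finset.coe_filter, Finset.mem_powersetCard, Set.mem_ofPred_eq] at hQ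
    simp only [Finset.mem_coe, Finset.mem_powersetCard]
    exact ⟨Finset.sdiff_subset_sdiff hQ.1.1 (subset_refl _), by
      rw [Finset.card_sdiff_of_subset hQ.2, hQ.1.2]⟩
  · intro Q hQ Q' hQ' h
    simp only [Finset.coe_filter, Set.mem_ofPred_eq] at hQ hQ'
    simp only at h
    rw [← Finset.sdiff_union_of_subset hQ.2, ← Finset.sdiff_union_of_subset hQ'.2, h]

lemma GenPos.mono {A B : Set Pt} (h : GenPos B) (hAB : A ⊆ B) : GenPos A :=
  ⟨fun T hT => h.1 T (hT.trans hAB), fun T hT => h.2 T (hT.trans hAB)⟩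

open Classical in
/-- Some pair is inseparable in at least `5/14` of the `8`-subsets containing it: each `8`-subset
has at most `36` separable ordered pairs, out of `56`. -/
lemma exists_pair (S : Finset Pt) (hS : GenPos (S : Set Pt)) (h8 : 8 ≤ S.card) :
    ∃ u ∈ S, ∃ v ∈ S, u ≠ v ∧ 5 * (S.card - 2).choose 6 ≤
      14 * {Q ∈ S.powersetCard 8 | u ∈ Q ∧ v ∈ Q ∧ ¬ DiskSep Q u v}.card := by
  classical
  by_contra! hcon
  let R : Finset Pt → Pt × Pt → Prop := fun Q e => e.1 ∈ Q ∧ e.2 ∈ Q ∧ ¬ DiskSep Q e.1 e.2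
  have hdc := Finset.sum_card_bipartiteAbove_eq_sum_card_bipartiteBelow
    (s := S.powersetCard 8) (t := S.offDiag) R
  have hlow : ∀ Q ∈ S.powersetCard 8, 20 ≤ (S.offDiag.bipartiteAbove R Q).card := by
    intro Q hQ
    rw [Finset.mem_powersetCard] at hQ
    have h1 := card_sep_le Q (hS.mono (by exact_mod_cast hQ.1)) (by omega)
      (Q.offDiag.filter fun e => DiskSep Q e.1 e.2) (by
        intro e he
        simp only [Finset.mem_filter, Finset.mem_offDiag] at he
        tauto)
    have h2 := Finset.card_filter_add_card_filter_not (s := Q.offDiag) (fun e => DiskSep Q e.1 e.2)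
    have h3 : (Q.offDiag.filter fun e => ¬ DiskSep Q e.1 e.2).card ≤
        (S.offDiag.bipartiteAbove R Q).card := by
      refine Finset.card_le_card fun e he => ?_
      simp only [Finset.mem_filter, Finset.mem_offDiag] at he
      simp only [Finset.bipartiteAbove, Finset.mem_filter, Finset.mem_offDiag, R]
      exact ⟨⟨hQ.1 he.1.1, hQ.1 he.1.2.1, he.1.2.2⟩, he.1.1, he.1.2.1, he.2⟩
    rw [Finset.offDiag_card, hQ.2] at h2
    omega
  have hsum1 := Finset.card_nsmul_le_sum _ _ _ hlow
  have hne : S.offDiag.Nonempty := by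
    rw [← Finset.card_pos, Finset.offDiag_card]
    have : S.card * 8 ≤ S.card * S.card := Nat.mul_le_mul_left _ h8
    omega
  have hsum2 : ∑ e ∈ S.offDiag, 14 * ((S.powersetCard 8).bipartiteBelow R e).card <
      ∑ e ∈ S.offDiag, 5 * (S.card - 2).choose 6 := by
    refine Finset.sum_lt_sum_of_nonempty hne fun e he => ?_
    rw [Finset.mem_offDiag] at he
    exact hcon e.1 he.1 e.2 he.2.1 he.2.2
  rw [← Finset.mul_sum, ← hdc, Finset.sum_const, Finset.offDiag_card, smul_eq_mul] at hsum2
  rw [Finset.card_powersetCard, smul_eq_mul] at hsum1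
  obtain ⟨m, hm⟩ : ∃ m, S.card = m + 2 := ⟨S.card - 2, by omega⟩
  rw [hm] at hsum1 hsum2
  have c1 := Nat.add_one_mul_choose_eq (m + 1) 7
  have c2 := Nat.add_one_mul_choose_eq m 6
  have e1 : (m + 2) * (m + 2) - (m + 2) = (m + 2) * (m + 1) := by
    rw [Nat.sub_eq_iff_eq_add (by nlinarith)]; ring
  have e2 : m + 2 - 2 = m := by omega
  rw [e1, e2] at hsum2
  have e3 : (m + 2) * (m + 1) * (5 * m.choose 6) = 280 * (m + 2).choose 8 := by
    have : (m + 2) * (m + 1) * (5 * m.choose 6) = 5 * (m + 2) * ((m + 1) * m.choose 6) := by ring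
    rw [this, c2]
    have : 5 * (m + 2) * ((m + 1).choose (6 + 1) * (6 + 1)) =
      35 * ((m + 1 + 1) * (m + 1).choose 7) := by ring
    rw [this, c1]
    ring
  rw [e3] at hsum2
  omega

/-- For every `n ≥ 8` and every set `S` of `n` points in the plane in general position,
there exist two distinct points `u, v ∈ S` such that every closed disk containing both
`u` and `v` contains at least `⌈5(n−2)/84⌉` points of `S` other than `u` and `v`. -/
theorem pi_lower_bound_5n_over_84 (n : ℕ) (hn : 8 ≤ n) (S : Set Pt)
    (hfin : S.Finite) (hcard : S.ncard = n) (hgp : GenPos S) :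
    ∃ u ∈ S, ∃ v ∈ S, u ≠ v ∧
      ∀ (c : Pt) (r : ℝ), 0 < r → u ∈ closedBall c r → v ∈ closedBall c r →
        ⌈5 * ((n : ℝ) - 2) / 84⌉ ≤ (((S \ {u, v}) ∩ closedBall c r).ncard : ℤ) := by
  classical
  obtain ⟨S, rfl⟩ := hfin.exists_finset_coe
  rw [Set.ncard_coe_finset] at hcard
  subst hcard
  obtain ⟨u, hu, v, hv, huv, hmain⟩ := exists_pair S hgp hn
  refine ⟨u, hu, v, hv, huv, ?_⟩
  intro c r _ huc hvc
  set K : Finset Pt := S.filter fun p => p ≠ u ∧ p ≠ v ∧ p ∈ closedBall c r with hK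
  have hKcard : ((↑S \ {u, v}) ∩ closedBall c r : Set Pt).ncard = K.card := by
    rw [← Set.ncard_coe_finset]
    congr 1
    ext p
    simp only [hK, Set.mem_inter_iff, Set.mem_sdiff, Set.mem_insert_iff, Set.mem_singleton_iff,
      Finset.coe_filter, Set.mem_ofPred_eq, Finset.mem_coe]
    tauto
  rw [hKcard]
  -- an `8`-subset in which `u, v` is inseparable has a further point in the disk
  have hsub : {Q ∈ S.powersetCard 8 | u ∈ Q ∧ v ∈ Q ∧ ¬ DiskSep Q u v} ⊆
      K.biUnion fun w => {Q ∈ S.powersetCard 8 | {u, v, w} ⊆ Q} := by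
    intro Q hQ
    rw [Finset.mem_filter] at hQ
    obtain ⟨hQS, huQ, hvQ, hns⟩ := hQ
    have : ∃ w ∈ Q, w ∈ closedBall c r ∧ w ≠ u ∧ w ≠ v := by
      by_contra! hc
      refine hns ⟨c, r, huc, hvc, fun p hp hpc => ?_⟩
      by_contra! h
      exact h.2 (hc p hp hpc h.1)
    obtain ⟨w, hwQ, hwc, hwu, hwv⟩ := this
    refine Finset.mem_biUnion.2 ⟨w, ?_, Finset.mem_filter.2 ⟨hQS, ?_⟩⟩
    · exact Finset.mem_filter.2 ⟨(Finset.mem_powersetCard.1 hQS).1 hwQ, hwu, hwv, hwc⟩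
    · simp [Finset.insert_subset_iff, huQ, hvQ, hwQ]
  have hle : {Q ∈ S.powersetCard 8 | u ∈ Q ∧ v ∈ Q ∧ ¬ DiskSep Q u v}.card ≤
      K.card * (S.card - 3).choose 5 := by
    refine (Finset.card_le_card hsub).trans (Finset.card_biUnion_le_card_mul _ _ _ ?_)
    intro w hw
    obtain ⟨hwS, hwu, hwv, -⟩ := Finset.mem_filter.1 hw
    have h3 : ({u, v, w} : Finset Pt).card = 3 :=
      Finset.card_eq_three.2 ⟨u, v, w, huv, hwu.symm, hwv.symm, rfl⟩
    have := card_supersets_le S {u, v, w} 8 (by simp [Finset.insert_subset_iff, hu, hv, hwS])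
    rwa [h3] at this
  obtain ⟨m, hm⟩ : ∃ m, S.card = m + 3 := ⟨S.card - 3, by omega⟩
  rw [hm] at hle hmain hn ⊢
  have e1 : m + 3 - 3 = m := by omega
  have e2 : m + 3 - 2 = m + 1 := by omega
  rw [e1] at hle
  rw [e2] at hmain
  have c1 := Nat.add_one_mul_choose_eq m 5
  have hpos : 0 < m.choose 5 := Nat.choose_pos (by omega)
  have hfinal : 5 * (m + 1) ≤ 84 * K.card := by
    refine Nat.le_of_mul_le_mul_right ?_ hpos
    calc 5 * (m + 1) * m.choose 5 = 6 * (5 * (m + 1).choose 6) := by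
          rw [mul_assoc, c1]; ring
      _ ≤ 6 * (14 * (K.card * m.choose 5)) :=
          Nat.mul_le_mul_left _ (hmain.trans (Nat.mul_le_mul_left _ hle))
      _ = 84 * K.card * m.choose 5 := by ring
  rw [Int.ceil_le, div_le_iff₀ (by norm_num)]
  have : (5 * ((m : ℝ) + 1)) ≤ 84 * K.card := by exact_mod_cast hfinal
  push_cast
  linarith
end
end

section
/- For every integer n ≥ 6 and every set S of n points in the Euclidean plane in general position, there exist two distinct points u, v ∈ S such that every closed disk containing both u and v contains at least ⌈n/5⌉ + 1 points of S. -/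
/-!
Lift each point `p` to `(p 0, p 1, |p|²)`, so that disks become half-spaces and the lifted points are
in convex position. An ordered triple `(u, v, w)` spans an oriented plane (an oriented circle); say
it is at level `j` if exactly `j` points of `S` lie on its positive side, i.e. have
`inCirc u v w x > 0`.

The number of ordered triples at level `j` depends only on `n = |S|`: it is `6 (j + 1) (n - j - 2)`
(`card_levelTriples`). For `j = 0` each supporting triple is counted at its middle vertex with
respect to a generic linear order. A vertex that is not first or last in that order is the middle
vertex of exactly two supporting triples up to rotation, because after inversion at this vertex
exactly two convex hull edges cross a separating line (`card_bridge`). Deleting each point of `S` in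
turn relates the counts at levels `j` and `j + 1` (`sum_card_erase`), which gives all other levels by
induction.

Conversely, if a disk containing `u` and `v` contains at most `k` further points, it can be shrunk to
one with `u, v` on the boundary (`exists_pencil`). Rotating the corresponding plane about the lifted
line `uv` through half a turn replaces the enclosed set by its complement one point at a time, so
some `w` makes `(u, v, w)` a triple at level exactly `k` (`exists_levelTriple`).

If the theorem failed, this would apply to every ordered pair with `k = ⌈n/5⌉ - 2`, whence
`n (n - 1) ≤ 6 (k + 1) (n - k - 2)`, which is false for `n ≥ 5 k + 6`.
-/

open EuclideanGeometry Metric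

noncomputable section

namespace CirclePairs

open scoped Classical

/-! ### The in-circle determinant -/

/-- Twice the signed area of the triangle `v u x`; it vanishes exactly on the line `uv`. -/
def side (u v x : Pt) : ℝ := (u 0 - v 0) * (x 1 - v 1) - (u 1 - v 1) * (x 0 - v 0)

/-- The inner product of `x - u` and `x - v`, i.e. the power of `x` with respect to the circle
with diameter `uv`. -/
def thales (u v x : Pt) : ℝ := (x 0 - u 0) * (x 0 - v 0) + (x 1 - u 1) * (x 1 - v 1)

/-- The in-circle determinant: the determinant of the lifts `(p 0, p 1, |p|²)` of `u`, `w`, `x`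
relative to the lift of `v`, with the third column already reduced by the line `uv`. For fixed
`u, v, w` its sign tells on which side of the circle through `u, v, w` the point `x` lies. -/
def inCirc (u v w x : Pt) : ℝ := side u v w * thales u v x - thales u v w * side u v x

lemma inCirc_rotate (u v w x : Pt) : inCirc v w u x = inCirc u v w x := by
  simp only [inCirc, side, thales]; ring

lemma inCirc_self₁ (u v w : Pt) : inCirc u v w u = 0 := by
  simp only [inCirc, side, thales]; ring

lemma inCirc_self₂ (u v w : Pt) : inCirc u v w v = 0 := by
  simp only [inCirc, side, thales]; ring

lemma inCirc_self₃ (u v w : Pt) : inCirc u v w w = 0 := by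
  simp only [inCirc, side, thales]; ring

/-- Nondegeneracy of the lifted configuration: no four points of `S` are cocircular or
collinear. -/
def Generic (S : Finset Pt) : Prop :=
  ∀ u ∈ S, ∀ v ∈ S, ∀ w ∈ S, ∀ x ∈ S, u ≠ v → u ≠ w → v ≠ w → x ≠ u → x ≠ v → x ≠ w →
    inCirc u v w x ≠ 0

lemma Generic.mono {S T : Finset Pt} (hS : Generic S) (h : T ⊆ S) : Generic T :=
  fun u hu v hv w hw x hx => hS u (h hu) v (h hv) w (h hw) x (h hx)

lemma pt_ext {p q : Pt} (h0 : p 0 = q 0) (h1 : p 1 = q 1) : p = q := by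
  ext i; fin_cases i
  · exact h0
  · exact h1

lemma sq_dist_pos {u v : Pt} (h : u ≠ v) : 0 < (u 0 - v 0) ^ 2 + (u 1 - v 1) ^ 2 := by
  by_contra hle
  have h0 : u 0 - v 0 = 0 := by nlinarith [sq_nonneg (u 0 - v 0), sq_nonneg (u 1 - v 1)]
  have h1 : u 1 - v 1 = 0 := by nlinarith [sq_nonneg (u 0 - v 0), sq_nonneg (u 1 - v 1)]
  exact h (pt_ext (by linarith) (by linarith))

lemma dist_sq (p q : Pt) : dist p q ^ 2 = (p 0 - q 0) ^ 2 + (p 1 - q 1) ^ 2 := by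
  rw [EuclideanSpace.dist_eq, Real.sq_sqrt (by positivity)]
  simp [Fin.sum_univ_two, Real.dist_eq, sq_abs]

lemma collinear_of_side {u v w : Pt} (huv : u ≠ v) (h : side u v w = 0) :
    Collinear ℝ ({u, v, w} : Set Pt) := by
  rw [collinear_iff_of_mem (p₀ := v) (by simp)]
  have ha := sq_dist_pos huv
  refine ⟨u - v, ?_⟩
  simp only [Set.mem_insert_iff, Set.mem_singleton_iff, forall_eq_or_imp, forall_eq]
  refine ⟨⟨1, by simp⟩, ⟨0, by simp⟩,
    ⟨((w 0 - v 0) * (u 0 - v 0) + (w 1 - v 1) * (u 1 - v 1)) /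
      ((u 0 - v 0) ^ 2 + (u 1 - v 1) ^ 2), ?_⟩⟩
  simp only [side] at h
  apply pt_ext <;> simp only [vadd_eq_add, PiLp.add_apply, PiLp.smul_apply, PiLp.sub_apply,
    smul_eq_mul] <;> field_simp
  · linear_combination (-(u 1 - v 1)) * h
  · linear_combination (u 0 - v 0) * h

lemma cospherical_of_inCirc {u v w x : Pt} (hs : side u v w ≠ 0) (h : inCirc u v w x = 0) :
    Cospherical ({u, v, w, x} : Set Pt) := by
  -- The circumcentre of `u, v, w`, found by sliding the midpoint of `uv` along the bisector.
  set s : ℝ := thales u v w / (2 * side u v w) with hsdef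
  have hsw : thales u v w = 2 * s * side u v w := by rw [hsdef]; field_simp
  have hsx : thales u v x = 2 * s * side u v x := by
    have : side u v w * (thales u v x - 2 * s * side u v x) = 0 := by
      simp only [inCirc] at h
      linear_combination h + side u v x * hsw
    rcases mul_eq_zero.1 this with h' | h'
    · exact absurd h' hs
    · linarith
  let c : Pt := !₂[(u 0 + v 0) / 2 - s * (u 1 - v 1), (u 1 + v 1) / 2 + s * (u 0 - v 0)]
  have key : ∀ p : Pt, thales u v p = 2 * s * side u v p → dist p c = dist u c := by
    intro p hp
    have : dist p c ^ 2 = dist u c ^ 2 := by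
      rw [dist_sq, dist_sq]
      simp only [thales, side] at hp
      simp only [c, Matrix.cons_val_zero, Matrix.cons_val_one]
      linear_combination hp
    exact (sq_eq_sq₀ dist_nonneg dist_nonneg).1 this
  refine ⟨c, dist u c, ?_⟩
  simp only [Set.mem_insert_iff, Set.mem_singleton_iff, forall_eq_or_imp, forall_eq]
  exact ⟨trivial, key v (by simp only [thales, side]; ring), key w hsw, key x hsx⟩

lemma generic_of_genPos {S : Finset Pt} (h : GenPos (S : Set Pt)) : Generic S := by
  intro u hu v hv w hw x hx huv huw hvw hxu hxv hxw h0
  have hs : side u v w ≠ 0 := by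
    intro hs
    refine h.1 {u, v, w} ?_ ?_ (collinear_of_side huv hs)
    · intro p hp
      simp only [Set.mem_insert_iff, Set.mem_singleton_iff] at hp
      rcases hp with rfl | rfl | rfl <;> assumption
    · rw [Set.ncard_eq_three]; exact ⟨u, v, w, huv, huw, hvw, rfl⟩
  refine h.2 {u, v, w, x} ?_ ?_ (cospherical_of_inCirc hs h0)
  · intro p hp
    simp only [Set.mem_insert_iff, Set.mem_singleton_iff] at hp
    rcases hp with rfl | rfl | rfl | rfl <;> assumption
  · have : ({u, v, w, x} : Set Pt) = (({u, v, w, x} : Finset Pt) : Set Pt) := by simp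
    rw [this, Set.ncard_coe_finset]
    rw [Finset.card_insert_of_notMem, Finset.card_insert_of_notMem,
      Finset.card_insert_of_notMem, Finset.card_singleton] <;>
      simp [huv, huw, hvw, hxu.symm, hxv.symm, hxw.symm]

/-! ### Supporting triples with a prescribed middle vertex -/

/-- The linear functional with coefficients `α, β`, used to order the points. -/
def lin (α β : ℝ) (p : Pt) : ℝ := α * p 0 + β * p 1

/-- A pair `(u, w)` supports `S` at `v` if no point of `S` is on the positive side of the oriented
circle through `u, v, w`. -/
def Supports (S : Finset Pt) (u v w : Pt) : Prop := ∀ x ∈ S, inCirc u v w x ≤ 0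

/-- Numerator of the crossing coordinate: if `u` is below and `w` above `v`, then after inversion at
`v` the segment joining the images of `u` and `w` meets the line through `v` on which `lin α β` is
constant, and `lin (-β) α`, measured from `v`, equals `crossNum / crossDen` at that point. -/
def crossNum (α β : ℝ) (v u w : Pt) : ℝ :=
  (lin α β w - lin α β v) * (lin (-β) α u - lin (-β) α v) -
    (lin α β u - lin α β v) * (lin (-β) α w - lin (-β) α v)

/-- The denominator accompanying `crossNum`. -/
def crossDen (α β : ℝ) (v u w : Pt) : ℝ :=
  (lin α β w - lin α β v) * ((u 0 - v 0) ^ 2 + (u 1 - v 1) ^ 2) -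
    (lin α β u - lin α β v) * ((w 0 - v 0) ^ 2 + (w 1 - v 1) ^ 2)

lemma cross_identity (α β : ℝ) (v u w u' w' : Pt) :
    (α ^ 2 + β ^ 2) * ((lin α β w' - lin α β v) * inCirc u v w u' -
      (lin α β u' - lin α β v) * inCirc u v w w') =
    crossDen α β v u w * crossNum α β v u' w' - crossNum α β v u w * crossDen α β v u' w' := by
  simp only [crossDen, crossNum, lin, inCirc, side, thales]; ring

lemma crossDen_pos {α β : ℝ} {v u w : Pt} (hu : lin α β u < lin α β v)
    (hw : lin α β v < lin α β w) : 0 < crossDen α β v u w := by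
  have h1 : u ≠ v := by rintro rfl; exact lt_irrefl _ hu
  have h2 := sq_dist_pos h1
  have h3 : 0 ≤ (w 0 - v 0) ^ 2 + (w 1 - v 1) ^ 2 := by positivity
  have h4 : 0 < lin α β w - lin α β v := by linarith
  have h5 : 0 < -(lin α β u - lin α β v) := by linarith
  have := mul_pos h4 h2
  have := mul_nonneg h5.le h3
  simp only [crossDen]; linarith

/-- The bridge lemma. If `S` has points on both sides of `v` in the order given by `lin α β`, then
exactly one pair `(u, w)` with `u` below and `w` above `v` supports `S` at `v`: after inversion
at `v` it is the unique hull edge crossing the separating line on the given side. It is found by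
maximising the crossing coordinate. -/
lemma card_bridge {S : Finset Pt} (hS : Generic S) {α β : ℝ}
    {v : Pt} (hv : v ∈ S) (hne : α ^ 2 + β ^ 2 ≠ 0)
    (hinj : ∀ x ∈ S, lin α β x = lin α β v → x = v)
    (hlo : ∃ u ∈ S, lin α β u < lin α β v) (hhi : ∃ w ∈ S, lin α β v < lin α β w) :
    ((S ×ˢ S).filter fun q => lin α β q.1 < lin α β v ∧ lin α β v < lin α β q.2 ∧
      Supports S q.1 v q.2).card = 1 := by
  have hpos : 0 < α ^ 2 + β ^ 2 := lt_of_le_of_ne (by positivity) hne.symm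
  have hcmp : ∀ u w u' w' : Pt, lin α β u < lin α β v → lin α β v < lin α β w →
      lin α β u' < lin α β v → lin α β v < lin α β w' →
      (crossNum α β v u' w' / crossDen α β v u' w' ≤ crossNum α β v u w / crossDen α β v u w ↔
      (lin α β w' - lin α β v) * inCirc u v w u' -
        (lin α β u' - lin α β v) * inCirc u v w w' ≤ 0) := by
    intro u w u' w' hu hw hu' hw'
    rw [div_le_div_iff₀ (crossDen_pos hu' hw') (crossDen_pos hu hw)]
    have := cross_identity α β v u w u' w'
    constructor
    · intro h
      by_contra hcon
      have := mul_pos hpos (not_le.1 hcon)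
      linarith
    · intro h
      have := mul_nonneg hpos.le (neg_nonneg.2 h)
      linarith
  rw [Finset.card_eq_one]
  obtain ⟨u₀, hu₀, hu₀'⟩ := hlo
  obtain ⟨w₀, hw₀, hw₀'⟩ := hhi
  obtain ⟨⟨u, w⟩, huw, hmax⟩ := Finset.exists_max_image
    ((S ×ˢ S).filter fun q => lin α β q.1 < lin α β v ∧ lin α β v < lin α β q.2)
    (fun q => crossNum α β v q.1 q.2 / crossDen α β v q.1 q.2)
    ⟨(u₀, w₀), by simp [hu₀, hw₀, hu₀', hw₀']⟩
  simp only [Finset.mem_filter, Finset.mem_product, and_imp, Prod.forall] at huw hmax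
  obtain ⟨⟨huS, hwS⟩, hu, hw⟩ := huw
  have hsup : Supports S u v w := by
    intro x hx
    rcases lt_trichotomy (lin α β x) (lin α β v) with h | h | h
    · have := (hcmp u w x w hu hw h hw).1 (hmax x w hx hwS h hw)
      rw [inCirc_self₃, mul_zero, sub_zero] at this
      exact nonpos_of_mul_nonpos_right this (by linarith)
    · rw [hinj x hx h, inCirc_self₂]
    · have := (hcmp u w u x hu hw hu h).1 (hmax u x huS hx hu h)
      rw [inCirc_self₁, mul_zero, zero_sub, ← neg_mul] at this
      exact nonpos_of_mul_nonpos_right this (by linarith)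
  refine ⟨(u, w), ?_⟩
  ext ⟨u', w'⟩
  simp only [Finset.mem_filter, Finset.mem_product, Finset.mem_singleton, Prod.mk.injEq]
  constructor
  · rintro ⟨⟨hu'S, hw'S⟩, hu', hw', hsup'⟩
    have hge : 0 ≤ (lin α β w' - lin α β v) * inCirc u v w u' -
        (lin α β u' - lin α β v) * inCirc u v w w' := by
      have h1 := (hcmp u' w' u w hu' hw' hu hw).2 (by
        have h2 := hsup' u huS
        have h3 := hsup' w hwS
        nlinarith)
      have h4 := cross_identity α β v u w u' w'
      rw [div_le_div_iff₀ (crossDen_pos hu hw) (crossDen_pos hu' hw')] at h1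
      by_contra hcon
      have := mul_pos hpos (neg_pos.2 (not_le.1 hcon))
      linarith
    have h2 := hsup u' hu'S
    have h3 := hsup w' hw'S
    have hA : (lin α β w' - lin α β v) * inCirc u v w u' ≤ 0 :=
      mul_nonpos_of_nonneg_of_nonpos (by linarith) h2
    have hB : 0 ≤ (lin α β u' - lin α β v) * inCirc u v w w' :=
      mul_nonneg_of_nonpos_of_nonpos (by linarith) h3
    have hA0 : inCirc u v w u' = 0 := by
      have : (lin α β w' - lin α β v) * inCirc u v w u' = 0 := by linarith
      exact (mul_eq_zero.1 this).resolve_left (by linarith)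
    have hB0 : inCirc u v w w' = 0 := by
      have : (lin α β u' - lin α β v) * inCirc u v w w' = 0 := by linarith
      exact (mul_eq_zero.1 this).resolve_left (by linarith)
    have huv : u ≠ v := by rintro rfl; linarith
    have hvw : v ≠ w := by rintro rfl; linarith
    have huw : u ≠ w := by rintro rfl; linarith
    have hu'v : u' ≠ v := by rintro rfl; linarith
    have hw'v : w' ≠ v := by rintro rfl; linarith
    have hu'w : u' ≠ w := by rintro rfl; linarith
    have hw'u : w' ≠ u := by rintro rfl; linarith
    constructor
    · by_contra hcon
      exact hS u huS v hv w hwS u' hu'S huv huw hvw hcon hu'v hu'w hA0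
    · by_contra hcon
      exact hS u huS v hv w hwS w' hw'S huv huw hvw hw'u hw'v hcon hB0
  · rintro ⟨rfl, rfl⟩
    exact ⟨⟨huS, hwS⟩, hu, hw, hsup⟩

/-- Some functional `lin 1 t` separates the points of a finite set. -/
lemma exists_lin_injOn (S : Finset Pt) : ∃ t : ℝ, Set.InjOn (lin 1 t) (S : Set Pt) := by
  obtain ⟨t, -, ht⟩ := (Set.infinite_univ (α := ℝ)).exists_notMem_finset
    ((S ×ˢ S).image fun q => -(q.1 0 - q.2 0) / (q.1 1 - q.2 1))
  refine ⟨t, fun p hp q hq hpq => ?_⟩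
  simp only [lin] at hpq
  by_cases h1 : p 1 = q 1
  · exact pt_ext (by rw [h1] at hpq; linarith) h1
  · exfalso
    refine ht (Finset.mem_image.2 ⟨(p, q), Finset.mem_product.2 ⟨hp, hq⟩, ?_⟩)
    have : p 1 - q 1 ≠ 0 := sub_ne_zero.2 h1
    field_simp
    linarith

/-! ### Counting oriented triples by the size of their positive side -/

/-- Ordered triples of distinct points of `S`. -/
def triples (S : Finset Pt) : Finset (Pt × Pt × Pt) :=
  (S ×ˢ S ×ˢ S).filter fun t => t.1 ≠ t.2.1 ∧ t.1 ≠ t.2.2 ∧ t.2.1 ≠ t.2.2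

/-- The points of `S` on the positive side of the oriented circle through the triple `t`. -/
def pos (S : Finset Pt) (t : Pt × Pt × Pt) : Finset Pt :=
  S.filter fun x => 0 < inCirc t.1 t.2.1 t.2.2 x

/-- Ordered triples with exactly `j` points on the positive side. -/
def levelTriples (S : Finset Pt) (j : ℕ) : Finset (Pt × Pt × Pt) :=
  (triples S).filter fun t => (pos S t).card = j

lemma mem_triples {S : Finset Pt} {u v w : Pt} :
    (u, v, w) ∈ triples S ↔ (u ∈ S ∧ v ∈ S ∧ w ∈ S) ∧ u ≠ v ∧ u ≠ w ∧ v ≠ w := by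
  simp [triples]

lemma mem_levelTriples_zero {S : Finset Pt} {u v w : Pt} :
    (u, v, w) ∈ levelTriples S 0 ↔
      ((u ∈ S ∧ v ∈ S ∧ w ∈ S) ∧ u ≠ v ∧ u ≠ w ∧ v ≠ w) ∧ Supports S u v w := by
  simp [levelTriples, mem_triples, pos, Supports, Finset.filter_eq_empty_iff]

lemma supports_rotate {S : Finset Pt} {u v w : Pt} : Supports S v w u ↔ Supports S u v w := by
  simp only [Supports, inCirc_rotate]

lemma rotate_mem_levelTriples_zero {S : Finset Pt} {u v w : Pt} :
    (v, w, u) ∈ levelTriples S 0 ↔ (u, v, w) ∈ levelTriples S 0 := by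
  rw [mem_levelTriples_zero, mem_levelTriples_zero, supports_rotate]
  constructor <;> rintro ⟨⟨⟨h1, h2, h3⟩, h4, h5, h6⟩, h7⟩
  · exact ⟨⟨⟨h3, h1, h2⟩, h5.symm, h6.symm, h4⟩, h7⟩
  · exact ⟨⟨⟨h2, h3, h1⟩, h6, h4.symm, h5.symm⟩, h7⟩

/-- `b` lies strictly between `a` and `c`. -/
def Mid (a b c : ℝ) : Prop := (a < b ∧ b < c) ∨ (c < b ∧ b < a)

/-- A vertex `v` that is not extreme in the order `lin 1 t` is the middle vertex of exactly two
supporting triples `(u, v, w)`, one for each of the two possible orders. -/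
lemma card_mid {S : Finset Pt} (hS : Generic S) {t : ℝ}
    (ht : Set.InjOn (lin 1 t) (S : Set Pt)) {v : Pt} (hv : v ∈ S)
    (hlo : ∃ u ∈ S, lin 1 t u < lin 1 t v) (hhi : ∃ w ∈ S, lin 1 t v < lin 1 t w) :
    ((levelTriples S 0).filter fun q =>
      Mid (lin 1 t q.1) (lin 1 t q.2.1) (lin 1 t q.2.2) ∧ q.2.1 = v).card = 2 := by
  have h1 := card_bridge hS (α := 1) (β := t) hv (by positivity)
    (fun x hx h => ht hx hv h) hlo hhi
  -- Reversing the functional counts the triples running from above `v` to below `v`.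
  have hneg : ∀ p : Pt, lin (-1) (-t) p = -lin 1 t p := by intro p; simp only [lin]; ring
  have h2 := card_bridge hS (α := -1) (β := -t) hv (by simp only [neg_sq]; positivity)
    (fun x hx h => ht hx hv (by simpa [hneg] using h))
    (by simpa [hneg] using hhi) (by simpa [hneg] using hlo)
  simp only [hneg, neg_lt_neg_iff] at h2
  have hdisj : Disjoint
      ((S ×ˢ S).filter fun q => lin 1 t q.1 < lin 1 t v ∧ lin 1 t v < lin 1 t q.2 ∧
        Supports S q.1 v q.2)
      ((S ×ˢ S).filter fun q => lin 1 t v < lin 1 t q.1 ∧ lin 1 t q.2 < lin 1 t v ∧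
        Supports S q.1 v q.2) := by
    rw [Finset.disjoint_filter]
    intro q _ h h'
    linarith [h.1, h'.1]
  have h3 := Finset.card_union_of_disjoint hdisj
  rw [h1, h2] at h3
  refine Eq.trans ?_ h3
  refine Finset.card_nbij' (fun q => (q.1, q.2.2)) (fun q => (q.1, v, q.2)) ?_ ?_ ?_ ?_
  · rintro ⟨a, b, c⟩ h
    simp only [Finset.mem_coe, Finset.mem_filter, mem_levelTriples_zero] at h
    simp only [Mid] at h
    obtain ⟨⟨⟨⟨ha, hb, hc⟩, -⟩, hs⟩, hm, rfl⟩ := h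
    simp only [Finset.mem_coe, Finset.mem_union, Finset.mem_filter, Finset.mem_product]
    tauto
  · rintro ⟨a, c⟩ h
    simp only [Finset.mem_coe, Finset.mem_union, Finset.mem_filter, Finset.mem_product] at h
    simp only [Finset.mem_coe, Finset.mem_filter, mem_levelTriples_zero]
    simp only [Mid]
    have hd : a ≠ v ∧ a ≠ c ∧ v ≠ c := by
      refine ⟨?_, ?_, ?_⟩ <;> rintro rfl <;>
        rcases h with ⟨-, h1, h2, -⟩ | ⟨-, h1, h2, -⟩ <;> linarith
    tauto
  · rintro ⟨a, b, c⟩ h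
    simp only [Finset.mem_coe, Finset.mem_filter] at h
    simp [h.2.2]
  · rintro ⟨a, c⟩ _
    rfl

/-- A generic set of `m + 3` points has `6 (m + 1)` ordered supporting triples. (Delaunay triangles
together with farthest-point Delaunay triangles number `2 n - 4`.) Each such triple is counted at
its middle vertex in a generic linear order. -/
lemma card_levelTriples_zero {S : Finset Pt} (hS : Generic S) {m : ℕ} (hm : S.card = m + 3) :
    (levelTriples S 0).card = 6 * (m + 1) := by
  obtain ⟨t, ht⟩ := exists_lin_injOn S
  set f := lin 1 t with hf
  set M := (levelTriples S 0).filter fun q => Mid (f q.1) (f q.2.1) (f q.2.2) with hM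
  have hSne : S.Nonempty := by rw [← Finset.card_pos]; omega
  obtain ⟨a, ha, hamin⟩ := Finset.exists_min_image S f hSne
  obtain ⟨b, hb, hbmax⟩ := Finset.exists_max_image S f hSne
  have hab : b ≠ a := by
    rintro rfl
    have : S ⊆ {b} := by
      intro x hx
      rw [Finset.mem_singleton]
      exact ht hx ha (le_antisymm (hbmax x hx) (hamin x hx))
    have := Finset.card_le_card this
    rw [Finset.card_singleton] at this
    omega
  have hMcard : M.card = 2 * (m + 1) := by
    have hmap : Set.MapsTo (fun q : Pt × Pt × Pt => q.2.1) (M : Set (Pt × Pt × Pt))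
        (((S.erase a).erase b : Finset Pt) : Set Pt) := by
      rintro ⟨u, v, w⟩ h
      simp only [hM, Finset.mem_coe, Finset.mem_filter, mem_levelTriples_zero] at h
      simp only [Mid] at h
      obtain ⟨⟨⟨⟨hu, hv, hw⟩, -⟩, -⟩, hmid⟩ := h
      simp only [Finset.coe_erase, Set.mem_sdiff, Finset.mem_coe, Set.mem_singleton_iff]
      have h1 := hamin u hu
      have h2 := hamin w hw
      have h3 := hbmax u hu
      have h4 := hbmax w hw
      refine ⟨⟨hv, ?_⟩, ?_⟩ <;> rintro rfl <;> rcases hmid with ⟨h5, h6⟩ | ⟨h5, h6⟩ <;> linarith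
    rw [Finset.card_eq_sum_card_fiberwise hmap]
    have hfib : ∀ v ∈ (S.erase a).erase b, (M.filter fun q => q.2.1 = v).card = 2 := by
      intro v hv
      simp only [Finset.mem_erase] at hv
      obtain ⟨hvb, hva, hv⟩ := hv
      rw [hM, Finset.filter_filter]
      refine card_mid hS ht hv ⟨a, ha, ?_⟩ ⟨b, hb, ?_⟩
      · exact lt_of_le_of_ne (hamin v hv) fun h => hva (ht ha hv h).symm
      · exact lt_of_le_of_ne (hbmax v hv) fun h => hvb (ht hv hb h)
    rw [Finset.sum_const_nat hfib, Finset.card_erase_of_mem (by simp [hb, hab]),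
      Finset.card_erase_of_mem ha, hm, mul_comm]
    rfl
  have hM1 : ((levelTriples S 0).filter fun q => Mid (f q.2.2) (f q.1) (f q.2.1)).card
      = M.card := by
    refine Finset.card_nbij' (fun q => (q.2.2, q.1, q.2.1)) (fun q => (q.2.1, q.2.2, q.1))
      ?_ ?_ ?_ ?_
    · rintro ⟨u, v, w⟩ h
      simp only [hM, Finset.mem_coe, Finset.mem_filter] at h ⊢
      exact ⟨rotate_mem_levelTriples_zero.1 h.1, h.2⟩
    · rintro ⟨u, v, w⟩ h
      simp only [hM, Finset.mem_coe, Finset.mem_filter] at h ⊢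
      exact ⟨rotate_mem_levelTriples_zero.2 h.1, h.2⟩
    · intro _ _; rfl
    · intro _ _; rfl
  have hM3 : ((levelTriples S 0).filter fun q => Mid (f q.2.1) (f q.2.2) (f q.1)).card
      = M.card := by
    refine Finset.card_nbij' (fun q => (q.2.1, q.2.2, q.1)) (fun q => (q.2.2, q.1, q.2.1))
      ?_ ?_ ?_ ?_
    · rintro ⟨u, v, w⟩ h
      simp only [hM, Finset.mem_coe, Finset.mem_filter] at h ⊢
      exact ⟨rotate_mem_levelTriples_zero.2 h.1, h.2⟩
    · rintro ⟨u, v, w⟩ h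
      simp only [hM, Finset.mem_coe, Finset.mem_filter] at h ⊢
      exact ⟨rotate_mem_levelTriples_zero.1 h.1, h.2⟩
    · intro _ _; rfl
    · intro _ _; rfl
  have hcover : levelTriples S 0 =
      (M ∪ (levelTriples S 0).filter fun q => Mid (f q.2.2) (f q.1) (f q.2.1)) ∪
      (levelTriples S 0).filter fun q => Mid (f q.2.1) (f q.2.2) (f q.1) := by
    rw [hM, ← Finset.filter_or, ← Finset.filter_or, eq_comm, Finset.filter_eq_self]
    rintro ⟨u, v, w⟩ h
    obtain ⟨⟨⟨hu, hv, hw⟩, huv, huw, hvw⟩, -⟩ := mem_levelTriples_zero.1 h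
    have h1 : f u ≠ f v := fun h => huv (ht hu hv h)
    have h2 : f u ≠ f w := fun h => huw (ht hu hw h)
    have h3 : f v ≠ f w := fun h => hvw (ht hv hw h)
    simp only [Mid]
    rcases lt_or_gt_of_ne h1 with h1 | h1 <;> rcases lt_or_gt_of_ne h2 with h2 | h2 <;>
      rcases lt_or_gt_of_ne h3 with h3 | h3 <;> simp_all [not_lt.2, le_of_lt]
  rw [hcover, Finset.card_union_of_disjoint, Finset.card_union_of_disjoint, hM1, hM3, hMcard]
  · ring
  · rw [hM, Finset.disjoint_filter]
    intro q _ h h'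
    simp only [Mid] at h h'
    rcases h with h | h <;> rcases h' with h' | h' <;> linarith [h.1, h.2, h'.1, h'.2]
  · rw [hM, ← Finset.filter_or, Finset.disjoint_filter]
    intro q _ h hc
    simp only [Mid] at h hc
    rcases h with (h | h) | (h | h) <;> rcases hc with hc | hc <;>
      linarith [h.1, h.2, hc.1, hc.2]

/-- Deleting one point in all possible ways: a triple with `j` positive points survives at level
`j` when a nonpositive point outside the triple is deleted, and a triple at level `j + 1` drops
to level `j` when one of its positive points is deleted. -/
lemma sum_card_erase (S : Finset Pt) (j m : ℕ) (hm : S.card = j + 3 + m) :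
    ∑ p ∈ S, (levelTriples (S.erase p) j).card =
      m * (levelTriples S j).card + (j + 1) * (levelTriples S (j + 1)).card := by
  have h1 : ∀ p ∈ S, levelTriples (S.erase p) j =
      (triples S).filter fun t => (t.1 ≠ p ∧ t.2.1 ≠ p ∧ t.2.2 ≠ p) ∧
        ((pos S t).erase p).card = j := by
    intro p _
    have hpos : ∀ t, pos (S.erase p) t = (pos S t).erase p := by
      intro t; simp only [pos, Finset.filter_erase]
    ext ⟨u, v, w⟩
    simp only [levelTriples, Finset.mem_filter, mem_triples, Finset.mem_erase, hpos]
    tauto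
  rw [Finset.sum_congr rfl fun p hp => congrArg Finset.card (h1 p hp)]
  have hswap := Finset.sum_card_bipartiteAbove_eq_sum_card_bipartiteBelow (s := S)
    (t := triples S) (fun (p : Pt) (t : Pt × Pt × Pt) =>
      (t.1 ≠ p ∧ t.2.1 ≠ p ∧ t.2.2 ≠ p) ∧ ((pos S t).erase p).card = j)
  simp only [Finset.bipartiteAbove, Finset.bipartiteBelow] at hswap
  rw [hswap]
  have h2 : ∀ t ∈ triples S, (S.filter fun p => (t.1 ≠ p ∧ t.2.1 ≠ p ∧ t.2.2 ≠ p) ∧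
      ((pos S t).erase p).card = j).card =
      (if (pos S t).card = j then m else 0) + (if (pos S t).card = j + 1 then j + 1 else 0) := by
    rintro ⟨u, v, w⟩ ht
    obtain ⟨⟨hu, hv, hw⟩, huv, huw, hvw⟩ := mem_triples.1 ht
    set P := pos S (u, v, w) with hP
    have huP : u ∉ P := by simp [hP, pos, inCirc_self₁]
    have hvP : v ∉ P := by simp [hP, pos, inCirc_self₂]
    have hwP : w ∉ P := by simp [hP, pos, inCirc_self₃]
    have hPS : P ⊆ S := Finset.filter_subset _ _
    have hsplit : S.filter (fun p => (u ≠ p ∧ v ≠ p ∧ w ≠ p) ∧ (P.erase p).card = j) =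
        ((((S \ P).erase u).erase v).erase w).filter (fun _ => P.card = j) ∪
          P.filter (fun _ => P.card = j + 1) := by
      ext p
      simp only [Finset.mem_filter, Finset.mem_union, Finset.mem_erase, Finset.mem_sdiff]
      by_cases hp : p ∈ P
      · have hc := Finset.card_erase_add_one hp
        have e1 : u ≠ p := by rintro rfl; exact huP hp
        have e2 : v ≠ p := by rintro rfl; exact hvP hp
        have e3 : w ≠ p := by rintro rfl; exact hwP hp
        have : (P.erase p).card = j ↔ P.card = j + 1 := by omega
        simp only [this, hp, hPS hp, e1, e2, e3, ne_eq, not_false_eq_true, and_true, true_and,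
          not_true_eq_false, and_false, false_and, false_or]
      · rw [Finset.erase_eq_of_notMem hp]
        simp only [hp, ne_comm (b := p)]
        tauto
    rw [hsplit, Finset.card_union_of_disjoint]
    · have hc : ((((S \ P).erase u).erase v).erase w).card + 3 + P.card = S.card := by
        rw [Finset.card_erase_of_mem (by simp [hw, hwP, huw.symm, hvw.symm]),
          Finset.card_erase_of_mem (by simp [hv, hvP, huv.symm]),
          Finset.card_erase_of_mem (by simp [hu, huP])]
        have h3 : 3 ≤ (S \ P).card := by
          have : ({u, v, w} : Finset Pt) ⊆ S \ P := by
            intro x hx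
            simp only [Finset.mem_insert, Finset.mem_singleton] at hx
            rw [Finset.mem_sdiff]
            rcases hx with h | h | h <;> rw [h]
            exacts [⟨hu, huP⟩, ⟨hv, hvP⟩, ⟨hw, hwP⟩]
          have h4 := Finset.card_le_card this
          rwa [Finset.card_eq_three.2 ⟨u, v, w, huv, huw, hvw, rfl⟩] at h4
        have h5 := Finset.card_sdiff_add_card_eq_card hPS
        omega
      rw [Finset.filter_const, Finset.filter_const]
      split_ifs <;> (try rw [Finset.card_empty]) <;> omega
    · refine Finset.disjoint_of_subset_left (Finset.filter_subset _ _)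
        (Finset.disjoint_of_subset_right (Finset.filter_subset _ _) ?_)
      rw [Finset.disjoint_left]
      intro x hx
      simp only [Finset.mem_erase, Finset.mem_sdiff] at hx
      tauto
  rw [Finset.sum_congr rfl h2, Finset.sum_add_distrib, ← Finset.sum_filter, ← Finset.sum_filter,
    Finset.sum_const, Finset.sum_const, smul_eq_mul, smul_eq_mul, mul_comm m, mul_comm (j + 1)]
  rfl

/-- A generic set of `j + 3 + m` points has `6 (j + 1) (m + 1)` ordered triples whose oriented
circle has exactly `j` points on its positive side. -/
lemma card_levelTriples (j : ℕ) : ∀ (m : ℕ) (S : Finset Pt), Generic S → S.card = j + 3 + m →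
    (levelTriples S j).card = 6 * (j + 1) * (m + 1) := by
  induction j with
  | zero =>
    intro m S hS hm
    rw [card_levelTriples_zero hS (m := m) (by omega)]
  | succ j ih =>
    intro m S hS hm
    have h1 := sum_card_erase S j (m + 1) (by omega)
    rw [ih (m + 1) S hS (by omega), Finset.sum_const_nat (m := 6 * (j + 1) * (m + 1)) (by
      intro p hp
      refine ih m _ (hS.mono (Finset.erase_subset _ _)) ?_
      rw [Finset.card_erase_of_mem hp]; omega), hm] at h1
    have h2 : (j + 1) * (levelTriples S (j + 1)).card =
        (j + 1) * (6 * (j + 1 + 1) * (m + 1)) := by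
      zify at h1 ⊢
      linear_combination -h1
    exact Nat.eq_of_mul_eq_mul_left (Nat.succ_pos j) h2

/-! ### Pairs enclosed by a small disk -/

/-- A discrete intermediate value theorem. Walking along `F` in the order of `τ`, each element
passed toggles its membership in the current set; the walk leads from the set where `P` holds to
its complement, so some element outside `P` is added to a current set of size exactly `k`. The
walk starts at the largest value of `τ`. -/
lemma exists_toggle {ι : Type*} (τ : ι → ℝ) (P : ι → Prop) (F : Finset ι) :
    Set.InjOn τ (F : Set ι) → ∀ k : ℕ, (F.filter P).card ≤ k →
    k + 1 ≤ (F.filter fun x => ¬P x).card →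
    ∃ w ∈ F, ¬P w ∧
      (F.filter fun x => (P x ∧ τ x < τ w) ∨ (¬P x ∧ τ w < τ x)).card = k := by
  refine Finset.induction_on_min_value τ F ?_ ?_
  · intro _ k _ h; simp at h
  · intro a s ha hmin ih hinj k hP hnP
    have hinj' : Set.InjOn τ (s : Set ι) := hinj.mono (by simp)
    have hlt : ∀ x ∈ s, τ a < τ x := fun x hx => lt_of_le_of_ne (hmin x hx) fun h => by
      have := hinj (by simp) (by simp [hx]) h
      exact ha (this ▸ hx)
    by_cases hPa : P a
    · rw [Finset.filter_insert, if_pos hPa, Finset.card_insert_of_notMem (by simp [ha])] at hP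
      rw [Finset.filter_insert, if_neg (by simpa using hPa)] at hnP
      obtain ⟨k, rfl⟩ : ∃ k', k = k' + 1 := ⟨k - 1, by omega⟩
      obtain ⟨w, hw, hPw, hc⟩ := ih hinj' k (by omega) (by omega)
      refine ⟨w, Finset.mem_insert_of_mem hw, hPw, ?_⟩
      rw [Finset.filter_insert, if_pos (Or.inl ⟨hPa, hlt w hw⟩),
        Finset.card_insert_of_notMem (by simp [ha]), hc]
    · rw [Finset.filter_insert, if_neg hPa] at hP
      rw [Finset.filter_insert, if_pos hPa, Finset.card_insert_of_notMem (by simp [ha])] at hnP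
      by_cases hk : (s.filter fun x => ¬P x).card = k
      · refine ⟨a, by simp, hPa, ?_⟩
        rw [Finset.filter_insert, if_neg (by simp), ← hk]
        congr 1
        apply Finset.filter_congr
        intro x hx
        have := hlt x hx
        simp [this, not_lt.2 this.le]
      · obtain ⟨w, hw, hPw, hc⟩ := ih hinj' k hP (by omega)
        refine ⟨w, Finset.mem_insert_of_mem hw, hPw, ?_⟩
        rw [Finset.filter_insert, if_neg (by simp [hPa, (hlt w hw).le]), hc]

/-- A disk containing `u` and `v` can be shrunk to a (generalised) disk with `u` and `v` on its
boundary: subtracting from `r² - |x - c|²` suitable nonnegative multiples of `|x - u|²` and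
`|x - v|²` gives a function in the pencil spanned by `side u v` and `thales u v`. -/
lemma exists_pencil {u v c : Pt} {r : ℝ} (huv : u ≠ v) (hu : u ∈ closedBall c r)
    (hv : v ∈ closedBall c r) : ∃ a b : ℝ, 0 < b ∧
      ∀ x : Pt, 0 ≤ a * side u v x - b * thales u v x → x ∈ closedBall c r := by
  have hL := sq_dist_pos huv
  rw [mem_closedBall] at hu hv
  have hr : 0 ≤ r := dist_nonneg.trans hu
  have hu' : 0 ≤ r ^ 2 - ((u 0 - c 0) ^ 2 + (u 1 - c 1) ^ 2) := by
    rw [← dist_sq]; nlinarith [dist_nonneg (x := u) (y := c)]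
  have hv' : 0 ≤ r ^ 2 - ((v 0 - c 0) ^ 2 + (v 1 - c 1) ^ 2) := by
    rw [← dist_sq]; nlinarith [dist_nonneg (x := v) (y := c)]
  set L := (u 0 - v 0) ^ 2 + (u 1 - v 1) ^ 2 with hLdef
  set fu := r ^ 2 - ((u 0 - c 0) ^ 2 + (u 1 - c 1) ^ 2) with hfu
  set fv := r ^ 2 - ((v 0 - c 0) ^ 2 + (v 1 - c 1) ^ 2) with hfv
  refine ⟨2 * side u v c / L, 1 + fu / L + fv / L, by positivity, fun x hx => ?_⟩
  have key : r ^ 2 - ((x 0 - c 0) ^ 2 + (x 1 - c 1) ^ 2) =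
      2 * side u v c / L * side u v x - (1 + fu / L + fv / L) * thales u v x +
      (fu / L * ((x 0 - v 0) ^ 2 + (x 1 - v 1) ^ 2) +
        fv / L * ((x 0 - u 0) ^ 2 + (x 1 - u 1) ^ 2)) := by
    field_simp
    simp only [hLdef, hfu, hfv, side, thales]
    ring
  have hnn : 0 ≤ fu / L * ((x 0 - v 0) ^ 2 + (x 1 - v 1) ^ 2) +
        fv / L * ((x 0 - u 0) ^ 2 + (x 1 - u 1) ^ 2) := by positivity
  rw [mem_closedBall]
  refine abs_le_of_sq_le_sq' ?_ hr |>.2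
  rw [dist_sq]
  linarith

/-- If some disk containing `u` and `v` contains at most `k` further points, while at least `2 k + 1`
(and at least two) further points exist, then `(u, v)` extends to an ordered triple at level exactly `k`: rotate the
pencil member of `exists_pencil` through half a turn and apply `exists_toggle`. -/
lemma exists_levelTriple {S : Finset Pt} (hS : Generic S) {u v : Pt} (hu : u ∈ S) (hv : v ∈ S)
    (huv : u ≠ v) {k : ℕ} (hn : 2 * k + 3 ≤ S.card) (hn4 : 4 ≤ S.card) {c : Pt} {r : ℝ}
    (huc : u ∈ closedBall c r) (hvc : v ∈ closedBall c r)
    (hk : (S.filter fun x => x ∈ closedBall c r).card ≤ k + 2) :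
    ∃ w, (u, v, w) ∈ levelTriples S k := by
  obtain ⟨a, b, hb, hab⟩ := exists_pencil huv huc hvc
  set F := (S.erase u).erase v with hF
  have hvF : v ∈ S.erase u := by simp [hv, huv.symm]
  have hFcard : F.card + 2 = S.card := by
    rw [hF, Finset.card_erase_of_mem hvF, Finset.card_erase_of_mem hu]; omega
  have hmem : ∀ {x}, x ∈ F ↔ x ≠ v ∧ x ≠ u ∧ x ∈ S := by
    intro x; simp [hF]
  have hdet : ∀ w ∈ F, ∀ x ∈ F, x ≠ w → inCirc u v w x ≠ 0 := by
    intro w hw x hx hxw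
    obtain ⟨hw1, hw2, hw3⟩ := hmem.1 hw
    obtain ⟨hx1, hx2, hx3⟩ := hmem.1 hx
    exact hS u hu v hv w hw3 x hx3 huv hw2.symm hw1.symm hx2 hx1 hxw
  have hside : ∀ x ∈ F, a * side u v x - b * thales u v x = 0 → side u v x ≠ 0 := by
    intro x hx h0 h1
    have ht : thales u v x = 0 := by
      rw [h1, mul_zero, zero_sub, neg_eq_zero] at h0
      exact (mul_eq_zero.1 h0).resolve_left hb.ne'
    obtain ⟨y, hy, hyx⟩ := Finset.exists_mem_ne (s := F) (by omega) x
    refine hdet x hx y hy hyx ?_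
    simp [inCirc, h1, ht]
  -- A slight rotation keeps the negative points negative and leaves no point on the boundary.
  obtain ⟨ε, hε⟩ : ∃ ε : ℝ, ∀ x ∈ F,
      (a * side u v x - b * thales u v x < 0 →
        (a + ε) * side u v x - b * thales u v x < 0) ∧
      (a + ε) * side u v x - b * thales u v x ≠ 0 := by
    have hev : ∀ᶠ ε in nhdsWithin (0 : ℝ) (Set.Ioi 0), ∀ x ∈ F,
        (a * side u v x - b * thales u v x < 0 →
          (a + ε) * side u v x - b * thales u v x < 0) ∧
        (a + ε) * side u v x - b * thales u v x ≠ 0 := by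
      rw [Filter.eventually_all_finset]
      intro x hx
      have hcont : Filter.Tendsto (fun ε : ℝ => (a + ε) * side u v x - b * thales u v x)
          (nhdsWithin 0 (Set.Ioi 0)) (nhds (a * side u v x - b * thales u v x)) := by
        have : Continuous fun ε : ℝ => (a + ε) * side u v x - b * thales u v x := by fun_prop
        have h := this.tendsto 0
        simp only [add_zero] at h
        exact h.mono_left nhdsWithin_le_nhds
      rcases lt_trichotomy (a * side u v x - b * thales u v x) 0 with h | h | h
      · filter_upwards [hcont.eventually (gt_mem_nhds h)] with ε hε
        exact ⟨fun _ => hε, hε.ne⟩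
      · filter_upwards [self_mem_nhdsWithin] with ε hε
        refine ⟨fun h' => absurd h h'.ne, ?_⟩
        have : (a + ε) * side u v x - b * thales u v x = ε * side u v x := by linarith
        rw [this]
        exact mul_ne_zero (ne_of_gt hε) (hside x hx h)
      · filter_upwards [hcont.eventually (lt_mem_nhds h)] with ε hε
        exact ⟨fun h' => absurd h h'.not_gt, hε.ne'⟩
    exact hev.exists
  set g : Pt → ℝ := fun x => (a + ε) * side u v x - b * thales u v x with hg
  have hg0 : ∀ x ∈ F, g x ≠ 0 := fun x hx => (hε x hx).2
  set τ : Pt → ℝ := fun x => side u v x / g x with hτ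
  have hrel : ∀ w ∈ F, ∀ x ∈ F, b * inCirc u v w x = g w * g x * (τ x - τ w) := by
    intro w hw x hx
    have h1 := hg0 w hw
    have h2 := hg0 x hx
    have h3 : g w * g x * (τ x - τ w) = g w * side u v x - g x * side u v w := by
      simp only [hτ]; field_simp
    rw [h3]
    simp only [hg, inCirc]; ring
  have hinj : Set.InjOn τ (F : Set Pt) := by
    intro x hx w hw hxw
    by_contra hne
    have h := hrel w hw x hx
    rw [hxw, sub_self, mul_zero] at h
    exact hdet w hw x hx hne ((mul_eq_zero.1 h).resolve_left hb.ne')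
  have hPk : (F.filter fun x => 0 < g x).card ≤ k := by
    have hsub : insert u (insert v (F.filter fun x => 0 < g x)) ⊆
        S.filter fun x => x ∈ closedBall c r := by
      intro x hx
      simp only [Finset.mem_insert, Finset.mem_filter] at hx ⊢
      rcases hx with rfl | rfl | ⟨hxF, hxg⟩
      · exact ⟨hu, huc⟩
      · exact ⟨hv, hvc⟩
      · refine ⟨(hmem.1 hxF).2.2, hab x ?_⟩
        by_contra hcon
        exact absurd ((hε x hxF).1 (not_le.1 hcon)) hxg.not_gt
    have h1 := Finset.card_le_card hsub
    rw [Finset.card_insert_of_notMem (by simp [hF, huv]),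
      Finset.card_insert_of_notMem (by simp [hF])] at h1
    omega
  have hnPk : k + 1 ≤ (F.filter fun x => ¬0 < g x).card := by
    have := Finset.card_filter_add_card_filter_not (s := F) (fun x => 0 < g x)
    omega
  obtain ⟨w, hw, hgw, hc⟩ := exists_toggle τ (fun x => 0 < g x) F hinj k hPk hnPk
  obtain ⟨hwv, hwu, hwS⟩ := hmem.1 hw
  have hgw' : g w < 0 := lt_of_le_of_ne (not_lt.1 hgw) (hg0 w hw)
  refine ⟨w, Finset.mem_filter.2 ⟨mem_triples.2 ⟨⟨hu, hv, hwS⟩, huv, hwu.symm, hwv.symm⟩, ?_⟩⟩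
  rw [← hc]
  congr 1
  ext x
  simp only [pos, Finset.mem_filter]
  by_cases hxF : x ∈ F
  · have hxS := (hmem.1 hxF).2.2
    have hx0 := hg0 x hxF
    have h := hrel w hw x hxF
    simp only [hxS, hxF, true_and]
    have hsign : 0 < g w * (g x * (τ x - τ w)) ↔ g x * (τ x - τ w) < 0 := by
      simp [mul_pos_iff, hgw', hgw'.not_gt]
    rw [← mul_pos_iff_of_pos_left hb, h, mul_assoc, hsign]
    rcases lt_or_gt_of_ne hx0 with hx | hx
    · simp [not_lt.2 hx.le, mul_neg_iff, hx]
    · simp [hx, not_lt.2 hx.le, mul_neg_iff]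
  · simp only [hxF, false_and, iff_false, not_and, not_lt]
    intro hxS
    rcases not_and_or.1 (mt hmem.2 hxF) with h | h
    · rw [not_not.1 h, inCirc_self₂]
    · have : x = u := by tauto
      rw [this, inCirc_self₁]

end CirclePairs

/-- For every `n ≥ 6` and every set `S` of `n` points in the plane in general position,
there exist two distinct points `u, v ∈ S` such that every closed disk containing both
`u` and `v` contains at least `⌈n/5⌉ + 1` points of `S`. -/
theorem pi_lower_bound_n_over_5 (n : ℕ) (hn : 6 ≤ n) (S : Set Pt)
    (hfin : S.Finite) (hcard : S.ncard = n) (hgp : GenPos S) :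
    ∃ u ∈ S, ∃ v ∈ S, u ≠ v ∧
      ∀ (c : Pt) (r : ℝ), 0 < r → u ∈ closedBall c r → v ∈ closedBall c r →
        ⌈(n : ℝ) / 5⌉ + 1 ≤ ((S ∩ closedBall c r).ncard : ℤ) := by
  classical
  obtain ⟨T, rfl⟩ : ∃ T : Finset Pt, S = (T : Set Pt) := ⟨hfin.toFinset, by simp⟩
  rw [Set.ncard_coe_finset] at hcard
  have hT := CirclePairs.generic_of_genPos hgp
  by_contra hcon
  push Not at hcon
  -- With `k + 2 = ⌈n / 5⌉`, every pair lies in a disk with at most `k` further points.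
  obtain ⟨k, hk1, hk2⟩ : ∃ k : ℕ, 5 * k + 6 ≤ n ∧ n ≤ 5 * k + 10 :=
    ⟨(n - 6) / 5, by omega, by omega⟩
  have hceil : ⌈(n : ℝ) / 5⌉ ≤ (k : ℤ) + 2 := by
    rw [Int.ceil_le]
    have : (n : ℝ) ≤ 5 * k + 10 := by exact_mod_cast hk2
    push_cast
    linarith
  have hex : ∀ q ∈ T.offDiag, ∃ w, (q.1, q.2, w) ∈ CirclePairs.levelTriples T k := by
    rintro ⟨u, v⟩ hq
    obtain ⟨hu, hv, huv⟩ := Finset.mem_offDiag.1 hq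
    obtain ⟨c, r, -, huc, hvc, hlt⟩ := hcon u hu v hv huv
    refine CirclePairs.exists_levelTriple hT hu hv huv (by omega) (by omega) huc hvc ?_
    have h1 : ((T : Set Pt) ∩ closedBall c r) =
        ((T.filter fun x => x ∈ closedBall c r : Finset Pt) : Set Pt) := by
      ext x; simp
    rw [h1, Set.ncard_coe_finset] at hlt
    have h2 : ((T.filter fun x => x ∈ closedBall c r).card : ℤ) < k + 2 + 1 :=
      lt_of_lt_of_le hlt (by linarith)
    convert (show (T.filter fun x => x ∈ closedBall c r).card ≤ k + 2 by omega)
  have hle : T.offDiag.card ≤ (CirclePairs.levelTriples T k).card := by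
    have hsub : T.offDiag ⊆ (CirclePairs.levelTriples T k).image fun t => (t.1, t.2.1) := by
      intro q hq
      obtain ⟨w, hw⟩ := hex q hq
      exact Finset.mem_image.2 ⟨_, hw, rfl⟩
    exact (Finset.card_le_card hsub).trans Finset.card_image_le
  obtain ⟨m, hm⟩ : ∃ m, n = k + 3 + m := ⟨n - (k + 3), by omega⟩
  rw [CirclePairs.card_levelTriples k m T hT (by omega), Finset.offDiag_card, hcard] at hle
  -- For `n ≥ 5 k + 6` the number of ordered pairs exceeds the number of triples at level `k`.
  obtain ⟨d, rfl⟩ : ∃ d, m = 4 * k + 3 + d := ⟨m - (4 * k + 3), by omega⟩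
  have hle' : n * n ≤ 6 * (k + 1) * (4 * k + 3 + d + 1) + n := by omega
  rw [hm] at hle'
  nlinarith [mul_nonneg (Nat.zero_le k) (Nat.zero_le d), sq_nonneg (d : ℤ)]
end
end

section
/- For every integer k and every set S' of k points in the Euclidean plane in general position, there are at least C(k−3,2) = (k−3)(k−4)/2 unordered pairs {x,y} of distinct points of S' such that every closed disk having both x and y on its boundary fails to contain at least one of the other k−2 points of S' (that is, at least one of the other points of S' lies strictly outside the disk). -/
/-!
A pair `{x, y}` is *not* dominated when some circle through `x` and `y` encloses all of `S'`
(these are the edges of the farthest-point Delaunay graph). The proof shows that there are at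
most `2k - 1` such pairs; since `C(k, 2) = C(k - 3, 2) + (3k - 6)` and `2k - 1 ≤ 3k - 6` for
`k ≥ 5`, this is enough.

Fix any `p ∈ S'` and orient pairs by the angle around `p`: `x` precedes `y` if `x = p ≠ y` or
`x - p, y - p` is positively oriented (`Prec`). This is a tournament, not necessarily transitive.
The key fact (`no_crossing`) is that there is no chain `a, b, c, d` with all of
`ab, bc, cd, ac, bd` positively oriented and both `ac` and `bd` edges. To see it, subtract the
powers with respect to the two enclosing circles: the difference `g` is affine, nonnegative at
`a, c` and nonpositive at `b, d`. The point `b` lies in the cone from `p` spanned by `a, c`,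
beyond the segment `ac` because `b` is on an enclosing circle (`cone_beyond`), and likewise for
`c` with respect to `b, d`. According to the sign of `g p`, one of these two configurations forces
`g` to vanish identically, so that `a, b, c, d` are concyclic.

By `card_le_of_no_crossing`, every edge `xy`, oriented from `x` to `y`, is either last among the
edges out of `x` or first among the edges into `y`, and there are no edges into `p`. So there are
at most `k + (k - 1)` edges.
-/

open EuclideanGeometry Metric

noncomputable section

/-- Twice the signed area of the triangle `p x y`. -/
def cross (p x y : Pt) : ℝ :=
  (x 0 - p 0) * (y 1 - p 1) - (x 1 - p 1) * (y 0 - p 0)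

/-- Angular precedence around `p`, with `p` itself preceding every other point. -/
def Prec (p x y : Pt) : Prop := y ≠ p ∧ (x = p ∨ 0 < cross p x y)

/-- `x` and `y` lie on a circle with centre `c` which encloses `S`. -/
def EnclosedBy (S : Set Pt) (x y c : Pt) : Prop :=
  dist x c = dist y c ∧ ∀ z ∈ S, dist z c ≤ dist x c

lemma cross_same (p x : Pt) : cross p x x = 0 := by unfold cross; ring

lemma cross_swap (p x y : Pt) : cross p y x = - cross p x y := by unfold cross; ring

lemma Prec.asymm {p x y : Pt} (h : Prec p x y) : ¬ Prec p y x := by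
  rintro ⟨h1, h2⟩
  rcases h with ⟨h3, h4⟩
  have h5 := h2.resolve_left h3
  have h6 := h4.resolve_left h1
  rw [cross_swap] at h5
  linarith

lemma Prec.ne {p x y : Pt} (h : Prec p x y) : x ≠ y := by
  rintro rfl
  exact h.asymm h

lemma collinear_of_cross_eq_zero {p x y : Pt} (hx : x ≠ p) (h : cross p x y = 0) :
    Collinear ℝ ({p, x, y} : Set Pt) := by
  rw [collinear_iff_of_mem (p₀ := p) (by simp)]
  refine ⟨x - p, ?_⟩
  have hp : ∃ t : ℝ, p = t • (x - p) +ᵥ p := ⟨0, by simp⟩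
  have hx' : ∃ t : ℝ, x = t • (x - p) +ᵥ p := ⟨1, by simp⟩
  have hy : ∃ t : ℝ, y = t • (x - p) +ᵥ p := by
    unfold cross at h
    by_cases h0 : x 0 - p 0 = 0
    · have h1 : x 1 - p 1 ≠ 0 := by
        intro h1
        apply hx
        ext i
        fin_cases i
        · simpa using sub_eq_zero.mp h0
        · simpa using sub_eq_zero.mp h1
      refine ⟨(y 1 - p 1) / (x 1 - p 1), ?_⟩
      ext i
      fin_cases i
      · simp
        field_simp
        linarith
      · simp
        field_simp
        ring
    · refine ⟨(y 0 - p 0) / (x 0 - p 0), ?_⟩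
      ext i
      fin_cases i
      · simp
        field_simp
        ring
      · simp
        field_simp
        linarith
  rintro q (rfl | rfl | rfl)
  exacts [hp, hx', hy]

lemma dist_sq_eq (x c : Pt) : dist x c ^ 2 = (x 0 - c 0) ^ 2 + (x 1 - c 1) ^ 2 := by
  rw [EuclideanSpace.dist_eq, Real.sq_sqrt (by positivity)]
  simp [Fin.sum_univ_two, Real.dist_eq, sq_abs]

/-- Difference of the powers of `z` with respect to the circle around `c₁` through `x₁` and the
circle around `c₂` through `x₂`. -/
def powDiff (c₁ x₁ c₂ x₂ z : Pt) : ℝ :=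
  (dist z c₁ ^ 2 - dist x₁ c₁ ^ 2) - (dist z c₂ ^ 2 - dist x₂ c₂ ^ 2)

/-- `powDiff` is affine: the relation expressing `b - p` through `a - p` and `c - p` by Cramer's
rule passes to its values. -/
lemma powDiff_affine (c₁ x₁ c₂ x₂ p a b c : Pt) :
    cross p a c * powDiff c₁ x₁ c₂ x₂ b =
      cross p b c * powDiff c₁ x₁ c₂ x₂ a + cross p a b * powDiff c₁ x₁ c₂ x₂ c
      + (cross p a c - cross p b c - cross p a b) * powDiff c₁ x₁ c₂ x₂ p := by
  unfold powDiff cross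
  simp only [dist_sq_eq]
  ring

/-- If `b` is in the open cone from `p` spanned by `a, c` and is at maximal distance from `o` among
these four points, then it lies strictly beyond the segment `ac`. -/
lemma cone_beyond {p a b c o : Pt} (hac : 0 < cross p a c) (hab : 0 < cross p a b)
    (hbc : 0 < cross p b c) (ha : dist a o ≤ dist b o) (hc : dist c o ≤ dist b o)
    (hp : dist p o ≤ dist b o) : cross p a c < cross p b c + cross p a b := by
  by_contra! hle
  have hne : a ≠ c := by
    rintro rfl
    rw [cross_same] at hac
    exact lt_irrefl _ hac
  have ha' := pow_le_pow_left₀ dist_nonneg ha 2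
  have hc' := pow_le_pow_left₀ dist_nonneg hc 2
  have hp' := pow_le_pow_left₀ dist_nonneg hp 2
  have hd : 0 < dist a c ^ 2 := pow_pos (dist_pos.mpr hne) 2
  -- Strict convexity of the squared distance, multiplied by `(cross p a c) ^ 2`.
  have key : cross p a c ^ 2 * dist b o ^ 2 =
      cross p a c * (cross p b c * dist a o ^ 2 + cross p a b * dist c o ^ 2
        + (cross p a c - cross p b c - cross p a b) * dist p o ^ 2)
      - cross p b c * cross p a b * dist a c ^ 2
      - (cross p a c - cross p b c - cross p a b) *
        (cross p b c * dist a p ^ 2 + cross p a b * dist c p ^ 2) := by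
    unfold cross
    simp only [dist_sq_eq]
    ring
  have h1 := mul_le_mul_of_nonneg_left ha' hbc.le
  have h2 := mul_le_mul_of_nonneg_left hc' hab.le
  have hs : 0 ≤ cross p a c - cross p b c - cross p a b := by linarith
  have h3 := mul_le_mul_of_nonneg_left hp' hs
  have h4 : cross p b c * dist a o ^ 2 + cross p a b * dist c o ^ 2
        + (cross p a c - cross p b c - cross p a b) * dist p o ^ 2
        ≤ cross p a c * dist b o ^ 2 := by linarith
  have h5 := mul_le_mul_of_nonneg_left h4 hac.le
  have h6 : 0 < cross p b c * cross p a b * dist a c ^ 2 := by positivity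
  have h7 : 0 ≤ (cross p a c - cross p b c - cross p a b) *
        (cross p b c * dist a p ^ 2 + cross p a b * dist c p ^ 2) := by positivity
  nlinarith

lemma GenPos.cross_ne_zero {S : Set Pt} (hS : GenPos S) {p x y : Pt} (hp : p ∈ S) (hx : x ∈ S)
    (hy : y ∈ S) (hxp : x ≠ p) (hyp : y ≠ p) (hxy : x ≠ y) : cross p x y ≠ 0 := by
  intro h
  refine hS.1 {p, x, y} ?_ ?_ (collinear_of_cross_eq_zero hxp h)
  · rintro z (rfl | rfl | rfl) <;> assumption
  · rw [Set.ncard_eq_three]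
    exact ⟨p, x, y, hxp.symm, hyp.symm, hxy, rfl⟩

lemma GenPos.prec_total {S : Set Pt} (hS : GenPos S) {p x y : Pt} (hp : p ∈ S) (hx : x ∈ S)
    (hy : y ∈ S) (hxy : x ≠ y) : Prec p x y ∨ Prec p y x := by
  by_cases hxp : x = p
  · exact Or.inl ⟨fun h => hxy (hxp.trans h.symm), Or.inl hxp⟩
  by_cases hyp : y = p
  · exact Or.inr ⟨hxp, Or.inl hyp⟩
  rcases (hS.cross_ne_zero hp hx hy hxp hyp hxy).lt_or_gt with h | h
  · exact Or.inr ⟨hxp, Or.inr (by rw [cross_swap]; linarith)⟩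
  · exact Or.inl ⟨hyp, Or.inr h⟩

/-- Two circles enclosing `S`, through `a, c` and `b, d` respectively, cannot exist when these pairs
alternate in the angular tournament around `p`. -/
lemma no_crossing {S : Set Pt} (hS : GenPos S) {p a b c d o₁ o₂ : Pt} (hp : p ∈ S)
    (ha : a ∈ S) (hb : b ∈ S) (hc : c ∈ S) (hd : d ∈ S)
    (hab : Prec p a b) (hbc : Prec p b c) (hcd : Prec p c d) (hac : Prec p a c)
    (hbd : Prec p b d) (h₁ : EnclosedBy S a c o₁) (h₂ : EnclosedBy S b d o₂) : False := by
  have hbc' := hbc.2.resolve_left hab.1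
  have hcd' := hcd.2.resolve_left hbc.1
  have hbd' := hbd.2.resolve_left hab.1
  obtain ⟨e₁, m₁⟩ := h₁
  obtain ⟨e₂, m₂⟩ := h₂
  have sq₁ : ∀ z ∈ S, dist z o₁ ^ 2 ≤ dist a o₁ ^ 2 :=
    fun z hz => pow_le_pow_left₀ dist_nonneg (m₁ z hz) 2
  have sq₂ : ∀ z ∈ S, dist z o₂ ^ 2 ≤ dist b o₂ ^ 2 :=
    fun z hz => pow_le_pow_left₀ dist_nonneg (m₂ z hz) 2
  set g := powDiff o₁ a o₂ b with hg
  have aff := powDiff_affine o₁ a o₂ b p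
  rw [← hg] at aff
  have ga : 0 ≤ g a := by
    have := sq₂ a ha
    simp only [hg, powDiff]; linarith
  have gc : 0 ≤ g c := by
    have := sq₂ c hc
    simp only [hg, powDiff, e₁]; linarith
  have gb : g b ≤ 0 := by
    have := sq₁ b hb
    simp only [hg, powDiff]; linarith
  have gd : g d ≤ 0 := by
    have := sq₁ d hd
    simp only [hg, powDiff, e₂]; linarith
  -- It suffices that `g` vanishes at `b` and `d`: then all four points are on the first circle.
  have fin : g b = 0 → g d = 0 → False := by
    intro zb zd
    have eb : dist b o₁ = dist a o₁ := by
      refine (pow_left_inj₀ dist_nonneg dist_nonneg two_ne_zero).mp ?_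
      simp only [hg, powDiff] at zb
      linarith
    have ed : dist d o₁ = dist a o₁ := by
      refine (pow_left_inj₀ dist_nonneg dist_nonneg two_ne_zero).mp ?_
      simp only [hg, powDiff, e₂] at zd
      linarith
    have had : a ≠ d := by
      rintro rfl
      exact hab.asymm hbd
    refine hS.2 {a, b, c, d} ?_ ?_ ⟨o₁, dist a o₁, ?_⟩
    · rintro z (rfl | rfl | rfl | rfl) <;> assumption
    · rw [Set.ncard_eq_toFinset_card']
      simp [Finset.card_insert_of_notMem, hab.ne, hac.ne, had, hbc.ne, hbd.ne, hcd.ne]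
    · rintro z (rfl | rfl | rfl | rfl)
      exacts [rfl, eb, e₁.symm, ed]
  rcases le_or_gt 0 (g p) with gp | gp
  · have hlt := cone_beyond hbd' hbc' hcd' (by rw [← e₁]; exact m₁ b hb)
      (by rw [← e₁]; exact m₁ d hd) (by rw [← e₁]; exact m₁ p hp)
    have h := aff b c d
    have t1 := mul_nonneg hbd'.le gc
    have t2 := mul_nonpos_of_nonneg_of_nonpos hcd'.le gb
    have t3 := mul_nonpos_of_nonneg_of_nonpos hbc'.le gd
    have t4 : (cross p b d - cross p c d - cross p b c) * g p ≤ 0 :=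
      mul_nonpos_of_nonpos_of_nonneg (by linarith) gp
    refine fin ?_ ?_
    · exact (mul_eq_zero.mp (by linarith : cross p c d * g b = 0)).resolve_left hcd'.ne'
    · exact (mul_eq_zero.mp (by linarith : cross p b c * g d = 0)).resolve_left hbc'.ne'
  · have hap : a ≠ p := by
      rintro rfl
      linarith
    have hab' := hab.2.resolve_left hap
    have hac' := hac.2.resolve_left hap
    have hlt := cone_beyond hac' hab' hbc' (m₂ a ha) (m₂ c hc) (m₂ p hp)
    have h := aff a b c
    have t1 := mul_nonpos_of_nonneg_of_nonpos hac'.le gb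
    have t2 := mul_nonneg hbc'.le ga
    have t3 := mul_nonneg hab'.le gc
    have t4 : 0 < (cross p a c - cross p b c - cross p a b) * g p :=
      mul_pos_of_neg_of_neg (by linarith) gp
    linarith

/-- If a set `P` of pairs from a tournament on `S` has no pair ending in `p`, and no `bc ∈ P` comes
with both an earlier source `a` of `c` and a later target `d` of `b`, then `|P| ≤ 2 |S| - 1`. -/
lemma card_le_of_no_crossing {α : Type*} [DecidableEq α] (S : Finset α) (p : α) (hp : p ∈ S)
    (r : α → α → Prop) (htot : ∀ x ∈ S, ∀ y ∈ S, x ≠ y → r x y ∨ r y x)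
    (P : Finset (α × α)) (hPS : ∀ e ∈ P, e.1 ∈ S ∧ e.2 ∈ S)
    (hPp : ∀ e ∈ P, e.2 ≠ p)
    (hcross : ∀ a b c d, (a, c) ∈ P → (b, d) ∈ P → (b, c) ∈ P → r a b → r c d → False) :
    P.card ≤ 2 * S.card - 1 := by
  classical
  -- `L`: arcs that are last out of their source; `R`: arcs that are first into their target.
  set L := P.filter fun e => ∀ y, (e.1, y) ∈ P → ¬ r e.2 y with hL
  set R := P.filter fun e => ∀ x, (x, e.2) ∈ P → ¬ r x e.1 with hR
  have hsub : P ⊆ L ∪ R := by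
    rintro ⟨b, c⟩ he
    by_contra hn
    simp only [hL, hR, Finset.mem_union, Finset.mem_filter, he, true_and, not_or] at hn
    push Not at hn
    obtain ⟨⟨d, hd, hcd⟩, ⟨a, ha, hab⟩⟩ := hn
    exact hcross a b c d ha hd he hab hcd
  have cL : L.card ≤ S.card := by
    refine Finset.card_le_card_of_injOn Prod.fst
      (fun e he => (hPS e (Finset.mem_filter.mp he).1).1) ?_
    rintro ⟨x, y⟩ h1 ⟨x', y'⟩ h2 (rfl : x = x')
    simp only [hL, Finset.coe_filter, Set.mem_ofPred_eq] at h1 h2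
    by_contra hne
    have hy : y ≠ y' := fun h => hne (by rw [h])
    rcases htot y (hPS _ h1.1).2 y' (hPS _ h2.1).2 hy with h | h
    · exact h1.2 _ h2.1 h
    · exact h2.2 _ h1.1 h
  have cR : R.card ≤ (S.erase p).card := by
    refine Finset.card_le_card_of_injOn Prod.snd
      (fun e he => Finset.mem_erase.mpr ⟨hPp e (Finset.mem_filter.mp he).1,
        (hPS e (Finset.mem_filter.mp he).1).2⟩) ?_
    rintro ⟨x, y⟩ h1 ⟨x', y'⟩ h2 (rfl : y = y')
    simp only [hR, Finset.coe_filter, Set.mem_ofPred_eq] at h1 h2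
    by_contra hne
    have hx : x ≠ x' := fun h => hne (by rw [h])
    rcases htot x (hPS _ h1.1).1 x' (hPS _ h2.1).1 hx with h | h
    · exact h2.2 _ h1.1 h
    · exact h1.2 _ h2.1 h
  have h1 := (Finset.card_le_card hsub).trans (Finset.card_union_le L R)
  rw [Finset.card_erase_of_mem hp] at cR
  have := Finset.card_pos.mpr ⟨p, hp⟩
  omega

lemma choose_two_bound {k : ℕ} (hk : 5 ≤ k) :
    (k - 3).choose 2 + (2 * k - 1) ≤ k.choose 2 := by
  obtain ⟨m, rfl⟩ := Nat.exists_eq_add_of_le' hk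
  have h1 := Nat.choose_succ_succ (m + 2) 1
  have h2 := Nat.choose_succ_succ (m + 3) 1
  have h3 := Nat.choose_succ_succ (m + 4) 1
  simp only [Nat.succ_eq_add_one, Nat.choose_one_right, Nat.reduceAdd, add_assoc] at h1 h2 h3
  rw [show m + 5 - 3 = m + 2 by omega]
  omega

/-- Among any set `S'` of `k` points in the plane in general position, there are at least
`C(k−3, 2)` unordered pairs `{x, y}` of distinct points of `S'` such that every closed
disk having both `x` and `y` on its boundary leaves at least one of the other `k − 2`
points of `S'` strictly outside the disk. -/
theorem dominated_pairs_lower_bound (k : ℕ) (S' : Set Pt)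
    (hfin : S'.Finite) (hcard : S'.ncard = k) (hgp : GenPos S') :
    (k - 3).choose 2 ≤
      {T : Set Pt | ∃ x ∈ S', ∃ y ∈ S', x ≠ y ∧ T = {x, y} ∧
        ∀ (c : Pt) (r : ℝ), 0 < r → dist x c = r → dist y c = r →
          ∃ z ∈ S' \ {x, y}, r < dist z c}.ncard := by
  classical
  rcases Nat.lt_or_ge k 5 with hk | hk
  · rw [Nat.choose_eq_zero_of_lt (by omega)]
    exact Nat.zero_le _
  set S := hfin.toFinset with hSdef
  have memS : ∀ x, x ∈ S ↔ x ∈ S' := fun x => hfin.mem_toFinset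
  have hSc : S.card = k := by rw [← hcard, Set.ncard_eq_toFinset_card S' hfin]
  obtain ⟨p, hp⟩ : S.Nonempty := Finset.card_pos.mp (by omega)
  -- The edges, oriented by the angular tournament around `p`.
  set P := (S ×ˢ S).filter fun e => Prec p e.1 e.2 ∧ ∃ o, EnclosedBy S' e.1 e.2 o with hP
  have memP : ∀ x y, (x, y) ∈ P ↔
      (x ∈ S' ∧ y ∈ S') ∧ Prec p x y ∧ ∃ o, EnclosedBy S' x y o := by
    intro x y
    simp only [hP, Finset.mem_filter, Finset.mem_product, memS]
  have hPcard : P.card ≤ 2 * S.card - 1 := by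
    refine card_le_of_no_crossing S p hp (Prec p) ?_ P ?_ ?_ ?_
    · intro x hx y hy hxy
      exact hgp.prec_total ((memS p).mp hp) ((memS x).mp hx) ((memS y).mp hy) hxy
    · rintro ⟨x, y⟩ he
      have := ((memP x y).mp he).1
      exact ⟨(memS x).mpr this.1, (memS y).mpr this.2⟩
    · rintro ⟨x, y⟩ he
      exact ((memP x y).mp he).2.1.1
    · intro a b c d hac hbd hbc hab hcd
      obtain ⟨⟨ha, hc⟩, pac, o₁, h₁⟩ := (memP a c).mp hac
      obtain ⟨⟨hb, hd⟩, pbd, o₂, h₂⟩ := (memP b d).mp hbd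
      exact no_crossing hgp ((memS p).mp hp) ha hb hc hd hab ((memP b c).mp hbc).2.1 hcd pac pbd
        h₁ h₂
  set G : Set (Set Pt) := {T : Set Pt | ∃ x ∈ S', ∃ y ∈ S', x ≠ y ∧ T = {x, y} ∧
        ∀ (c : Pt) (r : ℝ), 0 < r → dist x c = r → dist y c = r →
          ∃ z ∈ S' \ {x, y}, r < dist z c} with hG
  set A := (S.powersetCard 2).filter fun T : Finset Pt => (T : Set Pt) ∈ G with hA
  have hAG : A.card ≤ G.ncard := by
    have hGfin : G.Finite := by
      refine hfin.finite_subsets.subset ?_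
      rintro T ⟨x, hx, y, hy, -, rfl, -⟩ z (rfl | rfl) <;> assumption
    rw [← Set.ncard_coe_finset A]
    refine Set.ncard_le_ncard_of_injOn (fun T : Finset Pt => (T : Set Pt)) ?_ ?_ hGfin
    · intro T hT
      exact (Finset.mem_filter.mp hT).2
    · intro T _ T' _ h
      exact Finset.coe_injective h
  have hB : ((S.powersetCard 2).filter fun T : Finset Pt => ¬ (T : Set Pt) ∈ G).card ≤ P.card := by
    refine (Finset.card_le_card ?_).trans
      (Finset.card_image_le (f := fun e : Pt × Pt => ({e.1, e.2} : Finset Pt)))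
    intro T hT
    obtain ⟨hT, hTG⟩ := Finset.mem_filter.mp hT
    obtain ⟨hTS, hT2⟩ := Finset.mem_powersetCard.mp hT
    obtain ⟨x, y, hxy, rfl⟩ := Finset.card_eq_two.mp hT2
    have hx : x ∈ S' := (memS x).mp (hTS (by simp))
    have hy : y ∈ S' := (memS y).mp (hTS (by simp))
    have hE : ∃ o, EnclosedBy S' x y o := by
      by_contra hno
      refine hTG ⟨x, hx, y, hy, hxy, by simp, ?_⟩
      intro c r _ hxr hyr
      by_contra! hz
      refine hno ⟨c, hxr.trans hyr.symm, fun z hzS => ?_⟩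
      by_cases hzx : z = x
      · rw [hzx]
      by_cases hzy : z = y
      · rw [hzy, hyr, hxr]
      rw [hxr]
      exact hz z ⟨hzS, by simp [hzx, hzy]⟩
    rw [Finset.mem_image]
    rcases hgp.prec_total ((memS p).mp hp) hx hy hxy with h | h
    · exact ⟨(x, y), (memP x y).mpr ⟨⟨hx, hy⟩, h, hE⟩, rfl⟩
    · obtain ⟨o, ho, hm⟩ := hE
      exact ⟨(y, x), (memP y x).mpr ⟨⟨hy, hx⟩, h, o, ho.symm, fun z hz => ho ▸ hm z hz⟩,
        Finset.pair_comm y x⟩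
  have hsum : A.card + ((S.powersetCard 2).filter fun T : Finset Pt => ¬ (T : Set Pt) ∈ G).card =
      (S.powersetCard 2).card := by
    convert Finset.card_filter_add_card_filter_not (s := S.powersetCard 2)
      (fun T : Finset Pt => (T : Set Pt) ∈ G)
  rw [Finset.card_powersetCard, hSc] at hsum
  have hb := choose_two_bound hk
  omega
end
end

section
/- For every integer n ≥ 21 and every set S of n points in the Euclidean plane in general position, there exist two distinct points u, v ∈ S such that every closed disk having both u and v on its boundary contains at least ⌈16(n−2)/665⌉ points of S other than u and v, and also leaves at least ⌈16(n−2)/665⌉ points of S other than u and v strictly outside the disk. -/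
/-!
The bound holds with the better constant `1/30` in place of `16/665`, by sampling five points
at a time.

Lift the plane to the paraboloid by `p ↦ (p, ‖p‖²)`. Five lifted points in `ℝ³` satisfy a
nontrivial affine dependence `w` (Radon), and along such a dependence the power of the points with
respect to any circle sums to zero: `∑ w p (dist p c ^ 2 - ρ) = 0`. Taking `c = p₀` and `ρ = 0`
shows that `w` has at least two positive and at least two negative entries, so after a change of
sign exactly two entries, at `u` and `v`, are positive. For a circle through `u` and `v` these two
terms vanish, so the other three points cannot all be outside the disk, and they cannot all be
inside it either unless four points are concyclic (`exists_pair_of_card_five`).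

Assign such a pair to each five-point subset of `S`. Some pair `{u, v}` is assigned to at least
`C(n,5) / C(n,2)` subsets. Given a disk through `u` and `v`, each of these subsets meets the set
`I` of the further points inside the disk, and a given point of `I` lies in at most `C(n-3,2)` of
them (`card_le_of_forall_meets`). Hence `|I| ≥ C(n,5) / (C(n,2) C(n-3,2)) = (n-2)/30`. The same
argument applies to the points outside.
-/

open EuclideanGeometry Metric

noncomputable section

/-- `w` is an affine dependence of the lifts of the points of `T` to the paraboloid, expressed
through the power of a point with respect to the circle of centre `c` and squared radius `ρ`. -/
def IsLiftedDependence (T : Finset Pt) (w : Pt → ℝ) : Prop :=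
  ∀ (c : Pt) (ρ : ℝ), ∑ p ∈ T, w p * (dist p c ^ 2 - ρ) = 0

lemma IsLiftedDependence.neg {T : Finset Pt} {w : Pt → ℝ} (h : IsLiftedDependence T w) :
    IsLiftedDependence T (fun p => -w p) := by
  intro c ρ
  simpa using h c ρ

lemma exists_liftedDependence (T : Finset Pt) (hT : T.card = 5) :
    ∃ w : Pt → ℝ, IsLiftedDependence T w ∧ ∃ p ∈ T, w p ≠ 0 := by
  classical
  let φ : Pt → Pt × ℝ × ℝ := fun p => (p, ‖p‖ ^ 2, 1)
  have hφ : Function.Injective φ := fun p q h => congrArg Prod.fst h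
  have hcard : Module.finrank ℝ (Pt × ℝ × ℝ) < (T.image φ).card := by
    rw [Finset.card_image_of_injective _ hφ, hT]
    simp
  obtain ⟨f, hf, x, hx, hfx⟩ := Module.exists_nontrivial_relation_of_finrank_lt_card hcard
  rw [Finset.sum_image (fun a _ b _ h => hφ h)] at hf
  obtain ⟨p, hp, rfl⟩ := Finset.mem_image.1 hx
  refine ⟨fun p => f (φ p), ?_, p, hp, hfx⟩
  have h1 : ∑ p ∈ T, f (φ p) • p = 0 := by
    simpa [φ, Prod.fst_sum] using congrArg Prod.fst hf
  have h2 : ∑ p ∈ T, f (φ p) * ‖p‖ ^ 2 = 0 := by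
    simpa [φ, Prod.fst_sum, Prod.snd_sum] using congrArg (fun z => z.2.1) hf
  have h3 : ∑ p ∈ T, f (φ p) = 0 := by
    simpa [φ, Prod.fst_sum, Prod.snd_sum] using congrArg (fun z => z.2.2) hf
  intro c ρ
  have h4 : ∑ p ∈ T, f (φ p) * inner ℝ p c = 0 := by
    have := congrArg (fun z => inner ℝ z c) h1
    simpa [sum_inner, real_inner_smul_left] using this
  calc ∑ p ∈ T, f (φ p) * (dist p c ^ 2 - ρ)
      = ∑ p ∈ T, (f (φ p) * ‖p‖ ^ 2 - 2 * (f (φ p) * inner ℝ p c)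
          + f (φ p) * (‖c‖ ^ 2 - ρ)) := by
        refine Finset.sum_congr rfl fun p _ => ?_
        rw [dist_eq_norm, norm_sub_sq_real]
        ring
    _ = 0 := by
        rw [Finset.sum_add_distrib, Finset.sum_sub_distrib, ← Finset.mul_sum, ← Finset.sum_mul,
          h2, h3, h4]
        ring

/-- The paraboloid is strictly convex: no lifted point is a convex combination of others. -/
lemma IsLiftedDependence.two_le_card_pos {T : Finset Pt} {w : Pt → ℝ}
    (h : IsLiftedDependence T w) (hw : ∃ p ∈ T, w p ≠ 0) :
    2 ≤ (T.filter fun p => 0 < w p).card := by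
  by_contra hlt
  have hle : (T.filter fun p => 0 < w p).card ≤ 1 := by omega
  -- `q` is the only point that may carry a positive weight
  obtain ⟨q, hq⟩ : ∃ q, ∀ p ∈ T, p ≠ q → w p ≤ 0 := by
    rw [Finset.card_le_one_iff_subset_singleton] at hle
    obtain ⟨q, hq⟩ := hle
    refine ⟨q, fun p hp hpq => ?_⟩
    by_contra hpos
    exact hpq (Finset.mem_singleton.1 (hq (Finset.mem_filter.2 ⟨hp, not_le.1 hpos⟩)))
  have hterm : ∀ p ∈ T, w p * (dist p q ^ 2 - 0) = 0 := by
    refine (Finset.sum_eq_zero_iff_of_nonpos fun p hp => ?_).1 (h q 0)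
    by_cases hpq : p = q
    · simp [hpq]
    · exact mul_nonpos_of_nonpos_of_nonneg (hq p hp hpq) (by simp)
  have hzero : ∀ p ∈ T, p ≠ q → w p = 0 := by
    intro p hp hpq
    have := hterm p hp
    have hd : dist p q ≠ 0 := dist_ne_zero.2 hpq
    simpa [hd] using this
  obtain ⟨p, hp, hwp⟩ := hw
  have hpq : p = q := by
    by_contra hpq
    exact hwp (hzero p hp hpq)
  subst hpq
  -- with a single nonzero weight, the sum of all weights cannot vanish
  have hs := h p (-1)
  rw [Finset.sum_eq_single_of_mem p hp (fun x hx hxp => by rw [hzero x hx hxp, zero_mul])] at hs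
  simp at hs
  exact hwp hs

lemma exists_pair_of_card_pos_eq_two {T : Finset Pt} {w : Pt → ℝ}
    (hT : ∀ T' ⊆ (T : Set Pt), T'.ncard = 4 → ¬Cospherical T')
    (h : IsLiftedDependence T w) (hw : ∃ p ∈ T, w p ≠ 0)
    (h2 : (T.filter fun p => 0 < w p).card = 2) :
    ∃ u ∈ T, ∃ v ∈ T, u ≠ v ∧ ∀ (c : Pt) (r : ℝ), dist u c = r → dist v c = r →
      (∃ x ∈ T, x ≠ u ∧ x ≠ v ∧ dist x c ≤ r) ∧
      (∃ x ∈ T, x ≠ u ∧ x ≠ v ∧ r < dist x c) := by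
  classical
  obtain ⟨u, v, huv, hset⟩ := Finset.card_eq_two.1 h2
  have hmem : ∀ p, (p ∈ T ∧ 0 < w p) ↔ (p = u ∨ p = v) := by
    intro p
    rw [← Finset.mem_filter (s := T) (p := fun p => 0 < w p), hset]
    simp
  obtain ⟨huT, hwu⟩ := (hmem u).2 (Or.inl rfl)
  obtain ⟨hvT, hwv⟩ := (hmem v).2 (Or.inr rfl)
  have hneg := h.neg.two_le_card_pos (by simpa using hw)
  obtain ⟨x, hx, y, hy, hxy⟩ := Finset.one_lt_card.1 hneg
  simp only [Finset.mem_filter, Left.neg_pos_iff] at hx hy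
  obtain ⟨hxT, hwx⟩ := hx
  obtain ⟨hyT, hwy⟩ := hy
  have hxu : x ≠ u := by rintro rfl; linarith
  have hxv : x ≠ v := by rintro rfl; linarith
  have hyu : y ≠ u := by rintro rfl; linarith
  have hyv : y ≠ v := by rintro rfl; linarith
  refine ⟨u, huT, v, hvT, huv, fun c r hu hv => ?_⟩
  have hr : 0 ≤ r := hu ▸ dist_nonneg
  have hsum := h c (r ^ 2)
  have hnp : ∀ p ∈ T, p ≠ u → p ≠ v → w p ≤ 0 := by
    intro p hp hpu hpv
    by_contra hpos
    rcases (hmem p).1 ⟨hp, not_le.1 hpos⟩ with h | h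
    · exact hpu h
    · exact hpv h
  constructor
  · by_contra! hall
    have hx0 : w x * (dist x c ^ 2 - r ^ 2) = 0 := by
      refine (Finset.sum_eq_zero_iff_of_nonpos fun p hp => ?_).1 hsum x hxT
      by_cases hpu : p = u
      · simp [hpu, hu]
      by_cases hpv : p = v
      · simp [hpv, hv]
      have := hall p hp hpu hpv
      exact mul_nonpos_of_nonpos_of_nonneg (hnp p hp hpu hpv) (by nlinarith)
    have := hall x hxT hxu hxv
    have : 0 < dist x c ^ 2 - r ^ 2 := by nlinarith
    exact (mul_neg_of_neg_of_pos hwx this).ne hx0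
  · by_contra! hall
    have hz : ∀ p ∈ T, w p * (dist p c ^ 2 - r ^ 2) = 0 := by
      refine (Finset.sum_eq_zero_iff_of_nonneg fun p hp => ?_).1 hsum
      by_cases hpu : p = u
      · simp [hpu, hu]
      by_cases hpv : p = v
      · simp [hpv, hv]
      have := hall p hp hpu hpv
      have h0 : 0 ≤ dist p c := dist_nonneg
      exact mul_nonneg_of_nonpos_of_nonpos (hnp p hp hpu hpv) (by nlinarith)
    -- the two points of negative weight lie on the circle as well
    have hon : ∀ p ∈ T, w p < 0 → dist p c = r := by
      intro p hp hwp
      have h1 : dist p c ^ 2 - r ^ 2 = 0 := (mul_eq_zero.1 (hz p hp)).resolve_left hwp.ne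
      exact (sq_eq_sq₀ dist_nonneg hr).1 (by linarith)
    refine hT ({u, v, x, y} : Finset Pt) ?_ ?_ ⟨c, r, ?_⟩
    · intro p hp
      simp only [Finset.coe_insert, Finset.coe_singleton, Set.mem_insert_iff,
        Set.mem_singleton_iff] at hp
      rcases hp with rfl | rfl | rfl | rfl <;> assumption
    · rw [Set.ncard_coe_finset]
      rw [Finset.card_insert_of_notMem, Finset.card_insert_of_notMem,
        Finset.card_insert_of_notMem, Finset.card_singleton] <;>
        simp [huv, hxu.symm, hyu.symm, hxv.symm, hyv.symm, hxy]
    · intro p hp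
      simp only [Finset.coe_insert, Finset.coe_singleton, Set.mem_insert_iff,
        Set.mem_singleton_iff] at hp
      rcases hp with rfl | rfl | rfl | rfl
      · exact hu
      · exact hv
      · exact hon _ hxT hwx
      · exact hon _ hyT hwy

/-- Among five points, no four concyclic, some two are such that every disk with both on its
boundary contains one of the other three and misses one of them. -/
lemma exists_pair_of_card_five_s5 (T : Finset Pt) (hcard : T.card = 5)
    (hT : ∀ T' ⊆ (T : Set Pt), T'.ncard = 4 → ¬Cospherical T') :
    ∃ u ∈ T, ∃ v ∈ T, u ≠ v ∧ ∀ (c : Pt) (r : ℝ), dist u c = r → dist v c = r →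
      (∃ x ∈ T, x ≠ u ∧ x ≠ v ∧ dist x c ≤ r) ∧
      (∃ x ∈ T, x ≠ u ∧ x ≠ v ∧ r < dist x c) := by
  classical
  obtain ⟨w, h, hw⟩ := exists_liftedDependence T hcard
  have hw' : ∃ p ∈ T, -w p ≠ 0 := by simpa using hw
  have hpos := h.two_le_card_pos hw
  have hneg := h.neg.two_le_card_pos hw'
  have hdisj : Disjoint (T.filter fun p => 0 < w p) (T.filter fun p => 0 < -w p) := by
    rw [Finset.disjoint_filter]
    intro p _ h1 h2
    linarith
  have hle : (T.filter fun p => 0 < w p).card + (T.filter fun p => 0 < -w p).card ≤ 5 := by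
    rw [← Finset.card_union_of_disjoint hdisj, ← hcard]
    exact Finset.card_le_card
      (Finset.union_subset (Finset.filter_subset _ _) (Finset.filter_subset _ _))
  by_cases h2 : (T.filter fun p => 0 < w p).card = 2
  · exact exists_pair_of_card_pos_eq_two hT h hw h2
  · exact exists_pair_of_card_pos_eq_two hT h.neg hw' (by omega)

/-- Five-point subsets of `S` that contain the pair `P` and meet `I ⊆ S \ P` are classified by a
point `x ∈ I` they contain and the two points besides `P` and `x`. -/
lemma card_le_of_forall_meets {α : Type*} [DecidableEq α] (S P I : Finset α)
    (F : Finset (Finset α)) (hP : P ⊆ S) (hP2 : P.card = 2) (hI : I ⊆ S \ P)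
    (hF : ∀ T ∈ F, T ⊆ S ∧ T.card = 5 ∧ P ⊆ T ∧ ∃ x ∈ I, x ∈ T) :
    F.card ≤ I.card * (S.card - 3).choose 2 := by
  have hsub : F ⊆ I.biUnion fun x => F.filter fun T => x ∈ T := by
    intro T hT
    obtain ⟨-, -, -, x, hx, hxT⟩ := hF T hT
    exact Finset.mem_biUnion.2 ⟨x, hx, Finset.mem_filter.2 ⟨hT, hxT⟩⟩
  refine (Finset.card_le_card hsub).trans (Finset.card_biUnion_le_card_mul _ _ _ fun x hx => ?_)
  obtain ⟨hxS, hxP⟩ := Finset.mem_sdiff.1 (hI hx)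
  have hQ : (insert x P).card = 3 := by rw [Finset.card_insert_of_notMem hxP, hP2]
  have hQS : insert x P ⊆ S := Finset.insert_subset hxS hP
  have hR : (S \ insert x P).card = S.card - 3 := by
    rw [Finset.card_sdiff_of_subset hQS, hQ]
  rw [← hR, ← Finset.card_powersetCard]
  have hQT : ∀ T ∈ F.filter (fun T => x ∈ T), insert x P ⊆ T := by
    intro T hT
    obtain ⟨hTF, hxT⟩ := Finset.mem_filter.1 hT
    exact Finset.insert_subset hxT (hF T hTF).2.2.1
  refine Finset.card_le_card_of_injOn (fun T => T \ insert x P) ?_ ?_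
  · intro T hT
    obtain ⟨hTS, hT5, -, -⟩ := hF T (Finset.mem_filter.1 hT).1
    refine Finset.mem_coe.2 (Finset.mem_powersetCard.2 ⟨Finset.sdiff_subset_sdiff hTS le_rfl, ?_⟩)
    rw [Finset.card_sdiff_of_subset (hQT T hT), hT5, hQ]
  · intro T hT T' hT' heq
    rw [← Finset.sdiff_union_of_subset (hQT T hT), ← Finset.sdiff_union_of_subset (hQT T' hT')]
    exact congrArg (· ∪ insert x P) heq

lemma choose_five_identity (n : ℕ) (hn : 3 ≤ n) :
    30 * n.choose 5 = n.choose 2 * ((n - 2) * (n - 3).choose 2) := by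
  rcases Nat.lt_or_ge n 5 with h | h
  · interval_cases n <;> decide
  have h1 : n.choose 5 * Nat.choose 5 2 = n.choose 2 * (n - 2).choose 3 :=
    Nat.choose_mul (by norm_num)
  have h2 : (n - 2) * (n - 3).choose 2 = (n - 2).choose 3 * 3 := by
    have := Nat.add_one_mul_choose_eq (n - 3) 2
    rwa [show n - 3 + 1 = n - 2 by omega] at this
  rw [h2, ← mul_assoc, ← h1, show Nat.choose 5 2 = 10 by decide]
  ring

/-- For every `n ≥ 21` and every set `S` of `n` points in the plane in general position,
there exist two distinct points `u, v ∈ S` such that every closed disk having both `u`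
and `v` on its boundary contains at least `⌈16(n−2)/665⌉` points of `S` other than `u`
and `v`, and also leaves at least `⌈16(n−2)/665⌉` points of `S` other than `u` and `v`
strictly outside the disk. -/
theorem pi_in_out_lower_bound (n : ℕ) (hn : 21 ≤ n) (S : Set Pt)
    (hfin : S.Finite) (hcard : S.ncard = n) (hgp : GenPos S) :
    ∃ u ∈ S, ∃ v ∈ S, u ≠ v ∧
      ∀ (c : Pt) (r : ℝ), 0 < r → dist u c = r → dist v c = r →
        ⌈16 * ((n : ℝ) - 2) / 665⌉ ≤ (((S \ {u, v}) ∩ closedBall c r).ncard : ℤ) ∧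
        ⌈16 * ((n : ℝ) - 2) / 665⌉ ≤
          (((S \ {u, v}) ∩ {x | r < dist x c}).ncard : ℤ) := by
  classical
  obtain ⟨S, rfl⟩ := hfin.exists_finset_coe
  rw [Set.ncard_coe_finset] at hcard
  -- the property of a pair `P` with respect to a five-point set `T`
  let good : Finset Pt → Finset Pt → Prop := fun T P =>
    P ⊆ T ∧ P.card = 2 ∧ ∀ (c : Pt) (r : ℝ), (∀ p ∈ P, dist p c = r) →
      (∃ x ∈ T \ P, dist x c ≤ r) ∧ (∃ x ∈ T \ P, r < dist x c)
  have hgood : ∀ T ∈ S.powersetCard 5, ∃ P, good T P := by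
    intro T hT
    obtain ⟨hTS, hT5⟩ := Finset.mem_powersetCard.1 hT
    obtain ⟨u, hu, v, hv, huv, h⟩ := exists_pair_of_card_five_s5 T hT5
      (fun T' hT' => hgp.2 T' (hT'.trans (Finset.coe_subset.2 hTS)))
    refine ⟨{u, v}, ?_, Finset.card_pair huv, fun c r hc => ?_⟩
    · simp [Finset.insert_subset_iff, hu, hv]
    · obtain ⟨⟨x, hx, hxu, hxv, hxd⟩, ⟨y, hy, hyu, hyv, hyd⟩⟩ :=
        h c r (hc u (by simp)) (hc v (by simp))
      exact ⟨⟨x, by simp [hx, hxu, hxv], hxd⟩, ⟨y, by simp [hy, hyu, hyv], hyd⟩⟩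
  choose! g hg using hgood
  have hmaps : ∀ T ∈ S.powersetCard 5, g T ∈ S.powersetCard 2 := by
    intro T hT
    exact Finset.mem_powersetCard.2
      ⟨(hg T hT).1.trans (Finset.mem_powersetCard.1 hT).1, (hg T hT).2.1⟩
  obtain ⟨P, hPmem, hPF⟩ : ∃ P ∈ S.powersetCard 2,
      n.choose 5 ≤ n.choose 2 * ((S.powersetCard 5).filter fun T => g T = P).card := by
    by_contra! hlt
    have hne : (S.powersetCard 2).Nonempty := by
      rw [Finset.powersetCard_nonempty]
      omega
    have hs := Finset.sum_lt_sum_of_nonempty hne hlt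
    rw [← Finset.mul_sum, ← Finset.card_eq_sum_card_fiberwise hmaps, Finset.sum_const,
      Finset.card_powersetCard, Finset.card_powersetCard, hcard, smul_eq_mul] at hs
    exact lt_irrefl _ hs
  obtain ⟨hPS, hP2⟩ := Finset.mem_powersetCard.1 hPmem
  set F := (S.powersetCard 5).filter fun T => g T = P with hFdef
  have key : ∀ I : Finset Pt, I ⊆ S \ P → (∀ T ∈ F, ∃ x ∈ I, x ∈ T) →
      ⌈16 * ((n : ℝ) - 2) / 665⌉ ≤ (I.card : ℤ) := by
    intro I hI hmeet
    have hcount := card_le_of_forall_meets S P I F hPS hP2 hI (by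
      intro T hT
      obtain ⟨hT5, hgT⟩ := Finset.mem_filter.1 hT
      obtain ⟨h1, h2⟩ := Finset.mem_powersetCard.1 hT5
      exact ⟨h1, h2, hgT ▸ (hg T hT5).1, hmeet T hT⟩)
    rw [hcard] at hcount
    have hpos : 0 < n.choose 2 * (n - 3).choose 2 :=
      Nat.mul_pos (Nat.choose_pos (by omega)) (Nat.choose_pos (by omega))
    have hle : (n - 2) * (n.choose 2 * (n - 3).choose 2)
        ≤ (30 * I.card) * (n.choose 2 * (n - 3).choose 2) := by
      calc (n - 2) * (n.choose 2 * (n - 3).choose 2)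
          = 30 * n.choose 5 := by rw [choose_five_identity n (by omega)]; ring
        _ ≤ 30 * (n.choose 2 * (I.card * (n - 3).choose 2)) := by
            gcongr
            exact hPF.trans (Nat.mul_le_mul_left _ hcount)
        _ = _ := by ring
    have h30 : n ≤ 30 * I.card + 2 := by
      have := Nat.le_of_mul_le_mul_right hle hpos
      omega
    have h30' : (n : ℝ) ≤ 30 * I.card + 2 := by exact_mod_cast h30
    have hn' : (21 : ℝ) ≤ n := by exact_mod_cast hn
    rw [Int.ceil_le, Int.cast_natCast, div_le_iff₀ (by norm_num)]
    linarith
  obtain ⟨u, v, huv, rfl⟩ := Finset.card_eq_two.1 hP2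
  refine ⟨u, hPS (by simp), v, hPS (by simp), huv, fun c r _ hu hv => ?_⟩
  have hP : ∀ p ∈ ({u, v} : Finset Pt), dist p c = r := by
    simp [hu, hv]
  constructor
  · have hI : (((S : Set Pt) \ {u, v}) ∩ closedBall c r)
        = (((S \ {u, v}).filter fun x => dist x c ≤ r : Finset Pt) : Set Pt) := by
      ext x
      simp
    rw [hI, Set.ncard_coe_finset]
    refine key _ (Finset.filter_subset _ _) fun T hT => ?_
    obtain ⟨hT5, hgT⟩ := Finset.mem_filter.1 hT
    obtain ⟨x, hx, hxd⟩ := ((hg T hT5).2.2 c r (hgT ▸ hP)).1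
    rw [hgT, Finset.mem_sdiff] at hx
    exact ⟨x, Finset.mem_filter.2 ⟨Finset.mem_sdiff.2
      ⟨(Finset.mem_powersetCard.1 hT5).1 hx.1, hx.2⟩, hxd⟩, hx.1⟩
  · have hI : (((S : Set Pt) \ {u, v}) ∩ {x | r < dist x c})
        = (((S \ {u, v}).filter fun x => r < dist x c : Finset Pt) : Set Pt) := by
      ext x
      simp
    rw [hI, Set.ncard_coe_finset]
    refine key _ (Finset.filter_subset _ _) fun T hT => ?_
    obtain ⟨hT5, hgT⟩ := Finset.mem_filter.1 hT
    obtain ⟨x, hx, hxd⟩ := ((hg T hT5).2.2 c r (hgT ▸ hP)).2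
    rw [hgT, Finset.mem_sdiff] at hx
    exact ⟨x, Finset.mem_filter.2 ⟨Finset.mem_sdiff.2
      ⟨(Finset.mem_powersetCard.1 hT5).1 hx.1, hx.2⟩, hxd⟩, hx.1⟩
end
end
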